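/- arXiv:1103.1469 — 3 statements merged into one kernel-verified Lean document; each statement's English description precedes it below -/
import Mathlib

section
/- Let D ⊆ ℝⁿ be a nonempty bounded open connected set, let a < b be real numbers, and let u be a real-valued function that is smooth on a neighborhood of D̄ × [a, b] and satisfies the nonparametric mean curvature flow equation ∂u/∂t = Δu − ⟨∇u, (D²u)∇u⟩/(1 + |∇u|²) on D̄ × [a, b] (spatial derivatives, i.e., the graphs of u(·, t) move by mean curvature). Assume h(u(·,t), x) > 0 for all (x, t) ∈ D̄ × [a, b]. If the minimum of the function (x, t) ↦ κ₁(u(·,t), x)/h(u(·,t), x) over D̄ × [a, b] is attained at a point (x₀, t₀) with x₀ ∈ D and t₀ > a, then the function (x, t) ↦ κ₁(u(·,t), x)/h(u(·,t), x) is constant on D × [a, t₀]. -/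
open scoped RealInnerProductSpace

/-- The Hessian of `f` at `x`, applied to the vector `ξ` (i.e. `(D²f(x))ξ`). -/
noncomputable def hess {n : ℕ} (f : EuclideanSpace ℝ (Fin n) → ℝ)
    (x ξ : EuclideanSpace ℝ (Fin n)) : EuclideanSpace ℝ (Fin n) :=
  fderiv ℝ (gradient f) x ξ

/-- The Laplacian of `f` at `x`, as the trace of the Hessian. -/
noncomputable def lap {n : ℕ} (f : EuclideanSpace ℝ (Fin n) → ℝ)
    (x : EuclideanSpace ℝ (Fin n)) : ℝ :=
  ∑ i, ⟪hess f x (EuclideanSpace.single i 1), EuclideanSpace.single i 1⟫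

/-- `f` satisfies the translator equation with velocity `(v', vn) ∈ ℝⁿ × ℝ` at the point `x`:
`(1 + |∇f|²)·Δf − ⟨∇f, (D²f)∇f⟩ = (v_{n+1} − ⟨v', ∇f⟩)·(1 + |∇f|²)`. -/
def TranslatorEqAt {n : ℕ} (f : EuclideanSpace ℝ (Fin n) → ℝ)
    (v' : EuclideanSpace ℝ (Fin n)) (vn : ℝ) (x : EuclideanSpace ℝ (Fin n)) : Prop :=
  (1 + ‖gradient f x‖ ^ 2) * lap f x - ⟪gradient f x, hess f x (gradient f x)⟫
    = (vn - ⟪v', gradient f x⟫) * (1 + ‖gradient f x‖ ^ 2)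

/-- The scalar mean curvature `h(f,x)` of the graph of `f` at `(x, f(x))` with respect to the
upward unit normal: `h = ((1+|∇f|²)Δf − ⟨∇f,(D²f)∇f⟩)/W³` where `W = √(1+|∇f|²)`. -/
noncomputable def graphH {n : ℕ} (f : EuclideanSpace ℝ (Fin n) → ℝ)
    (x : EuclideanSpace ℝ (Fin n)) : ℝ :=
  ((1 + ‖gradient f x‖ ^ 2) * lap f x - ⟪gradient f x, hess f x (gradient f x)⟫)
    / Real.sqrt (1 + ‖gradient f x‖ ^ 2) ^ 3

/-- The smallest principal curvature `κ₁(f,x)` of the graph of `f` at `(x, f(x))` with respect to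
the upward unit normal: the minimum over nonzero `ξ` of
`⟨(D²f(x))ξ, ξ⟩ / (W(x)·⟨(I + ∇f(∇f)ᵀ)ξ, ξ⟩)`, where
`⟨(I + ∇f(∇f)ᵀ)ξ, ξ⟩ = |ξ|² + ⟨∇f, ξ⟩²` and `W = √(1+|∇f|²)`. -/
noncomputable def graphKappa1 {n : ℕ} (f : EuclideanSpace ℝ (Fin n) → ℝ)
    (x : EuclideanSpace ℝ (Fin n)) : ℝ :=
  sInf { r : ℝ | ∃ ξ : EuclideanSpace ℝ (Fin n), ξ ≠ 0 ∧
    r = ⟪hess f x ξ, ξ⟫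
      / (Real.sqrt (1 + ‖gradient f x‖ ^ 2) * (‖ξ‖ ^ 2 + ⟪gradient f x, ξ⟫ ^ 2)) }

open scoped ContDiff Topology

section Calculus

variable {X : Type*} [NormedAddCommGroup X] [NormedSpace ℝ X]

/-- The algebra of smooth real-valued functions on a normed space. -/
def smoothAlgebra (X : Type*) [NormedAddCommGroup X] [NormedSpace ℝ X] :
    Subalgebra ℝ (X → ℝ) where
  carrier := {f | ContDiff ℝ ∞ f}
  mul_mem' := fun {f g} (hf : ContDiff ℝ ∞ f) (hg : ContDiff ℝ ∞ g) => hf.mul hg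
  add_mem' := fun {f g} (hf : ContDiff ℝ ∞ f) (hg : ContDiff ℝ ∞ g) => hf.add hg
  algebraMap_mem' := fun r => (contDiff_const : ContDiff ℝ ∞ fun _ : X => r)

theorem contDiff_coe (f : smoothAlgebra X) : ContDiff ℝ ∞ (f : X → ℝ) := f.2

theorem continuous_coe (f : smoothAlgebra X) : Continuous (f : X → ℝ) :=
  (contDiff_coe f).continuous

theorem differentiable_coe (f : smoothAlgebra X) : Differentiable ℝ (f : X → ℝ) :=
  (contDiff_coe f).differentiable (by simp)

/-- The directional derivative in the direction `v`, as a derivation of the algebra of smooth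
functions. -/
noncomputable def dirDeriv (v : X) : Derivation ℝ (smoothAlgebra X) (smoothAlgebra X) :=
  Derivation.mk'
    { toFun := fun f => ⟨fun z => fderiv ℝ (f : X → ℝ) z v,
        ((contDiff_coe f).fderiv_right (m := ∞) (by simp)).clm_apply contDiff_const⟩
      map_add' := fun f g => by
        ext z
        simp [fderiv_add (differentiable_coe f z) (differentiable_coe g z)]
      map_smul' := fun c f => by
        ext z
        simp [fderiv_const_smul (differentiable_coe f z)] }
    (fun f g => by
      ext z
      simp [fderiv_mul (differentiable_coe f z) (differentiable_coe g z)])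

theorem dirDeriv_apply (v : X) (f : smoothAlgebra X) (z : X) :
    (dirDeriv v f : X → ℝ) z = fderiv ℝ (f : X → ℝ) z v := rfl

theorem dirDeriv_comm (v w : X) (f : smoothAlgebra X) :
    dirDeriv v (dirDeriv w f) = dirDeriv w (dirDeriv v f) := by
  ext z
  have key : ∀ v w : X, (dirDeriv v (dirDeriv w f) : X → ℝ) z =
      fderiv ℝ (fderiv ℝ (f : X → ℝ)) z v w := by
    intro v w
    rw [dirDeriv_apply]
    have h : DifferentiableAt ℝ (fderiv ℝ (f : X → ℝ)) z :=
      ((contDiff_coe f).fderiv_right (m := ∞) (by simp)).differentiable (by simp) z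
    have := (h.hasFDerivAt.clm_apply (hasFDerivAt_const w z)).fderiv
    change fderiv ℝ (fun z => fderiv ℝ (f : X → ℝ) z w) z v = _
    rw [this]
    simp
  rw [key, key]
  exact ((contDiff_coe f).contDiffAt.isSymmSndFDerivAt
    (by simpa using WithTop.coe_le_coe.2 (le_top : (2 : ℕ∞) ≤ ⊤))).eq v w

theorem hasDerivAt_line (f : smoothAlgebra X) (z v : X) (s : ℝ) :
    HasDerivAt (fun s : ℝ => (f : X → ℝ) (z + s • v)) ((dirDeriv v f : X → ℝ) (z + s • v)) s := by
  have h := (differentiable_coe f (z + s • v)).hasFDerivAt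
  have h2 : HasDerivAt (fun s : ℝ => z + s • v) v s := by
    simpa using ((hasDerivAt_id s).smul_const v).const_add z
  exact h.comp_hasDerivAt s h2

/-- Second-order necessary condition at a minimum for a quadratic family of smooth functions. -/
theorem second_order_nonneg (α β γ : smoothAlgebra X) (z v : X)
    (hα : (α : X → ℝ) z = 0) (hβ : (β : X → ℝ) z = 0)
    (hmin : ∀ᶠ s : ℝ in 𝓝 0, 0 ≤ (α : X → ℝ) (z + s • v) + 2 * s * (β : X → ℝ) (z + s • v)
      + s ^ 2 * (γ : X → ℝ) (z + s • v)) :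
    (dirDeriv v α : X → ℝ) z = 0 ∧
    0 ≤ (dirDeriv v (dirDeriv v α) : X → ℝ) z + 4 * (dirDeriv v β : X → ℝ) z
      + 2 * (γ : X → ℝ) z := by
  set φ : ℝ → ℝ := fun s => (α : X → ℝ) (z + s • v) + 2 * s * (β : X → ℝ) (z + s • v)
      + s ^ 2 * (γ : X → ℝ) (z + s • v) with hφ
  have hd : ∀ s, HasDerivAt φ ((dirDeriv v α : X → ℝ) (z + s • v)
      + (2 * (β : X → ℝ) (z + s • v) + 2 * s * (dirDeriv v β : X → ℝ) (z + s • v))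
      + (2 * s * (γ : X → ℝ) (z + s • v) + s ^ 2 * (dirDeriv v γ : X → ℝ) (z + s • v))) s := by
    intro s
    have h1 : HasDerivAt (fun s : ℝ => 2 * s) 2 s := by
      simpa using (hasDerivAt_id s).const_mul 2
    have h2 : HasDerivAt (fun s : ℝ => s ^ 2) (2 * s) s := by
      simpa using hasDerivAt_pow 2 s
    exact ((hasDerivAt_line α z v s).add (h1.mul (hasDerivAt_line β z v s))).add
      (h2.mul (hasDerivAt_line γ z v s))
  have hd' := funext fun s => (hd s).deriv
  have hdd : HasDerivAt (deriv φ) ((dirDeriv v (dirDeriv v α) : X → ℝ) z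
      + 4 * (dirDeriv v β : X → ℝ) z + 2 * (γ : X → ℝ) z) 0 := by
    rw [hd']
    have h1 : HasDerivAt (fun s : ℝ => 2 * s) 2 0 := by
      simpa using (hasDerivAt_id (0 : ℝ)).const_mul 2
    have h2 : HasDerivAt (fun s : ℝ => s ^ 2) (2 * 0) 0 := by
      simpa using hasDerivAt_pow 2 (0 : ℝ)
    have := ((hasDerivAt_line (dirDeriv v α) z v 0).add
      (((hasDerivAt_line β z v 0).const_mul 2).add
        (h1.mul (hasDerivAt_line (dirDeriv v β) z v 0)))).add
      ((h1.mul (hasDerivAt_line γ z v 0)).add (h2.mul (hasDerivAt_line (dirDeriv v γ) z v 0)))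
    refine this.congr_deriv ?_
    simp
    ring
  have h0 : φ 0 = 0 := by simp [hφ, hα]
  have hloc : IsLocalMin φ 0 := by
    filter_upwards [hmin] with s hs
    rw [h0]; exact hs
  have hd0 : deriv φ 0 = 0 := hloc.deriv_eq_zero
  refine ⟨by simpa [hd', hβ] using hd0, ?_⟩
  by_contra! hneg
  have hmax : IsLocalMin (fun s => -φ s) 0 := by
    apply isLocalMin_of_deriv_deriv_pos
    · have : deriv (fun s => -φ s) = fun s => -deriv φ s := funext fun s => deriv.fun_neg
      rw [this, deriv.fun_neg, hdd.deriv]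
      linarith
    · rw [deriv.fun_neg, hd0, neg_zero]
    · exact (hd 0).continuousAt.neg
  have hz : φ =ᶠ[𝓝 0] fun _ => (0 : ℝ) := by
    filter_upwards [hloc, hmax] with s h1 h2
    rw [h0] at h1 h2
    linarith
  have hz2 : deriv φ =ᶠ[𝓝 0] fun _ => (0 : ℝ) := by
    refine hz.deriv.trans ?_
    simp
  have : deriv (deriv φ) 0 = 0 := by
    rw [hz2.deriv_eq]; simp
  rw [hdd.deriv] at this
  linarith

/-- If `f` attains a minimum at `z` among the points `z + s • v` with small `s ≤ 0`, its derivative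
in the direction `v` is nonpositive. -/
theorem dirDeriv_nonpos (f : smoothAlgebra X) (z v : X)
    (hmin : ∀ᶠ s : ℝ in 𝓝 0, s ≤ 0 → (f : X → ℝ) z ≤ (f : X → ℝ) (z + s • v)) :
    (dirDeriv v f : X → ℝ) z ≤ 0 := by
  have h := hasDerivAt_line f z v 0
  simp only [zero_smul, add_zero] at h
  have h' := (hasDerivWithinAt_iff_tendsto_slope' (s := Set.Iio (0 : ℝ)) (by simp)).1
    (h.hasDerivWithinAt (s := Set.Iio 0))
  refine le_of_tendsto h' ?_
  filter_upwards [self_mem_nhdsWithin, nhdsWithin_le_nhds hmin] with s hs hs2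
  have hs : s < 0 := hs
  rw [slope_def_field]
  apply div_nonpos_of_nonneg_of_nonpos
  · simpa using hs2 hs.le
  · linarith

end Calculus

section SpaceTime

variable {n : ℕ}

/-- The algebra of smooth functions on space-time. -/
noncomputable abbrev SmoothST (n : ℕ) := smoothAlgebra (EuclideanSpace ℝ (Fin n) × ℝ)

/-- The derivative in the spatial direction `v`. -/
noncomputable abbrev spaceDeriv (v : EuclideanSpace ℝ (Fin n)) :
    Derivation ℝ (SmoothST n) (SmoothST n) := dirDeriv (v, 0)

/-- The time derivative. -/
noncomputable abbrev timeDeriv : Derivation ℝ (SmoothST n) (SmoothST n) := dirDeriv (0, 1)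

/-- The inner product of the spatial gradients. -/
noncomputable def gradInner (f g : SmoothST n) : SmoothST n :=
  ∑ i, spaceDeriv (EuclideanSpace.single i 1) f * spaceDeriv (EuclideanSpace.single i 1) g

/-- The spatial Laplacian. -/
noncomputable def laplace (f : SmoothST n) : SmoothST n :=
  ∑ i, spaceDeriv (EuclideanSpace.single i 1) (spaceDeriv (EuclideanSpace.single i 1) f)

/-- The spatial gradient at a point. -/
noncomputable def spaceGrad (f : SmoothST n) (z : EuclideanSpace ℝ (Fin n) × ℝ) :
    EuclideanSpace ℝ (Fin n) :=
  WithLp.toLp 2 fun i => (spaceDeriv (EuclideanSpace.single i 1) f).1 z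

theorem coe_add_apply (f g : SmoothST n) (z) : (f + g).1 z = f.1 z + g.1 z := rfl
theorem coe_sub_apply (f g : SmoothST n) (z) : (f - g).1 z = f.1 z - g.1 z := rfl
theorem coe_mul_apply (f g : SmoothST n) (z) : (f * g).1 z = f.1 z * g.1 z := rfl
theorem coe_smul_apply (c : ℝ) (f : SmoothST n) (z) : (c • f).1 z = c * f.1 z := rfl
theorem coe_one_apply (z) : (1 : SmoothST n).1 z = 1 := rfl
theorem coe_two_apply (z) : (2 : SmoothST n).1 z = 2 := rfl
theorem coe_four_apply (z) : (4 : SmoothST n).1 z = 4 := rfl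
theorem coe_algebraMap_apply (c : ℝ) (z) : (algebraMap ℝ (SmoothST n) c).1 z = c := rfl
theorem coe_sum_apply {ι : Type*} (s : Finset ι) (f : ι → SmoothST n) (z) :
    (∑ i ∈ s, f i).1 z = ∑ i ∈ s, (f i).1 z := by
  simp

theorem spaceDeriv_add_apply (v w : EuclideanSpace ℝ (Fin n)) (f : SmoothST n) (z) :
    (spaceDeriv (v + w) f).1 z = (spaceDeriv v f).1 z + (spaceDeriv w f).1 z := by
  have : ((v + w, 0) : EuclideanSpace ℝ (Fin n) × ℝ) = (v, 0) + (w, 0) := by simp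
  change fderiv ℝ f.1 z _ = fderiv ℝ f.1 z _ + fderiv ℝ f.1 z _
  rw [this, map_add]

theorem spaceDeriv_smul_apply (c : ℝ) (v : EuclideanSpace ℝ (Fin n)) (f : SmoothST n) (z) :
    (spaceDeriv (c • v) f).1 z = c * (spaceDeriv v f).1 z := by
  have : ((c • v, 0) : EuclideanSpace ℝ (Fin n) × ℝ) = c • (v, 0) := by simp
  change fderiv ℝ f.1 z _ = c * fderiv ℝ f.1 z _
  rw [this, map_smul, smul_eq_mul]

theorem sum_inner_single (y : EuclideanSpace ℝ (Fin n)) :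
    ∑ i, ⟪y, EuclideanSpace.single i 1⟫ • EuclideanSpace.single i (1 : ℝ) = y := by
  ext j
  simp [EuclideanSpace.inner_single_right, Pi.single_apply]

theorem sum_inner_single_mul (l : EuclideanSpace ℝ (Fin n) →ₗ[ℝ] ℝ)
    (y : EuclideanSpace ℝ (Fin n)) :
    ∑ i, ⟪y, EuclideanSpace.single i 1⟫ * l (EuclideanSpace.single i 1) = l y := by
  conv_rhs => rw [← sum_inner_single y]
  simp only [map_sum, map_smul, smul_eq_mul]

/-- The spatial derivative at a point, as a linear form in the direction. -/
noncomputable def derivForm (f : SmoothST n) (z : EuclideanSpace ℝ (Fin n) × ℝ) :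
    EuclideanSpace ℝ (Fin n) →ₗ[ℝ] ℝ where
  toFun v := (spaceDeriv v f).1 z
  map_add' v w := spaceDeriv_add_apply v w f z
  map_smul' c v := spaceDeriv_smul_apply c v f z

theorem sum_mul_spaceDeriv_single (y : EuclideanSpace ℝ (Fin n)) (f : SmoothST n) (z) :
    ∑ i, ⟪y, EuclideanSpace.single i 1⟫ * (spaceDeriv (EuclideanSpace.single i 1) f).1 z
      = (spaceDeriv y f).1 z := by
  exact sum_inner_single_mul (derivForm f z) y

theorem inner_spaceGrad (f : SmoothST n) (z) (v : EuclideanSpace ℝ (Fin n)) :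
    ⟪spaceGrad f z, v⟫ = (spaceDeriv v f).1 z := by
  rw [← sum_mul_spaceDeriv_single v f z, spaceGrad, PiLp.inner_apply]
  simp [EuclideanSpace.inner_single_right]

theorem gradInner_apply (f g : SmoothST n) (z) :
    (gradInner f g).1 z = (spaceDeriv (spaceGrad f z) g).1 z := by
  rw [← sum_mul_spaceDeriv_single, gradInner, coe_sum_apply]
  simp [coe_mul_apply, inner_spaceGrad]

theorem gradInner_comm (f g : SmoothST n) : gradInner f g = gradInner g f := by
  simp [gradInner, mul_comm]

theorem gradInner_add_right (f g h : SmoothST n) :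
    gradInner f (g + h) = gradInner f g + gradInner f h := by
  simp [gradInner, mul_add, Finset.sum_add_distrib]

theorem gradInner_mul_right (f g h : SmoothST n) :
    gradInner f (g * h) = g * gradInner f h + h * gradInner f g := by
  simp only [gradInner, Derivation.leibniz, smul_eq_mul, mul_add, Finset.sum_add_distrib,
    Finset.mul_sum]
  congr 1 <;> exact Finset.sum_congr rfl fun _ _ => by ring

theorem dirDeriv_gradInner (v : EuclideanSpace ℝ (Fin n) × ℝ) (f g : SmoothST n) :
    dirDeriv v (gradInner f g) = gradInner (dirDeriv v f) g + gradInner f (dirDeriv v g) := by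
  simp only [gradInner, map_sum, Derivation.leibniz, smul_eq_mul, ← Finset.sum_add_distrib]
  refine Finset.sum_congr rfl fun i _ => ?_
  rw [dirDeriv_comm v _ f, dirDeriv_comm v _ g]
  ring

theorem dirDeriv_laplace (v : EuclideanSpace ℝ (Fin n) × ℝ) (f : SmoothST n) :
    dirDeriv v (laplace f) = laplace (dirDeriv v f) := by
  simp only [laplace, map_sum]
  refine Finset.sum_congr rfl fun i _ => ?_
  rw [dirDeriv_comm v, dirDeriv_comm v _ f]

theorem laplace_mul (f g : SmoothST n) :
    laplace (f * g) = f * laplace g + g * laplace f + 2 * gradInner f g := by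
  simp only [laplace, gradInner, map_add, Derivation.leibniz, smul_eq_mul, Finset.mul_sum,
    ← Finset.sum_add_distrib]
  exact Finset.sum_congr rfl fun _ _ => by ring

theorem laplace_sub (f g : SmoothST n) : laplace (f - g) = laplace f - laplace g := by
  simp [laplace, Finset.sum_sub_distrib]

/-- The nonparametric mean curvature flow operator, multiplied by `1 + |∇u|²`. -/
noncomputable def mcfOp (u : SmoothST n) : SmoothST n :=
  (1 + gradInner u u) * (timeDeriv u - laplace u) + (1 / 2 : ℝ) • gradInner u (gradInner u u)

/-- The linearization of `mcfOp` at `u`. -/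
noncomputable def linOp (u f : SmoothST n) : SmoothST n :=
  2 * gradInner u f * (timeDeriv u - laplace u)
    + (1 + gradInner u u) * (timeDeriv f - laplace f)
    + (1 / 2 : ℝ) • gradInner (gradInner u u) f + gradInner u (gradInner u f)

theorem dirDeriv_mcfOp (v : EuclideanSpace ℝ (Fin n) × ℝ) (u : SmoothST n) :
    dirDeriv v (mcfOp u) = linOp u (dirDeriv v u) := by
  have h1 : dirDeriv v (gradInner u u) = (2 : ℝ) • gradInner u (dirDeriv v u) := by
    rw [dirDeriv_gradInner, gradInner_comm (dirDeriv v u), two_smul]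
  have h2 : gradInner u ((2 : ℝ) • gradInner u (dirDeriv v u))
      = (2 : ℝ) • gradInner u (gradInner u (dirDeriv v u)) := by
    rw [two_smul, two_smul, gradInner_add_right]
  rw [mcfOp, linOp, map_add, Derivation.leibniz, map_add, map_sub, dirDeriv_laplace,
    Derivation.map_smul, dirDeriv_gradInner v u (gradInner u u), h1, h2, dirDeriv_comm v,
    gradInner_comm (dirDeriv v u) (gradInner u u)]
  ext z
  simp only [coe_add_apply, coe_sub_apply, coe_mul_apply, coe_smul_apply, smul_eq_mul,
    Derivation.map_one_eq_zero, zero_add, coe_one_apply, coe_two_apply]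
  ring

theorem spaceDeriv_linOp_spaceDeriv (ξ : EuclideanSpace ℝ (Fin n)) (u : SmoothST n) :
    spaceDeriv ξ (linOp u (spaceDeriv ξ u)) = linOp u (spaceDeriv ξ (spaceDeriv ξ u))
      + 2 * gradInner (spaceDeriv ξ u) (spaceDeriv ξ u) * (timeDeriv u - laplace u)
      + 4 * gradInner u (spaceDeriv ξ u)
        * (timeDeriv (spaceDeriv ξ u) - laplace (spaceDeriv ξ u))
      + 2 * gradInner (spaceDeriv ξ u) (gradInner u (spaceDeriv ξ u))
      + gradInner u (gradInner (spaceDeriv ξ u) (spaceDeriv ξ u)) := by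
  have h1 : spaceDeriv ξ (gradInner u u) = gradInner u (spaceDeriv ξ u)
      + gradInner u (spaceDeriv ξ u) := by
    rw [dirDeriv_gradInner, gradInner_comm (spaceDeriv ξ u)]
  have hc : (2 : SmoothST n) = algebraMap ℝ _ 2 := rfl
  simp only [linOp, map_add, Derivation.leibniz, map_sub, dirDeriv_laplace,
    Derivation.map_smul, dirDeriv_gradInner _ _ (gradInner _ _), h1,
    dirDeriv_gradInner _ (gradInner _ _), dirDeriv_gradInner _ u (spaceDeriv ξ u)]
  rw [hc, Derivation.map_algebraMap, ← hc, dirDeriv_comm (ξ, 0) (0, 1) u,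
    dirDeriv_comm (ξ, 0) (0, 1) (dirDeriv (ξ, 0) u),
    gradInner_comm (gradInner u _ + gradInner u _)]
  ext z
  simp only [coe_add_apply, coe_sub_apply, coe_mul_apply, coe_smul_apply, smul_eq_mul,
    Derivation.map_one_eq_zero, zero_add, coe_one_apply, coe_two_apply, coe_four_apply,
    gradInner_add_right, mul_zero, add_zero]
  ring

theorem gradInner_sub_right (f g h : SmoothST n) :
    gradInner f (g - h) = gradInner f g - gradInner f h := by
  simp [gradInner, mul_sub, Finset.sum_sub_distrib]

theorem laplace_add (f g : SmoothST n) : laplace (f + g) = laplace f + laplace g := by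
  simp [laplace, Finset.sum_add_distrib]

theorem linOp_add (u f g : SmoothST n) : linOp u (f + g) = linOp u f + linOp u g := by
  ext z
  simp only [linOp, gradInner_add_right, laplace_add, map_add,
    coe_add_apply, coe_sub_apply, coe_mul_apply, coe_smul_apply]
  ring

theorem linOp_sub (u f g : SmoothST n) : linOp u (f - g) = linOp u f - linOp u g := by
  ext z
  simp only [linOp, gradInner_sub_right, laplace_sub, map_sub,
    coe_add_apply, coe_sub_apply, coe_mul_apply, coe_smul_apply]
  ring

theorem linOp_mul (u f g : SmoothST n) :
    linOp u (f * g) = f * linOp u g + g * linOp u f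
      - 2 * (1 + gradInner u u) * gradInner f g + 2 * gradInner u f * gradInner u g := by
  ext z
  simp only [linOp, gradInner_mul_right, gradInner_add_right, laplace_mul,
    Derivation.leibniz, smul_eq_mul,
    coe_add_apply, coe_sub_apply, coe_mul_apply, coe_smul_apply, coe_two_apply]
  ring

theorem linOp_algebraMap (u : SmoothST n) (c : ℝ) : linOp u (algebraMap ℝ _ c) = 0 := by
  have h : ∀ f : SmoothST n, gradInner f (algebraMap ℝ _ c) = 0 := by
    intro f; simp [gradInner]
  have h0 : gradInner u 0 = 0 := by simp [gradInner]
  simp [linOp, h, laplace, h0]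

/-- Pointwise expression of the linearized operator in terms of directional derivatives. -/
theorem linOp_apply (u f : SmoothST n) (z) :
    (linOp u f).1 z = 2 * (spaceDeriv (spaceGrad u z) f).1 z * ((timeDeriv u).1 z - (laplace u).1 z)
      + (1 + ‖spaceGrad u z‖ ^ 2) * ((timeDeriv f).1 z - (laplace f).1 z)
      + 2 * (spaceDeriv (spaceGrad (spaceDeriv (spaceGrad u z) u) z) f).1 z
      + (spaceDeriv (spaceGrad u z) (spaceDeriv (spaceGrad u z) f)).1 z := by
  have hn : (gradInner u u).1 z = ‖spaceGrad u z‖ ^ 2 := by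
    rw [gradInner_apply, ← inner_spaceGrad, real_inner_self_eq_norm_sq]
  have h1 : (gradInner (gradInner u u) f).1 z
      = 2 * (spaceDeriv (spaceGrad (spaceDeriv (spaceGrad u z) u) z) f).1 z := by
    rw [gradInner_apply]
    have : spaceGrad (gradInner u u) z
        = (2 : ℝ) • spaceGrad (spaceDeriv (spaceGrad u z) u) z := by
      refine ext_inner_right ℝ fun v => ?_
      rw [real_inner_smul_left, inner_spaceGrad, inner_spaceGrad, dirDeriv_gradInner,
        gradInner_comm (dirDeriv _ u), coe_add_apply, gradInner_apply, dirDeriv_comm, two_mul]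
    rw [this, spaceDeriv_smul_apply]
  have h2 : (gradInner u (gradInner u f)).1 z
      = (spaceDeriv (spaceGrad (spaceDeriv (spaceGrad u z) u) z) f).1 z
        + (spaceDeriv (spaceGrad u z) (spaceDeriv (spaceGrad u z) f)).1 z := by
    rw [gradInner_apply, dirDeriv_gradInner, coe_add_apply, gradInner_apply, gradInner_apply]
  simp only [linOp, coe_add_apply, coe_sub_apply, coe_mul_apply, coe_smul_apply, coe_one_apply,
    coe_two_apply, h1, h2, hn, gradInner_apply u f]
  ring

theorem mcfOp_apply (u : SmoothST n) (z) :
    (mcfOp u).1 z = (1 + ‖spaceGrad u z‖ ^ 2) * ((timeDeriv u).1 z - (laplace u).1 z)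
      + (spaceDeriv (spaceGrad u z) (spaceDeriv (spaceGrad u z) u)).1 z := by
  have hn : (gradInner u u).1 z = ‖spaceGrad u z‖ ^ 2 := by
    rw [gradInner_apply, ← inner_spaceGrad, real_inner_self_eq_norm_sq]
  simp only [mcfOp, coe_add_apply, coe_sub_apply, coe_mul_apply, coe_smul_apply, coe_one_apply, hn]
  rw [gradInner_apply, dirDeriv_gradInner, coe_add_apply, gradInner_comm (dirDeriv _ u),
    gradInner_apply]
  ring

end SpaceTime

section Touching

variable {n : ℕ}

theorem spaceDeriv_add (v w : EuclideanSpace ℝ (Fin n)) (f : SmoothST n) :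
    spaceDeriv (v + w) f = spaceDeriv v f + spaceDeriv w f := by
  ext z
  exact spaceDeriv_add_apply v w f z

theorem spaceDeriv_smul (c : ℝ) (v : EuclideanSpace ℝ (Fin n)) (f : SmoothST n) :
    spaceDeriv (c • v) f = c • spaceDeriv v f := by
  ext z
  exact spaceDeriv_smul_apply c v f z

/-- The quadratic form `D²u - θ (I + ∇u ∇uᵀ)`, polarized. -/
noncomputable def pinch (θ u : SmoothST n) (ξ η : EuclideanSpace ℝ (Fin n)) : SmoothST n :=
  spaceDeriv ξ (spaceDeriv η u)
    - θ * (algebraMap ℝ (SmoothST n) ⟪ξ, η⟫ + spaceDeriv ξ u * spaceDeriv η u)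

theorem pinch_apply (θ u : SmoothST n) (ξ η : EuclideanSpace ℝ (Fin n)) (z) :
    (pinch θ u ξ η).1 z = (spaceDeriv ξ (spaceDeriv η u)).1 z
      - θ.1 z * (⟪ξ, η⟫ + (spaceDeriv ξ u).1 z * (spaceDeriv η u).1 z) := rfl

theorem pinch_add_smul_apply (θ u : SmoothST n) (ξ η : EuclideanSpace ℝ (Fin n)) (s : ℝ) (z) :
    (pinch θ u (ξ + s • η) (ξ + s • η)).1 z = (pinch θ u ξ ξ).1 z
      + 2 * s * (pinch θ u ξ η).1 z + s ^ 2 * (pinch θ u η η).1 z := by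
  simp only [pinch_apply, spaceDeriv_add, spaceDeriv_smul, map_add, Derivation.map_smul, coe_add_apply,
    coe_smul_apply, inner_add_left, inner_add_right, real_inner_smul_left, real_inner_smul_right,
    dirDeriv_comm (η, 0) (ξ, 0) u, real_inner_comm ξ η]
  ring

theorem pinch_smul_right (θ u : SmoothST n) (ξ η : EuclideanSpace ℝ (Fin n)) (c : ℝ) :
    pinch θ u ξ (c • η) = c • pinch θ u ξ η := by
  ext z
  simp only [pinch_apply, spaceDeriv_smul, Derivation.map_smul, coe_smul_apply,
    real_inner_smul_right]
  ring

theorem pinch_smul_smul (θ u : SmoothST n) (η : EuclideanSpace ℝ (Fin n)) (c : ℝ) :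
    pinch θ u (c • η) (c • η) = c ^ 2 • pinch θ u η η := by
  ext z
  simp only [pinch_apply, spaceDeriv_smul, Derivation.map_smul, coe_smul_apply,
    real_inner_smul_right, real_inner_smul_left]
  ring

/-- The trace of a positive semidefinite form against `I - p pᵀ / (1 + |p|²)` is nonnegative. -/
theorem trace_inverse_metric_nonneg
    (B : EuclideanSpace ℝ (Fin n) →ₗ[ℝ] EuclideanSpace ℝ (Fin n) →ₗ[ℝ] ℝ)
    (hB : ∀ e, 0 ≤ B e e) (p : EuclideanSpace ℝ (Fin n)) :
    0 ≤ (1 + ‖p‖ ^ 2) * ∑ i, B (EuclideanSpace.single i 1) (EuclideanSpace.single i 1)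
      - B p p := by
  set W := Real.sqrt (1 + ‖p‖ ^ 2) with hW
  have hW2 : W ^ 2 = 1 + ‖p‖ ^ 2 := Real.sq_sqrt (by positivity)
  have hWpos : 0 < W := Real.sqrt_pos.2 (by positivity)
  set β := 1 / (W * (W + 1)) with hβ
  have hβ2 : W ^ 2 * (2 * β - β ^ 2 * (W ^ 2 - 1)) = 1 := by
    rw [hβ]; field_simp; ring
  have hl : ∑ i, ⟪p, EuclideanSpace.single i 1⟫ * B (EuclideanSpace.single i 1) p = B p p :=
    sum_inner_single_mul (B.flip p) p
  have hr : ∑ i, ⟪p, EuclideanSpace.single i 1⟫ * B p (EuclideanSpace.single i 1) = B p p :=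
    sum_inner_single_mul (B p) p
  have hp : ∑ i, ⟪p, EuclideanSpace.single i (1 : ℝ)⟫ ^ 2 = W ^ 2 - 1 := by
    rw [hW2, EuclideanSpace.real_norm_sq_eq]
    simp [EuclideanSpace.inner_single_right]
  have key : ∑ i, B (EuclideanSpace.single i 1 - (β * ⟪p, EuclideanSpace.single i 1⟫) • p)
      (EuclideanSpace.single i 1 - (β * ⟪p, EuclideanSpace.single i 1⟫) • p)
      = ∑ i, B (EuclideanSpace.single i 1) (EuclideanSpace.single i 1)
        - (2 * β - β ^ 2 * (W ^ 2 - 1)) * B p p := by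
    have : ∀ i : Fin n, B (EuclideanSpace.single i 1 - (β * ⟪p, EuclideanSpace.single i 1⟫) • p)
      (EuclideanSpace.single i 1 - (β * ⟪p, EuclideanSpace.single i 1⟫) • p)
      = B (EuclideanSpace.single i 1) (EuclideanSpace.single i 1)
        - β * (⟪p, EuclideanSpace.single i 1⟫ * B (EuclideanSpace.single i 1) p)
        - β * (⟪p, EuclideanSpace.single i 1⟫ * B p (EuclideanSpace.single i 1))
        + β ^ 2 * B p p * ⟪p, EuclideanSpace.single i 1⟫ ^ 2 := by
      intro i
      simp only [map_sub, map_smul, LinearMap.sub_apply, LinearMap.smul_apply, smul_eq_mul]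
      ring
    simp only [this, Finset.sum_add_distrib, Finset.sum_sub_distrib, ← Finset.mul_sum, hl, hr, hp]
    ring
  have hnn := Finset.sum_nonneg fun (i : Fin n) (_ : i ∈ Finset.univ) =>
    hB (EuclideanSpace.single i 1 - (β * ⟪p, EuclideanSpace.single i 1⟫) • p)
  rw [key] at hnn
  have := mul_nonneg (sq_nonneg W) hnn
  rw [mul_sub, ← mul_assoc, hβ2, hW2] at this
  linarith

/-- The second spatial derivative at a point, as a bilinear form. -/
noncomputable def hessForm (f : SmoothST n) (z : EuclideanSpace ℝ (Fin n) × ℝ) :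
    EuclideanSpace ℝ (Fin n) →ₗ[ℝ] EuclideanSpace ℝ (Fin n) →ₗ[ℝ] ℝ :=
  LinearMap.mk₂ ℝ (fun v w => (spaceDeriv v (spaceDeriv w f)).1 z)
    (fun v v' w => spaceDeriv_add_apply v v' _ z)
    (fun c v w => spaceDeriv_smul_apply c v _ z)
    (fun v w w' => by rw [spaceDeriv_add, map_add]; rfl)
    (fun c v w => by rw [spaceDeriv_smul, Derivation.map_smul]; rfl)

/-- Traced second-order condition along directions transporting `ξ` by `e ↦ -ρ ⟪y, e⟫ p`. -/
theorem trace_second_order (F J K : SmoothST n) (z) (p y : EuclideanSpace ℝ (Fin n)) (ρ : ℝ)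
    (h : ∀ e : EuclideanSpace ℝ (Fin n), 0 ≤ (spaceDeriv e (spaceDeriv e F)).1 z
      + 4 * ((-ρ * ⟪y, e⟫) * (spaceDeriv e J).1 z) + 2 * ((-ρ * ⟪y, e⟫) ^ 2 * K.1 z)) :
    0 ≤ (1 + ‖p‖ ^ 2) * ((laplace F).1 z - 4 * ρ * (spaceDeriv y J).1 z
        + 2 * ρ ^ 2 * ‖y‖ ^ 2 * K.1 z)
      - ((spaceDeriv p (spaceDeriv p F)).1 z - 4 * ρ * ⟪y, p⟫ * (spaceDeriv p J).1 z
        + 2 * ρ ^ 2 * ⟪y, p⟫ ^ 2 * K.1 z) := by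
  let l : EuclideanSpace ℝ (Fin n) →ₗ[ℝ] ℝ := (innerSL ℝ y).toLinearMap
  have hl : ∀ e, l e = ⟪y, e⟫ := fun e => rfl
  let B := hessForm F z + (-(4 * ρ)) • LinearMap.mk₂ ℝ (fun v w => l v * derivForm J z w)
      (fun _ _ _ => by rw [map_add]; ring) (fun _ _ _ => by simp; ring)
      (fun _ _ _ => by rw [map_add]; ring) (fun _ _ _ => by simp; ring)
    + (2 * ρ ^ 2 * K.1 z) • LinearMap.mk₂ ℝ (fun v w => l v * l w)
      (fun _ _ _ => by rw [map_add]; ring) (fun _ _ _ => by simp; ring)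
      (fun _ _ _ => by rw [map_add]; ring) (fun _ _ _ => by simp; ring)
  have hB : ∀ e, B e e = (spaceDeriv e (spaceDeriv e F)).1 z
      - 4 * ρ * (⟪y, e⟫ * (spaceDeriv e J).1 z) + 2 * ρ ^ 2 * K.1 z * ⟪y, e⟫ ^ 2 := by
    intro e
    have : B e e = (spaceDeriv e (spaceDeriv e F)).1 z
      + (-(4 * ρ)) * (⟪y, e⟫ * (spaceDeriv e J).1 z)
      + 2 * ρ ^ 2 * K.1 z * (⟪y, e⟫ * ⟪y, e⟫) := rfl
    rw [this]; ring
  have := trace_inverse_metric_nonneg B (fun e => by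
    rw [hB]
    have := h e
    linarith) p
  simp only [hB, Finset.sum_add_distrib, Finset.sum_sub_distrib, ← Finset.mul_sum,
    sum_mul_spaceDeriv_single] at this
  have hy : ∑ i, ⟪y, EuclideanSpace.single i (1 : ℝ)⟫ ^ 2 = ‖y‖ ^ 2 := by
    rw [EuclideanSpace.real_norm_sq_eq]
    simp [EuclideanSpace.inner_single_right]
  rw [hy] at this
  have hL : (laplace F).1 z = ∑ i, (spaceDeriv (EuclideanSpace.single i 1)
      (spaceDeriv (EuclideanSpace.single i 1) F)).1 z := coe_sum_apply _ _ _
  rw [hL]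
  linarith
end Touching

section TouchingInequality

variable {n : ℕ}

theorem pinch_null (θ u : SmoothST n) (z) (ξ : EuclideanSpace ℝ (Fin n))
    (hP : ∀ η, 0 ≤ (pinch θ u η η).1 z) (hnull : (pinch θ u ξ ξ).1 z = 0)
    (η : EuclideanSpace ℝ (Fin n)) : (pinch θ u ξ η).1 z = 0 := by
  have h : ∀ s : ℝ, 0 ≤ (pinch θ u η η).1 z * (s * s) + (2 * (pinch θ u ξ η).1 z) * s + 0 := by
    intro s
    have := hP (ξ + s • η)
    rw [pinch_add_smul_apply, hnull] at this
    linarith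
  have := discrim_le_zero h
  rw [discrim] at this
  nlinarith [sq_nonneg ((pinch θ u ξ η).1 z)]

theorem pinch_first_second_order (θ u : SmoothST n) (z) (ξ : EuclideanSpace ℝ (Fin n))
    (hP : ∀ᶠ z' in 𝓝 z, z'.2 ≤ z.2 → ∀ η, 0 ≤ (pinch θ u η η).1 z')
    (hnull : (pinch θ u ξ ξ).1 z = 0) (e η : EuclideanSpace ℝ (Fin n)) :
    (spaceDeriv e (pinch θ u ξ ξ)).1 z = 0 ∧
    0 ≤ (spaceDeriv e (spaceDeriv e (pinch θ u ξ ξ))).1 z + 4 * (spaceDeriv e (pinch θ u ξ η)).1 z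
      + 2 * (pinch θ u η η).1 z := by
  refine second_order_nonneg _ _ _ z (e, 0) hnull
    (pinch_null θ u z ξ (hP.self_of_nhds le_rfl) hnull η) ?_
  have hc : Filter.Tendsto (fun s : ℝ => z + s • ((e, 0) : EuclideanSpace ℝ (Fin n) × ℝ))
      (𝓝 0) (𝓝 z) := by
    have : Continuous fun s : ℝ => z + s • ((e, 0) : EuclideanSpace ℝ (Fin n) × ℝ) := by fun_prop
    simpa using this.tendsto 0
  filter_upwards [hc.eventually hP] with s hs
  have := hs (by simp) (ξ + s • η)
  rwa [pinch_add_smul_apply] at this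

theorem timeDeriv_pinch_nonpos (θ u : SmoothST n) (z) (ξ : EuclideanSpace ℝ (Fin n))
    (hP : ∀ᶠ z' in 𝓝 z, z'.2 ≤ z.2 → ∀ η, 0 ≤ (pinch θ u η η).1 z')
    (hnull : (pinch θ u ξ ξ).1 z = 0) : (timeDeriv (pinch θ u ξ ξ)).1 z ≤ 0 := by
  refine dirDeriv_nonpos _ z (0, 1) ?_
  have hc : Filter.Tendsto (fun s : ℝ => z + s • ((0, 1) : EuclideanSpace ℝ (Fin n) × ℝ))
      (𝓝 0) (𝓝 z) := by
    have : Continuous fun s : ℝ => z + s • ((0, 1) : EuclideanSpace ℝ (Fin n) × ℝ) := by fun_prop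
    simpa using this.tendsto 0
  filter_upwards [hc.eventually hP] with s hs hs0
  rw [hnull]
  exact hs (by simpa using hs0) ξ

theorem linOp_nonneg_of_touching (θ u : SmoothST n) (z) (ξ : EuclideanSpace ℝ (Fin n)) (hξ : ξ ≠ 0)
    (h0 : (mcfOp u).1 z = 0) (h1 : (linOp u (spaceDeriv ξ u)).1 z = 0)
    (h2 : (spaceDeriv ξ (linOp u (spaceDeriv ξ u))).1 z = 0)
    (hP : ∀ᶠ z' in 𝓝 z, z'.2 ≤ z.2 → ∀ η, 0 ≤ (pinch θ u η η).1 z')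
    (hnull : (pinch θ u ξ ξ).1 z = 0) : 0 ≤ (linOp u θ).1 z := by
  have hN := pinch_null θ u z ξ (hP.self_of_nhds le_rfl) hnull
  have hS := pinch_first_second_order θ u z ξ hP hnull
  have hT := timeDeriv_pinch_nonpos θ u z ξ hP hnull
  set p := spaceGrad u z with hp
  set σ := (spaceDeriv ξ u).1 z with hσ
  set t := θ.1 z with ht
  set w := 1 + ‖p‖ ^ 2 with hw
  set G := ‖ξ‖ ^ 2 + σ ^ 2 with hG
  have hwpos : 0 < w := by positivity
  have hGpos : 0 < G := by have := norm_pos_iff.2 hξ; positivity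
  have hpξ : ⟪p, ξ⟫ = σ := inner_spaceGrad u z ξ
  have hpp : (spaceDeriv p u).1 z = w - 1 := by
    rw [← inner_spaceGrad, real_inner_self_eq_norm_sq, hw]; ring
  -- the Hessian applied to the null direction
  have hH : ∀ e, (spaceDeriv ξ (spaceDeriv e u)).1 z = t * (⟪ξ, e⟫ + σ * ⟪p, e⟫) := by
    intro e
    have := hN e
    rw [pinch_apply, ← inner_spaceGrad u z e] at this
    linarith
  have hv : spaceGrad (spaceDeriv ξ u) z = t • (ξ + σ • p) := by
    refine ext_inner_right ℝ fun e => ?_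
    rw [inner_spaceGrad, dirDeriv_comm, hH, real_inner_smul_left, inner_add_left,
      real_inner_smul_left]
  set π := (spaceDeriv p (spaceDeriv p u)).1 z with hπ
  have hξξ : (spaceDeriv ξ (spaceDeriv ξ u)).1 z = t * G := by
    rw [hH, real_inner_self_eq_norm_sq, hpξ, hG]; ring
  have hξp : (spaceDeriv ξ (spaceDeriv p u)).1 z = t * σ * w := by
    rw [hH, real_inner_self_eq_norm_sq, real_inner_comm, hpξ, hw]; ring
  have hpξ' : (spaceDeriv p (spaceDeriv ξ u)).1 z = t * σ * w := by
    rw [dirDeriv_comm, hξp]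
  have hdv : ∀ f : SmoothST n, (spaceDeriv (t • (ξ + σ • p)) f).1 z
      = t * ((spaceDeriv ξ f).1 z + σ * (spaceDeriv p f).1 z) := by
    intro f
    rw [spaceDeriv_smul_apply, spaceDeriv_add_apply, spaceDeriv_smul_apply]
  have hΓσ : ∀ f : SmoothST n, (gradInner (spaceDeriv ξ u) f).1 z
      = t * ((spaceDeriv ξ f).1 z + σ * (spaceDeriv p f).1 z) := by
    intro f; rw [gradInner_apply, hv, hdv]
  have hΓσσ : (gradInner (spaceDeriv ξ u) (spaceDeriv ξ u)).1 z = t ^ 2 * (G + σ ^ 2 * w) := by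
    rw [hΓσ, hξξ, hpξ']; ring
  have hΓuσ : (gradInner u (spaceDeriv ξ u)).1 z = t * σ * w := by
    rw [gradInner_apply, hpξ']
  have hΓuu : (gradInner u u).1 z = w - 1 := by
    rw [gradInner_apply, hpp]
  -- third order terms
  set α := (spaceDeriv ξ (spaceDeriv ξ (spaceDeriv p u))).1 z with hα
  set β := (spaceDeriv p (spaceDeriv p (spaceDeriv ξ u))).1 z with hβ
  have hα' : (spaceDeriv p (spaceDeriv ξ (spaceDeriv ξ u))).1 z = α := by
    rw [dirDeriv_comm (p, 0), dirDeriv_comm (p, 0)]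
  have hα'' : (spaceDeriv ξ (spaceDeriv p (spaceDeriv ξ u))).1 z = α := by
    rw [dirDeriv_comm (p, 0)]
  have hk : (spaceDeriv (spaceGrad (spaceDeriv p u) z) (spaceDeriv ξ u)).1 z
      = t * (t * σ * w + σ * π) := by
    rw [← inner_spaceGrad, hv, real_inner_comm, inner_spaceGrad, hdv, hξp]
  have hc1 : (gradInner (spaceDeriv ξ u) (gradInner u (spaceDeriv ξ u))).1 z
      = t ^ 2 * (t * G + 2 * σ * (t * σ * w) + σ ^ 2 * π) + t * (α + σ * β) := by
    rw [hΓσ, dirDeriv_gradInner, dirDeriv_gradInner, coe_add_apply, coe_add_apply,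
      gradInner_comm (dirDeriv (p, 0) u), hΓσ (spaceDeriv ξ u), hΓσ (spaceDeriv p u),
      gradInner_apply u, gradInner_apply u, ← hp, hα', hξξ, hpξ', hξp, ← hπ, ← hβ]
    ring
  have hc2 : (gradInner u (gradInner (spaceDeriv ξ u) (spaceDeriv ξ u))).1 z
      = 2 * t * (α + σ * β) := by
    rw [gradInner_apply, dirDeriv_gradInner, coe_add_apply, gradInner_comm _ (dirDeriv (ξ, 0) u),
      hΓσ, hα'', ← hp]
    ring
  -- the equation and its derivatives
  set q := (timeDeriv u).1 z - (laplace u).1 z with hq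
  have e0 : w * q + π = 0 := by rw [← h0, mcfOp_apply]
  set m := (timeDeriv (spaceDeriv ξ u)).1 z - (laplace (spaceDeriv ξ u)).1 z with hm
  have e1 : 2 * (t * σ * w) * q + w * m + 2 * (t * (t * σ * w + σ * π)) + β = 0 := by
    rw [← h1, linOp_apply, ← hp, hpξ', hk]
  rw [spaceDeriv_linOp_spaceDeriv] at h2
  simp only [coe_add_apply, coe_mul_apply, coe_sub_apply, coe_two_apply, coe_four_apply, hΓσσ,
    hΓuσ, hc1, hc2, ← hq, ← hm] at h2
  -- the linearized operator on the pinching form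
  have hΓX : ∀ f : SmoothST n, (gradInner f (algebraMap ℝ (SmoothST n) ⟪ξ, ξ⟫
      + spaceDeriv ξ u * spaceDeriv ξ u)).1 z = 2 * σ * (gradInner f (spaceDeriv ξ u)).1 z := by
    intro f
    have : gradInner f (algebraMap ℝ (SmoothST n) ⟪ξ, ξ⟫) = 0 := by simp [gradInner]
    rw [gradInner_add_right, this, zero_add, gradInner_mul_right]
    simp only [coe_add_apply, coe_mul_apply, ← hσ]
    ring
  have hLX : (linOp u (algebraMap ℝ (SmoothST n) ⟪ξ, ξ⟫
      + spaceDeriv ξ u * spaceDeriv ξ u)).1 z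
      = - 2 * w * (t ^ 2 * (G + σ ^ 2 * w)) + 2 * (t * σ * w) ^ 2 := by
    rw [linOp_add, linOp_algebraMap, zero_add, linOp_mul]
    simp only [coe_add_apply, coe_mul_apply, coe_sub_apply, coe_two_apply, coe_one_apply, hΓσσ,
      hΓuσ, h1, hΓuu]
    ring
  have hΓθσ : (gradInner θ (spaceDeriv ξ u)).1 z
      = t * ((spaceDeriv ξ θ).1 z + σ * (spaceDeriv p θ).1 z) := by
    rw [gradInner_comm, hΓσ]
  have hLP : (linOp u (pinch θ u ξ ξ)).1 z = (linOp u (spaceDeriv ξ (spaceDeriv ξ u))).1 z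
      - (t * (- 2 * w * (t ^ 2 * (G + σ ^ 2 * w)) + 2 * (t * σ * w) ^ 2) + G * (linOp u θ).1 z
        - 2 * w * (2 * σ * (t * ((spaceDeriv ξ θ).1 z + σ * (spaceDeriv p θ).1 z)))
        + 2 * (spaceDeriv p θ).1 z * (2 * σ * (t * σ * w))) := by
    rw [pinch, linOp_sub, linOp_mul]
    simp only [coe_add_apply, coe_mul_apply, coe_sub_apply, coe_two_apply, coe_one_apply, hLX,
      hΓX, hΓuσ, hΓθσ, hΓuu, coe_algebraMap_apply, ← hσ, ← ht,
      gradInner_apply u θ, ← hp]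
    rw [real_inner_self_eq_norm_sq, hG]
    ring
  have hLP' : (linOp u (pinch θ u ξ ξ)).1 z = w * ((timeDeriv (pinch θ u ξ ξ)).1 z
      - (laplace (pinch θ u ξ ξ)).1 z)
      + (spaceDeriv p (spaceDeriv p (pinch θ u ξ ξ))).1 z := by
    rw [linOp_apply, ← hp, (hS p 0).1, (hS _ 0).1]
    ring
  -- first derivative of the pinching form in the direction `ξ`
  have hJ : (spaceDeriv ξ (pinch θ u ξ p)).1 z = α - (spaceDeriv ξ θ).1 z * (σ * w)
      - t * (t * G * (w - 1) + σ * (t * σ * w)) := by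
    simp only [pinch, map_sub, map_add, Derivation.leibniz, Derivation.map_algebraMap, smul_eq_mul,
      coe_add_apply, coe_mul_apply, coe_sub_apply, coe_algebraMap_apply, zero_add, hξξ, hξp, hpp,
      ← hσ, ← ht, ← hα, real_inner_comm p ξ, hpξ]
    ring
  have hK : (pinch θ u p p).1 z = π - t * ((w - 1) * w) := by
    rw [pinch_apply, hpp, real_inner_self_eq_norm_sq, ← ht, ← hπ, hw]
    ring
  have htr := trace_second_order (pinch θ u ξ ξ) (pinch θ u ξ p) (pinch θ u p p) z p
    (ξ + σ • p) (t / w) (by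
      intro e
      have := (hS e ((-(t / w) * ⟪ξ + σ • p, e⟫) • p)).2
      rw [pinch_smul_right, pinch_smul_smul, Derivation.map_smul, coe_smul_apply,
        coe_smul_apply] at this
      exact this)
  have hyn : ‖ξ + σ • p‖ ^ 2 = G + σ ^ 2 * w := by
    rw [← real_inner_self_eq_norm_sq, inner_add_left, inner_add_right, inner_add_right,
      real_inner_smul_left, real_inner_smul_left, real_inner_smul_right, real_inner_smul_right,
      real_inner_comm p ξ, hpξ, real_inner_self_eq_norm_sq, real_inner_self_eq_norm_sq, hG, hw]
    ring
  have hyp : ⟪ξ + σ • p, p⟫ = σ * w := by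
    rw [inner_add_left, real_inner_smul_left, real_inner_comm, hpξ, real_inner_self_eq_norm_sq, hw]
    ring
  rw [← hw, hyn, hyp, spaceDeriv_add_apply, spaceDeriv_smul_apply, hJ, hK] at htr
  rw [hLP'] at hLP
  have hq' : q = -π / w := by field_simp; linarith
  have hm' : m = -(2 * (t * σ * w) * q + 2 * (t * (t * σ * w + σ * π)) + β) / w := by
    field_simp; linarith
  have hwT := mul_nonpos_of_nonneg_of_nonpos hwpos.le hT
  have key : 0 ≤ G * (linOp u θ).1 z := by
    set L := (linOp u θ).1 z
    set M := (linOp u (spaceDeriv ξ (spaceDeriv ξ u))).1 z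
    set T := (timeDeriv (pinch θ u ξ ξ)).1 z
    set Δ := (laplace (pinch θ u ξ ξ)).1 z
    set Q := (spaceDeriv p (spaceDeriv p (pinch θ u ξ ξ))).1 z
    set X := (spaceDeriv ξ θ).1 z
    set Y := (spaceDeriv p θ).1 z
    set Z := (spaceDeriv p (pinch θ u ξ p)).1 z
    rw [hm', hq'] at h2
    clear_value M Q X Y Z Δ L T G w
    refine htr.trans (le_of_sub_nonneg ?_)
    refine (neg_nonneg.2 hwT).trans (le_of_eq ?_)
    field_simp at h2 ⊢
    linear_combination -w * hLP - h2
  exact nonneg_of_mul_nonneg_right key hGpos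

end TouchingInequality

section Barrier

variable {n : ℕ}

theorem dirDeriv_eq_zero_of_eqOn {D : Set (EuclideanSpace ℝ (Fin n))} (hD : IsOpen D) {a b : ℝ}
    (hab : a < b) {f : SmoothST n} (hf : ∀ z ∈ D ×ˢ Set.Icc a b, f.1 z = 0)
    (v : EuclideanSpace ℝ (Fin n) × ℝ) : ∀ z ∈ D ×ˢ Set.Icc a b, (dirDeriv v f).1 z = 0 := by
  intro z hz
  have hu : UniqueDiffWithinAt ℝ (D ×ˢ Set.Icc a b) z :=
    (hD.uniqueDiffOn.prod (uniqueDiffOn_Icc hab)) z hz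
  have h1 : fderiv ℝ f.1 z = 0 := by
    rw [← (differentiable_coe f z).fderivWithin hu,
      fderivWithin_congr (f₁ := f.1) (f := fun _ => (0 : ℝ)) hf (hf z hz)]
    simp
  rw [dirDeriv_apply, h1]
  rfl

theorem linOp_smul (u f : SmoothST n) (c : ℝ) : linOp u (c • f) = c • linOp u f := by
  have h : ∀ g : SmoothST n, gradInner g (algebraMap ℝ _ c) = 0 := by
    intro g; simp [gradInner]
  have h' : ∀ g : SmoothST n, gradInner (algebraMap ℝ _ c) g = 0 := by
    intro g; rw [gradInner_comm, h]
  rw [Algebra.smul_def, linOp_mul, linOp_algebraMap, h, h', Algebra.smul_def]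
  ring

theorem continuous_spaceDeriv (f : SmoothST n) :
    Continuous fun q : (EuclideanSpace ℝ (Fin n) × ℝ) × EuclideanSpace ℝ (Fin n) =>
      (spaceDeriv q.2 f).1 q.1 := by
  have h := fun q : (EuclideanSpace ℝ (Fin n) × ℝ) × EuclideanSpace ℝ (Fin n) =>
    sum_mul_spaceDeriv_single q.2 f q.1
  rw [← funext h]
  refine continuous_finsetSum _ fun i _ => ?_
  exact (continuous_snd.inner continuous_const).mul
    ((continuous_coe _).comp continuous_fst)

theorem continuous_pinch (θ u : SmoothST n) :
    Continuous fun q : (EuclideanSpace ℝ (Fin n) × ℝ) × EuclideanSpace ℝ (Fin n) =>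
      (pinch θ u q.2 q.2).1 q.1 := by
  have h2 : Continuous fun q : (EuclideanSpace ℝ (Fin n) × ℝ) × EuclideanSpace ℝ (Fin n) =>
      (spaceDeriv q.2 (spaceDeriv q.2 u)).1 q.1 := by
    have h := fun q : (EuclideanSpace ℝ (Fin n) × ℝ) × EuclideanSpace ℝ (Fin n) =>
      sum_mul_spaceDeriv_single q.2 (spaceDeriv q.2 u) q.1
    rw [← funext h]
    refine continuous_finsetSum _ fun i _ => ?_
    simp only [dirDeriv_comm (EuclideanSpace.single i (1 : ℝ), (0 : ℝ))]
    exact (continuous_snd.inner continuous_const).mul (continuous_spaceDeriv _)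
  simp only [pinch_apply]
  exact h2.sub (((continuous_coe θ).comp continuous_fst).mul
    ((continuous_snd.inner continuous_snd).add
      ((continuous_spaceDeriv u).mul (continuous_spaceDeriv u))))

theorem pinch_nonneg_of_unit {θ u : SmoothST n} {z}
    (h : ∀ ξ : EuclideanSpace ℝ (Fin n), ‖ξ‖ = 1 → 0 ≤ (pinch θ u ξ ξ).1 z)
    (ξ : EuclideanSpace ℝ (Fin n)) : 0 ≤ (pinch θ u ξ ξ).1 z := by
  rcases eq_or_ne ξ 0 with rfl | hξ
  · have : pinch θ u 0 0 = 0 := by simpa using pinch_smul_smul θ u 0 0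
    rw [this]
    exact le_rfl
  · have h1 : ‖‖ξ‖⁻¹ • ξ‖ = 1 := by
      rw [norm_smul, norm_inv, norm_norm, inv_mul_cancel₀ (norm_ne_zero_iff.2 hξ)]
    have h2 : ξ = ‖ξ‖ • (‖ξ‖⁻¹ • ξ) := by
      rw [smul_smul, mul_inv_cancel₀ (norm_ne_zero_iff.2 hξ), one_smul]
    rw [h2, pinch_smul_smul, coe_smul_apply]
    exact mul_nonneg (sq_nonneg _) (h _ h1)

/-- The squared radius minus the squared distance to a point moving with velocity `q`. -/
noncomputable def tubeFun (x₁ q : EuclideanSpace ℝ (Fin n)) (t₁ r : ℝ) : SmoothST n :=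
  ⟨fun z => r ^ 2 - ‖z.1 - x₁ - (z.2 - t₁) • q‖ ^ 2, by
    change ContDiff ℝ ∞ _
    exact contDiff_const.sub (ContDiff.norm_sq ℝ (by fun_prop))⟩

/-- Exponential decay in time. -/
noncomputable def decay (t₁ K : ℝ) : SmoothST n :=
  ⟨fun z => Real.exp (-K * (z.2 - t₁)), by
    change ContDiff ℝ ∞ _
    fun_prop⟩

theorem spaceDeriv_tubeFun (x₁ q v : EuclideanSpace ℝ (Fin n)) (t₁ r : ℝ) (z) :
    (spaceDeriv v (tubeFun x₁ q t₁ r)).1 z = -2 * ⟪z.1 - x₁ - (z.2 - t₁) • q, v⟫ := by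
  have h := hasDerivAt_line (tubeFun x₁ q t₁ r) z (v, 0) 0
  rw [zero_smul, add_zero] at h
  have h2 : HasDerivAt (fun s : ℝ => r ^ 2 - ‖(z.1 - x₁ - (z.2 - t₁) • q) + s • v‖ ^ 2)
      (- (2 * ⟪(z.1 - x₁ - (z.2 - t₁) • q) + (0 : ℝ) • v, v⟫)) 0 := by
    have : HasDerivAt (fun s : ℝ => (z.1 - x₁ - (z.2 - t₁) • q) + s • v) v 0 := by
      simpa using ((hasDerivAt_id (0 : ℝ)).smul_const v).const_add (z.1 - x₁ - (z.2 - t₁) • q)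
    exact this.norm_sq.const_sub _
  have h3 := h.unique (h2.congr_of_eventuallyEq (Filter.Eventually.of_forall fun s => by
    simp only [tubeFun, Prod.fst_add, Prod.snd_add, Prod.smul_fst, Prod.smul_snd, smul_zero,
      add_zero]
    congr 3
    abel))
  rw [zero_smul, add_zero] at h3
  rw [h3]
  ring

theorem spaceDeriv_decay (v : EuclideanSpace ℝ (Fin n)) (t₁ K : ℝ) :
    spaceDeriv v (decay t₁ K) = 0 := by
  ext z
  have h := hasDerivAt_line (decay t₁ K) z (v, 0) 0
  rw [zero_smul, add_zero] at h
  exact h.unique (by simpa [decay] using hasDerivAt_const (0 : ℝ) (Real.exp (-K * (z.2 - t₁))))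

theorem timeDeriv_decay (t₁ K : ℝ) (z : EuclideanSpace ℝ (Fin n) × ℝ) :
    (timeDeriv (decay t₁ K)).1 z = -K * (decay t₁ K).1 z := by
  have h := hasDerivAt_line (decay t₁ K) z (0, 1) 0
  rw [zero_smul, add_zero] at h
  refine h.unique ?_
  have h1 : HasDerivAt (fun s : ℝ => -K * (z.2 + s - t₁)) (-K) 0 := by
    simpa using (((hasDerivAt_id (0 : ℝ)).const_add z.2).sub_const t₁).const_mul (-K)
  have := h1.exp
  simpa [decay, mul_comm] using this

theorem linOp_decay (u : SmoothST n) (t₁ K : ℝ) (z) :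
    (linOp u (decay t₁ K)).1 z = -K * (1 + ‖spaceGrad u z‖ ^ 2) * (decay t₁ K).1 z := by
  rw [linOp_apply]
  simp only [spaceDeriv_decay, laplace, map_zero, Finset.sum_const_zero, timeDeriv_decay]
  simp
  ring

/-- The barrier is a strict subsolution of the linearized equation for large decay rates. -/
theorem linOp_barrier_neg (u : SmoothST n) (x₁ q : EuclideanSpace ℝ (Fin n)) (t₁ r K C : ℝ)
    (hC : (2 * C + 8) ^ 2 < 32 * K * r ^ 2) (z)
    (hz : 0 ≤ (tubeFun x₁ q t₁ r).1 z) (hzC : (linOp u (tubeFun x₁ q t₁ r)).1 z ≤ C) :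
    (linOp u (decay t₁ K * (tubeFun x₁ q t₁ r * tubeFun x₁ q t₁ r))).1 z < 0 := by
  set s := tubeFun x₁ q t₁ r with hs
  set ζ := z.1 - x₁ - (z.2 - t₁) • q with hζ
  have hg : spaceGrad s z = (-2 : ℝ) • ζ := by
    refine ext_inner_right ℝ fun v => ?_
    rw [inner_spaceGrad, spaceDeriv_tubeFun, real_inner_smul_left]
  have hd : ∀ f : SmoothST n, gradInner f (decay t₁ K) = 0 := by
    intro f; simp [gradInner, spaceDeriv_decay]
  have hΓ : (gradInner s s).1 z = 4 * ‖ζ‖ ^ 2 := by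
    rw [gradInner_apply, hg, spaceDeriv_tubeFun, ← hζ, real_inner_smul_right,
      real_inner_self_eq_norm_sq]
    ring
  have hΓu : (gradInner u s).1 z = -2 * ⟪ζ, spaceGrad u z⟫ := by
    rw [gradInner_apply, spaceDeriv_tubeFun]
  have hn : (gradInner u u).1 z = ‖spaceGrad u z‖ ^ 2 := by
    rw [gradInner_apply, ← inner_spaceGrad, real_inner_self_eq_norm_sq]
  have hsv : s.1 z = r ^ 2 - ‖ζ‖ ^ 2 := rfl
  have hE : 0 < (decay t₁ K : SmoothST n).1 z := Real.exp_pos _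
  have hcs : ⟪ζ, spaceGrad u z⟫ ^ 2 ≤ ‖ζ‖ ^ 2 * ‖spaceGrad u z‖ ^ 2 := by
    rw [← mul_pow, ← sq_abs]
    exact pow_le_pow_left₀ (abs_nonneg _) (abs_real_inner_le_norm _ _) 2
  have hK : 0 < K := by
    by_contra hK
    nlinarith [sq_nonneg (2 * C + 8), mul_nonneg (not_lt.1 hK |> neg_nonneg.2) (sq_nonneg r)]
  rw [linOp_mul, hd u, gradInner_comm (decay t₁ K), hd, linOp_mul]
  simp only [coe_add_apply, coe_sub_apply, coe_mul_apply, coe_two_apply, coe_one_apply, hΓ, hΓu, hn,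
    linOp_decay, mul_zero, zero_mul, add_zero, sub_zero]
  set P := ‖spaceGrad u z‖ ^ 2
  have hP : 0 ≤ P := sq_nonneg _
  set I := ⟪ζ, spaceGrad u z⟫
  set L := (linOp u s).1 z
  set S := s.1 z
  set E := (decay t₁ K : SmoothST n).1 z
  have key : -K * (1 + P) * S ^ 2 + 2 * S * L - 8 * (1 + P) * ‖ζ‖ ^ 2 + 8 * I ^ 2 < 0 := by
    have hζ2 : ‖ζ‖ ^ 2 = r ^ 2 - S := by rw [hsv]; ring
    have h1 : S * L ≤ S * C := mul_le_mul_of_nonneg_left hzC hz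
    have h2 : 0 ≤ K * P * S ^ 2 := by positivity
    have h3 : -K * S ^ 2 + (2 * C + 8) * S - 8 * r ^ 2 < 0 := by
      have h4 : 0 ≤ (2 * K * S - (2 * C + 8)) ^ 2 := sq_nonneg _
      by_contra h5
      nlinarith [mul_nonneg hK.le (not_lt.1 h5)]
    nlinarith
  have := mul_neg_of_pos_of_neg hE key
  refine lt_of_eq_of_lt ?_ this
  ring

end Barrier

section Tube

variable {n : ℕ}

theorem isCompact_tube (x₁ q : EuclideanSpace ℝ (Fin n)) (t₁ t₂ r : ℝ) (hr : 0 ≤ r) :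
    IsCompact {z : EuclideanSpace ℝ (Fin n) × ℝ | z.2 ∈ Set.Icc t₁ t₂ ∧
      0 ≤ (tubeFun x₁ q t₁ r).1 z} := by
  have hK : IsCompact ((fun y : EuclideanSpace ℝ (Fin n) × ℝ => (y.1 + x₁ + (y.2 - t₁) • q, y.2)) ''
      (Metric.closedBall 0 r ×ˢ Set.Icc t₁ t₂)) :=
    ((isCompact_closedBall 0 r).prod isCompact_Icc).image (by fun_prop)
  refine hK.of_isClosed_subset ?_ ?_
  · exact (isClosed_Icc.preimage continuous_snd).inter
      (isClosed_le continuous_const (continuous_coe _))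
  · rintro z ⟨hz, hz'⟩
    refine ⟨(z.1 - x₁ - (z.2 - t₁) • q, z.2), ⟨?_, hz⟩, ?_⟩
    · rw [mem_closedBall_zero_iff]
      exact pow_le_pow_iff_left₀ (norm_nonneg _) hr two_ne_zero |>.1 (sub_nonneg.1 hz')
    · ext1
      · dsimp only
        abel
      · rfl

theorem pinch_add_sub_apply (θ ψ u : SmoothST n) (m : ℝ) (ξ : EuclideanSpace ℝ (Fin n)) (z) :
    (pinch (θ + ψ - algebraMap ℝ _ m) u ξ ξ).1 z = (pinch θ u ξ ξ).1 z
      - (ψ.1 z - m) * (‖ξ‖ ^ 2 + (spaceDeriv ξ u).1 z ^ 2) := by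
  simp only [pinch_apply, coe_sub_apply, coe_add_apply, coe_algebraMap_apply,
    real_inner_self_eq_norm_sq]
  ring

/-- Strict pinching propagates along thin space-time tubes. -/
theorem pinch_pos_of_tube {D : Set (EuclideanSpace ℝ (Fin n))} (hD : IsOpen D) {a b : ℝ}
    (hab : a < b) (u : SmoothST n) (hu : ∀ z ∈ D ×ˢ Set.Icc a b, (mcfOp u).1 z = 0) (c : ℝ)
    (hN : ∀ z ∈ D ×ˢ Set.Icc a b, ∀ ξ, 0 ≤ (pinch (c • timeDeriv u) u ξ ξ).1 z)
    (x₁ q : EuclideanSpace ℝ (Fin n)) {t₁ t₂ r : ℝ} (ht₁ : a ≤ t₁) (ht : t₁ < t₂) (ht₂ : t₂ ≤ b)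
    (hr : 0 < r) (htube : ∀ t ∈ Set.Icc t₁ t₂, ∀ x, ‖x - x₁ - (t - t₁) • q‖ ≤ r → x ∈ D)
    (hinit : ∀ x ∈ Metric.closedBall x₁ r, ∀ ξ ≠ 0,
      0 < (pinch (c • timeDeriv u) u ξ ξ).1 (x, t₁)) :
    ∀ ξ ≠ 0, 0 < (pinch (c • timeDeriv u) u ξ ξ).1 (x₁ + (t₂ - t₁) • q, t₂) := by
  set θ := c • timeDeriv u with hθ
  set s := tubeFun x₁ q t₁ r with hs
  set T := {z : EuclideanSpace ℝ (Fin n) × ℝ | z.2 ∈ Set.Icc t₁ t₂ ∧ 0 ≤ s.1 z} with hT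
  have hTc : IsCompact T := isCompact_tube x₁ q t₁ t₂ r hr.le
  have hsr : ∀ z, 0 ≤ s.1 z ↔ ‖z.1 - x₁ - (z.2 - t₁) • q‖ ≤ r := fun z => by
    rw [hs, tubeFun, sub_nonneg, pow_le_pow_iff_left₀ (norm_nonneg _) hr.le two_ne_zero]
  have hTD : ∀ z ∈ T, z ∈ D ×ˢ Set.Icc a b := fun z hz =>
    ⟨htube z.2 hz.1 z.1 ((hsr z).1 hz.2), ht₁.trans hz.1.1, hz.1.2.trans ht₂⟩
  set g : (EuclideanSpace ℝ (Fin n) × ℝ) × EuclideanSpace ℝ (Fin n) → ℝ :=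
    fun y => ‖y.2‖ ^ 2 + (spaceDeriv y.2 u).1 y.1 ^ 2 with hg
  have hgc : Continuous g := (continuous_snd.norm.pow 2).add ((continuous_spaceDeriv u).pow 2)
  have hgpos : ∀ z ξ, ξ ≠ 0 → 0 < g (z, ξ) := fun z ξ hξ => by
    have := norm_pos_iff.2 hξ
    positivity
  have hunit : ∀ ξ ∈ Metric.sphere (0 : EuclideanSpace ℝ (Fin n)) 1, ξ ≠ 0 := fun ξ hξ =>
    ne_zero_of_mem_unit_sphere ⟨ξ, hξ⟩
  -- constants
  obtain ⟨δ, hδ, hδ'⟩ : ∃ δ > 0, ∀ y ∈ (Metric.closedBall x₁ r ×ˢ {t₁}) ×ˢ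
      Metric.sphere (0 : EuclideanSpace ℝ (Fin n)) 1, δ ≤ (pinch θ u y.2 y.2).1 y.1 / g y := by
    refine IsCompact.exists_forall_le' (((isCompact_closedBall x₁ r).prod isCompact_singleton).prod
      (isCompact_sphere 0 1)) ?_ ?_
    · exact (continuous_pinch θ u).continuousOn.div hgc.continuousOn
        fun y hy => (hgpos y.1 y.2 (hunit _ hy.2)).ne'
    · rintro ⟨⟨x, t⟩, ξ⟩ ⟨⟨hx, rfl : t = t₁⟩, hξ⟩
      exact div_pos (hinit x hx ξ (hunit _ hξ)) (hgpos _ _ (hunit _ hξ))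
  obtain ⟨C, hC⟩ := hTc.bddAbove_image (continuous_coe (linOp u s)).continuousOn
  obtain ⟨K, hK⟩ : ∃ K : ℝ, (2 * C + 8) ^ 2 < 32 * K * r ^ 2 := by
    refine ⟨((2 * C + 8) ^ 2 + 1) / (32 * r ^ 2), ?_⟩
    have : 32 * (((2 * C + 8) ^ 2 + 1) / (32 * r ^ 2)) * r ^ 2 = (2 * C + 8) ^ 2 + 1 := by
      field_simp
    linarith
  set ε := δ / r ^ 4 with hε
  have hεpos : 0 < ε := by positivity
  set ψ := ε • (decay t₁ K * (s * s)) with hψ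
  have hψv : ∀ z, ψ.1 z = ε * (Real.exp (-K * (z.2 - t₁)) * (s.1 z * s.1 z)) := fun z => rfl
  have hψneg : ∀ z ∈ T, (linOp u ψ).1 z < 0 := fun z hz => by
    rw [hψ, linOp_smul, coe_smul_apply]
    exact mul_neg_of_pos_of_neg hεpos (linOp_barrier_neg u x₁ q t₁ r K C hK z hz.2
      (hC ⟨z, hz, rfl⟩))
  -- the barrier stays below the pinching quotient
  have main : ∀ y ∈ T ×ˢ Metric.sphere (0 : EuclideanSpace ℝ (Fin n)) 1,
      0 ≤ (pinch θ u y.2 y.2).1 y.1 / g y - ψ.1 y.1 := by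
    intro y₀ hy₀
    obtain ⟨⟨z, ξ⟩, ⟨hz, hξ⟩, hmin⟩ := (hTc.prod (isCompact_sphere 0 1)).exists_isMinOn ⟨y₀, hy₀⟩
      (f := fun y : (EuclideanSpace ℝ (Fin n) × ℝ) × EuclideanSpace ℝ (Fin n) =>
        (pinch θ u y.2 y.2).1 y.1 / g y - ψ.1 y.1)
      (((continuous_pinch θ u).continuousOn.div hgc.continuousOn
        fun y hy => (hgpos y.1 y.2 (hunit _ hy.2)).ne').sub
        ((continuous_coe ψ).comp continuous_fst).continuousOn)
    rw [isMinOn_iff] at hmin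
    refine le_trans ?_ (hmin y₀ hy₀)
    by_contra! hneg
    dsimp only at hneg hz hξ
    have hξ0 := hunit ξ hξ
    set m := -((pinch θ u ξ ξ).1 z / g (z, ξ) - ψ.1 z) with hm
    have hq : (pinch θ u ξ ξ).1 z / g (z, ξ) = ψ.1 z - m := by rw [hm]; ring
    have hpin : ∀ z' ∈ T, ∀ η, 0 ≤ (pinch (θ + ψ - algebraMap ℝ _ m) u η η).1 z' := by
      intro z' hz'
      refine pinch_nonneg_of_unit fun η hη => ?_
      have hη' : η ∈ Metric.sphere (0 : EuclideanSpace ℝ (Fin n)) 1 := by simpa using hη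
      have h1 : (pinch θ u ξ ξ).1 z / g (z, ξ) - ψ.1 z
        ≤ (pinch θ u η η).1 z' / g (z', η) - ψ.1 z' := hmin (z', η) ⟨hz', hη'⟩
      have h2 : ψ.1 z' - m ≤ (pinch θ u η η).1 z' / g (z', η) := by rw [hm]; linarith
      rw [le_div_iff₀ (hgpos _ _ (hunit _ hη'))] at h2
      rw [pinch_add_sub_apply]
      exact sub_nonneg.2 h2
    have hnull : (pinch (θ + ψ - algebraMap ℝ _ m) u ξ ξ).1 z = 0 := by
      rw [div_eq_iff (hgpos _ _ hξ0).ne'] at hq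
      rw [pinch_add_sub_apply, hq]
      exact sub_self _
    have hquot : 0 ≤ (pinch θ u ξ ξ).1 z / g (z, ξ) :=
      div_nonneg (hN z (hTD z hz) ξ) (hgpos _ _ hξ0).le
    have hs_pos : 0 < s.1 z := by
      refine lt_of_le_of_ne hz.2 fun h0 => ?_
      have : ψ.1 z = 0 := by rw [hψv, ← h0]; ring
      rw [this] at hneg
      linarith
    have ht_pos : t₁ < z.2 := by
      refine lt_of_le_of_ne hz.1.1 fun h0 => ?_
      have hx : z.1 ∈ Metric.closedBall x₁ r := by
        have := (hsr z).1 hz.2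
        rw [← h0, sub_self, zero_smul, sub_zero] at this
        rwa [mem_closedBall_iff_norm]
      have h1 := hδ' (z, ξ) ⟨⟨hx, h0.symm⟩, hξ⟩
      have h2 : ψ.1 z ≤ δ := by
        rw [hψv, ← h0, sub_self, mul_zero, Real.exp_zero, one_mul, hε, div_mul_eq_mul_div,
          div_le_iff₀ (by positivity)]
        have hsle : s.1 z ≤ r ^ 2 := by
          have := sq_nonneg ‖z.1 - x₁ - (z.2 - t₁) • q‖
          change r ^ 2 - _ ≤ r ^ 2
          linarith
        have := mul_le_mul hsle hsle hz.2 (sq_nonneg r)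
        refine mul_le_mul_of_nonneg_left ?_ hδ.le
        linarith
      dsimp only at h1
      linarith
    have hev : ∀ᶠ z' in 𝓝 z, z'.2 ≤ z.2 →
        ∀ η, 0 ≤ (pinch (θ + ψ - algebraMap ℝ _ m) u η η).1 z' := by
      filter_upwards [(continuous_coe s).continuousAt.eventually_const_lt hs_pos,
        continuous_snd.continuousAt.eventually_const_lt ht_pos] with z' h1 h2 h3
      exact hpin z' ⟨⟨h2.le, h3.trans hz.1.2⟩, h1.le⟩
    have hlin : ∀ v, ∀ z ∈ D ×ˢ Set.Icc a b, (linOp u (dirDeriv v u)).1 z = 0 := fun v => by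
      rw [← dirDeriv_mcfOp]
      exact dirDeriv_eq_zero_of_eqOn hD hab hu v
    have hfin := linOp_nonneg_of_touching _ u z ξ hξ0 (hu z (hTD z hz)) (hlin _ z (hTD z hz))
      (dirDeriv_eq_zero_of_eqOn hD hab (hlin (ξ, 0)) (ξ, 0) z (hTD z hz)) hev hnull
    rw [linOp_sub, linOp_algebraMap, sub_zero, linOp_add, hθ, linOp_smul, coe_add_apply,
      coe_smul_apply, hlin _ z (hTD z hz), mul_zero, zero_add] at hfin
    exact (hψneg z hz).not_ge hfin
  intro ξ hξ
  set z₂ : EuclideanSpace ℝ (Fin n) × ℝ := (x₁ + (t₂ - t₁) • q, t₂) with hz₂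
  have hs₂ : s.1 z₂ = r ^ 2 := by
    simp [hs, tubeFun, hz₂]
  have hz₂T : z₂ ∈ T := ⟨⟨ht.le, le_rfl⟩, by rw [hs₂]; positivity⟩
  have hψ₂ : 0 < ψ.1 z₂ := by
    rw [hψv, hs₂]
    have := Real.exp_pos (-K * (z₂.2 - t₁))
    positivity
  have hunit' : ‖‖ξ‖⁻¹ • ξ‖ = 1 := by
    rw [norm_smul, norm_inv, norm_norm, inv_mul_cancel₀ (norm_ne_zero_iff.2 hξ)]
  have h1 := main (z₂, ‖ξ‖⁻¹ • ξ) ⟨hz₂T, by simpa using hunit'⟩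
  have hgp := hgpos z₂ (‖ξ‖⁻¹ • ξ) (by
    rw [← norm_ne_zero_iff, hunit']; exact one_ne_zero)
  have h2 : 0 < (pinch θ u (‖ξ‖⁻¹ • ξ) (‖ξ‖⁻¹ • ξ)).1 z₂ := by
    have : 0 < (pinch θ u (‖ξ‖⁻¹ • ξ) (‖ξ‖⁻¹ • ξ)).1 z₂ / g (z₂, ‖ξ‖⁻¹ • ξ) := by
      dsimp only at h1
      linarith
    exact (div_pos_iff_of_pos_right hgp).1 this
  rw [pinch_smul_smul, coe_smul_apply] at h2
  exact pos_of_mul_pos_right h2 (sq_nonneg _)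

end Tube

section Propagation

variable {n : ℕ}

theorem eventually_pinch_pos {θ u : SmoothST n} {z}
    (h : ∀ ξ ≠ 0, 0 < (pinch θ u ξ ξ).1 z) :
    ∀ᶠ z' in 𝓝 z, ∀ ξ ≠ 0, 0 < (pinch θ u ξ ξ).1 z' := by
  have h1 : ∀ᶠ z' in 𝓝 z, ∀ ξ ∈ Metric.sphere (0 : EuclideanSpace ℝ (Fin n)) 1,
      0 < (pinch θ u ξ ξ).1 z' :=
    (isCompact_sphere 0 1).eventually_forall_of_forall_eventually fun ξ hξ =>
      (continuous_pinch θ u).continuousAt.eventually_const_lt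
        (h ξ (ne_zero_of_mem_unit_sphere ⟨ξ, hξ⟩))
  filter_upwards [h1] with z' hz' ξ hξ
  have h2 := hz' (‖ξ‖⁻¹ • ξ) (by
    rw [mem_sphere_zero_iff_norm, norm_smul, norm_inv, norm_norm,
      inv_mul_cancel₀ (norm_ne_zero_iff.2 hξ)])
  rw [pinch_smul_smul, coe_smul_apply] at h2
  exact pos_of_mul_pos_right h2 (sq_nonneg _)

/-- Strict pinching at one point propagates to all later times on a connected domain. -/
theorem pinch_pos_of_pinch_pos {D : Set (EuclideanSpace ℝ (Fin n))} (hD : IsOpen D)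
    (hDc : IsPreconnected D) {a b : ℝ}
    (hab : a < b) (u : SmoothST n) (hu : ∀ z ∈ D ×ˢ Set.Icc a b, (mcfOp u).1 z = 0) (c : ℝ)
    (hN : ∀ z ∈ D ×ˢ Set.Icc a b, ∀ ξ, 0 ≤ (pinch (c • timeDeriv u) u ξ ξ).1 z)
    {x y : EuclideanSpace ℝ (Fin n)} (hx : x ∈ D) (hy : y ∈ D) {t₁ t₂ : ℝ} (ht₁ : a ≤ t₁)
    (ht : t₁ < t₂) (ht₂ : t₂ ≤ b)
    (hpos : ∀ ξ ≠ 0, 0 < (pinch (c • timeDeriv u) u ξ ξ).1 (x, t₁)) :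
    ∀ ξ ≠ 0, 0 < (pinch (c • timeDeriv u) u ξ ξ).1 (y, t₂) := by
  set θ := c • timeDeriv u with hθ
  let P : EuclideanSpace ℝ (Fin n) → EuclideanSpace ℝ (Fin n) → Prop := fun x y =>
    ∀ t₁ t₂, a ≤ t₁ → t₁ < t₂ → t₂ ≤ b → (∀ ξ ≠ 0, 0 < (pinch θ u ξ ξ).1 (x, t₁)) →
      ∀ ξ ≠ 0, 0 < (pinch θ u ξ ξ).1 (y, t₂)
  have hP : P x y := by
    refine hDc.induction₂' P ?_ ?_ hx hy
    · intro x hx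
      obtain ⟨ρ, hρ, hball⟩ := Metric.isOpen_iff.1 hD x hx
      have local_step : ∀ x₁ ∈ Metric.ball x (ρ / 2), ∀ x₂ ∈ Metric.ball x (ρ / 2), P x₁ x₂ := by
        intro x₁ hx₁ x₂ hx₂ t₁ t₂ ht₁ ht ht₂ h
        have hev : ∀ᶠ y in 𝓝 x₁, ∀ ξ ≠ 0, 0 < (pinch θ u ξ ξ).1 (y, t₁) :=
          (Continuous.prodMk_left t₁).continuousAt.eventually (eventually_pinch_pos h)
        obtain ⟨r, hr, hr'⟩ := Metric.nhds_basis_closedBall.eventually_iff.1 hev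
        have ht' : 0 < t₂ - t₁ := sub_pos.2 ht
        have := pinch_pos_of_tube hD hab u hu c hN x₁ ((t₂ - t₁)⁻¹ • (x₂ - x₁)) ht₁ ht ht₂
          (r := min r (ρ / 2)) (by positivity) ?_ ?_
        · rwa [smul_smul, mul_inv_cancel₀ ht'.ne', one_smul, add_sub_cancel] at this
        · intro t htt y hy
          refine hball ?_
          have hseg : x₁ + (t - t₁) • (t₂ - t₁)⁻¹ • (x₂ - x₁) ∈ Metric.ball x (ρ / 2) := by
            rw [smul_smul, ← div_eq_mul_inv]
            refine (convex_ball x (ρ / 2)).add_smul_sub_mem hx₁ hx₂ ⟨?_, ?_⟩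
            · exact div_nonneg (sub_nonneg.2 htt.1) ht'.le
            · rw [div_le_one ht']
              linarith [htt.2]
          rw [sub_sub, ← dist_eq_norm] at hy
          rw [Metric.mem_ball] at hseg ⊢
          have := dist_triangle y (x₁ + (t - t₁) • (t₂ - t₁)⁻¹ • (x₂ - x₁)) x
          have := min_le_right r (ρ / 2)
          linarith
        · intro y hy
          exact hr' (Metric.closedBall_subset_closedBall (min_le_left _ _) hy)
      have hx' : x ∈ Metric.ball x (ρ / 2) := Metric.mem_ball_self (by positivity)
      filter_upwards [nhdsWithin_le_nhds (Metric.ball_mem_nhds x (half_pos hρ))] with y hy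
      exact ⟨local_step x hx' y hy, local_step y hy x hx'⟩
    · intro x y z _ _ _ hxy hyz t₁ t₂ ht₁ ht ht₂ h
      exact hyz ((t₁ + t₂) / 2) t₂ (by linarith) (by linarith) ht₂
        (hxy t₁ ((t₁ + t₂) / 2) ht₁ (by linarith) (by linarith) h)
  exact hP t₁ t₂ ht₁ ht ht₂ hpos

end Propagation

section Extension

/-- A function that is smooth near a closed set agrees near that set with a globally smooth
function. -/
theorem exists_smooth_extension {X : Type*} [NormedAddCommGroup X] [NormedSpace ℝ X]
    [FiniteDimensional ℝ X] {K V : Set X} (hK : IsClosed K) (hV : IsOpen V) (hKV : K ⊆ V)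
    {u : X → ℝ} (hu : ContDiffOn ℝ ∞ u V) :
    ∃ U : smoothAlgebra X, ∀ z ∈ K, u =ᶠ[𝓝 z] U.1 := by
  obtain ⟨χ, h0, h1, -⟩ := exists_contMDiffMap_zero_one_nhds_of_isClosed (n := ⊤)
    (modelWithCornersSelf ℝ X) hV.isClosed_compl hK (Set.disjoint_compl_left_iff_subset.2 hKV)
  have hχ : ContDiff ℝ ∞ χ := χ.contMDiff.contDiff
  refine ⟨⟨fun z => χ z * u z, ?_⟩, ?_⟩
  · change ContDiff ℝ ∞ _
    refine contDiff_iff_contDiffAt.2 fun z => ?_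
    by_cases hz : z ∈ V
    · exact hχ.contDiffAt.mul (hu.contDiffAt (hV.mem_nhds hz))
    · refine contDiffAt_const (c := (0 : ℝ)) |>.congr_of_eventuallyEq ?_
      filter_upwards [Filter.Eventually.filter_mono (nhds_le_nhdsSet hz) h0] with y hy
      rw [hy, zero_mul]
  · intro z hz
    filter_upwards [Filter.Eventually.filter_mono (nhds_le_nhdsSet hz) h1] with y hy
    simp [hy]

end Extension

section Bridge

variable {n : ℕ}

theorem hasFDerivAt_slice (U : SmoothST n) (x : EuclideanSpace ℝ (Fin n)) (t : ℝ) :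
    HasFDerivAt (fun y => U.1 (y, t))
      ((fderiv ℝ U.1 (x, t)).comp (ContinuousLinearMap.inl ℝ (EuclideanSpace ℝ (Fin n)) ℝ)) x :=
  (differentiable_coe U (x, t)).hasFDerivAt.comp x (hasFDerivAt_prodMk_left x t)

theorem gradient_slice (U : SmoothST n) (x : EuclideanSpace ℝ (Fin n)) (t : ℝ) :
    gradient (fun y => U.1 (y, t)) x = spaceGrad U (x, t) := by
  refine ext_inner_right ℝ fun v => ?_
  rw [inner_spaceGrad, gradient, InnerProductSpace.toDual_symm_apply,
    (hasFDerivAt_slice U x t).fderiv]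
  rfl

theorem inner_hess_slice (U : SmoothST n) (x : EuclideanSpace ℝ (Fin n)) (t : ℝ)
    (ξ η : EuclideanSpace ℝ (Fin n)) :
    ⟪hess (fun y => U.1 (y, t)) x ξ, η⟫ = (spaceDeriv ξ (spaceDeriv η U)).1 (x, t) := by
  have hg : gradient (fun y => U.1 (y, t)) = fun y => spaceGrad U (y, t) :=
    funext fun y => gradient_slice U y t
  have hd : DifferentiableAt ℝ (fun y => spaceGrad U (y, t)) x := by
    rw [differentiableAt_euclidean]
    intro i
    exact (hasFDerivAt_slice (spaceDeriv (EuclideanSpace.single i 1) U) x t).differentiableAt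
  have h2 : (fun y => ⟪spaceGrad U (y, t), η⟫) = fun y => (spaceDeriv η U).1 (y, t) :=
    funext fun y => inner_spaceGrad U (y, t) η
  have h1 := fderiv_inner_apply ℝ hd (differentiableAt_const (c := η)) ξ
  rw [h2, (hasFDerivAt_slice (spaceDeriv η U) x t).fderiv, fderiv_const_apply,
    _root_.zero_apply, inner_zero_right, zero_add] at h1
  rw [hess, hg, ← h1]
  rfl

theorem deriv_slice (U : SmoothST n) (x : EuclideanSpace ℝ (Fin n)) (t : ℝ) :
    deriv (fun s => U.1 (x, s)) t = (timeDeriv U).1 (x, t) := by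
  have h := (differentiable_coe U (x, t)).hasFDerivAt.comp_hasDerivAt t
    ((hasDerivAt_const t x).prodMk (hasDerivAt_id t))
  exact h.deriv

theorem lap_slice (U : SmoothST n) (x : EuclideanSpace ℝ (Fin n)) (t : ℝ) :
    lap (fun y => U.1 (y, t)) x = (laplace U).1 (x, t) := by
  simp only [lap, inner_hess_slice, laplace, coe_sum_apply]

theorem gradient_congr {f g : EuclideanSpace ℝ (Fin n) → ℝ} {x} (h : f =ᶠ[𝓝 x] g) :
    gradient f x = gradient g x := by
  rw [gradient, gradient, h.fderiv_eq]

theorem hess_congr {f g : EuclideanSpace ℝ (Fin n) → ℝ} {x} (h : f =ᶠ[𝓝 x] g) :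
    hess f x = hess g x := by
  have : gradient f =ᶠ[𝓝 x] gradient g :=
    h.eventuallyEq_nhds.mono fun y hy => gradient_congr hy
  funext ξ
  rw [hess, hess, this.fderiv_eq]

theorem lap_congr {f g : EuclideanSpace ℝ (Fin n) → ℝ} {x} (h : f =ᶠ[𝓝 x] g) :
    lap f x = lap g x := by
  rw [lap, lap, hess_congr h]

theorem graphH_congr {f g : EuclideanSpace ℝ (Fin n) → ℝ} {x} (h : f =ᶠ[𝓝 x] g) :
    graphH f x = graphH g x := by
  rw [graphH, graphH, hess_congr h, gradient_congr h, lap_congr h]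

theorem graphKappa1_congr {f g : EuclideanSpace ℝ (Fin n) → ℝ} {x} (h : f =ᶠ[𝓝 x] g) :
    graphKappa1 f x = graphKappa1 g x := by
  rw [graphKappa1, graphKappa1, hess_congr h, gradient_congr h]

theorem graphH_slice (U : SmoothST n) (x : EuclideanSpace ℝ (Fin n)) (t : ℝ)
    (h0 : (mcfOp U).1 (x, t) = 0) :
    graphH (fun y => U.1 (y, t)) x
      = (timeDeriv U).1 (x, t) / Real.sqrt (1 + ‖spaceGrad U (x, t)‖ ^ 2) := by
  rw [mcfOp_apply] at h0
  rw [graphH, gradient_slice, lap_slice, real_inner_comm, inner_hess_slice]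
  have hW : 0 < Real.sqrt (1 + ‖spaceGrad U (x, t)‖ ^ 2) := Real.sqrt_pos.2 (by positivity)
  have hW2 : Real.sqrt (1 + ‖spaceGrad U (x, t)‖ ^ 2) ^ 2 = 1 + ‖spaceGrad U (x, t)‖ ^ 2 :=
    Real.sq_sqrt (by positivity)
  rw [div_eq_div_iff (by positivity) hW.ne', pow_succ _ 2, hW2]
  linear_combination (-Real.sqrt (1 + ‖spaceGrad U (x, t)‖ ^ 2)) * h0

theorem graphKappa1_slice (U : SmoothST n) (x : EuclideanSpace ℝ (Fin n)) (t : ℝ) :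
    graphKappa1 (fun y => U.1 (y, t)) x = sInf {r : ℝ | ∃ ξ : EuclideanSpace ℝ (Fin n), ξ ≠ 0 ∧
      r = (spaceDeriv ξ (spaceDeriv ξ U)).1 (x, t) / (Real.sqrt (1 + ‖spaceGrad U (x, t)‖ ^ 2) *
        (‖ξ‖ ^ 2 + (spaceDeriv ξ U).1 (x, t) ^ 2))} := by
  simp only [graphKappa1, gradient_slice, inner_hess_slice, inner_spaceGrad]

theorem graphKappa1_slice_le (U : SmoothST n) (x : EuclideanSpace ℝ (Fin n)) (t : ℝ)
    {ξ : EuclideanSpace ℝ (Fin n)} (hξ : ξ ≠ 0) :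
    graphKappa1 (fun y => U.1 (y, t)) x ≤ (spaceDeriv ξ (spaceDeriv ξ U)).1 (x, t) /
      (Real.sqrt (1 + ‖spaceGrad U (x, t)‖ ^ 2) *
        (‖ξ‖ ^ 2 + (spaceDeriv ξ U).1 (x, t) ^ 2)) := by
  rw [graphKappa1_slice]
  refine csInf_le ⟨-‖fderiv ℝ (gradient fun y => U.1 (y, t)) x‖, ?_⟩ ⟨ξ, hξ, rfl⟩
  rintro r ⟨η, hη, rfl⟩
  have hη' := norm_pos_iff.2 hη
  have hW : 1 ≤ Real.sqrt (1 + ‖spaceGrad U (x, t)‖ ^ 2) :=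
    Real.one_le_sqrt.2 (by nlinarith [sq_nonneg ‖spaceGrad U (x, t)‖])
  rw [le_div_iff₀ (by positivity), ← inner_hess_slice, hess]
  set L := fderiv ℝ (gradient fun y => U.1 (y, t)) x
  have h1 : -(‖L‖ * ‖η‖ ^ 2) ≤ ⟪L η, η⟫ := by
    have h2 := (abs_le.1 (abs_real_inner_le_norm (L η) η)).1
    have h3 := mul_le_mul_of_nonneg_right (L.le_opNorm η) (norm_nonneg η)
    nlinarith
  refine le_trans ?_ h1
  rw [neg_mul, neg_le_neg_iff]
  refine mul_le_mul_of_nonneg_left ?_ (norm_nonneg L)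
  nlinarith [sq_nonneg ((spaceDeriv η U).1 (x, t)), sq_nonneg ‖η‖]

end Bridge

section Ratio

variable {n : ℕ}

theorem mul_le_mul_graphKappa1 (U : SmoothST n) (x : EuclideanSpace ℝ (Fin n)) (t : ℝ)
    {ξ : EuclideanSpace ℝ (Fin n)} (hξ : ξ ≠ 0) :
    graphKappa1 (fun y => U.1 (y, t)) x * Real.sqrt (1 + ‖spaceGrad U (x, t)‖ ^ 2)
        * (‖ξ‖ ^ 2 + (spaceDeriv ξ U).1 (x, t) ^ 2)
      ≤ (spaceDeriv ξ (spaceDeriv ξ U)).1 (x, t) := by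
  have := norm_pos_iff.2 hξ
  have hW : 0 < Real.sqrt (1 + ‖spaceGrad U (x, t)‖ ^ 2) := Real.sqrt_pos.2 (by positivity)
  have h := graphKappa1_slice_le U x t hξ
  rwa [le_div_iff₀ (by positivity), ← mul_assoc] at h

theorem pinch_smul_timeDeriv_apply (U : SmoothST n) (c : ℝ) (ξ : EuclideanSpace ℝ (Fin n)) (z) :
    (pinch (c • timeDeriv U) U ξ ξ).1 z = (spaceDeriv ξ (spaceDeriv ξ U)).1 z
      - c * (timeDeriv U).1 z * (‖ξ‖ ^ 2 + (spaceDeriv ξ U).1 z ^ 2) := by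
  rw [pinch_apply, coe_smul_apply, real_inner_self_eq_norm_sq, sq ((spaceDeriv ξ U).1 z)]

theorem timeDeriv_eq_graphH_mul (U : SmoothST n) (x : EuclideanSpace ℝ (Fin n)) (t : ℝ)
    (h0 : (mcfOp U).1 (x, t) = 0) :
    (timeDeriv U).1 (x, t) = graphH (fun y => U.1 (y, t)) x
      * Real.sqrt (1 + ‖spaceGrad U (x, t)‖ ^ 2) := by
  rw [graphH_slice U x t h0, div_mul_cancel₀]
  exact (Real.sqrt_pos.2 (by positivity)).ne'

theorem pinch_nonneg_of_le_ratio (U : SmoothST n) (x : EuclideanSpace ℝ (Fin n)) (t c : ℝ)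
    (h0 : (mcfOp U).1 (x, t) = 0) (hpos : 0 < graphH (fun y => U.1 (y, t)) x)
    (hc : c ≤ graphKappa1 (fun y => U.1 (y, t)) x / graphH (fun y => U.1 (y, t)) x)
    (ξ : EuclideanSpace ℝ (Fin n)) : 0 ≤ (pinch (c • timeDeriv U) U ξ ξ).1 (x, t) := by
  refine pinch_nonneg_of_unit (fun ξ hξ => ?_) ξ
  rw [pinch_smul_timeDeriv_apply, timeDeriv_eq_graphH_mul U x t h0, sub_nonneg]
  refine le_trans ?_ (mul_le_mul_graphKappa1 U x t (by
    rw [← norm_ne_zero_iff, hξ]; exact one_ne_zero))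
  rw [le_div_iff₀ hpos] at hc
  rw [← mul_assoc c]
  gcongr

theorem pinch_pos_of_lt_ratio (U : SmoothST n) (x : EuclideanSpace ℝ (Fin n)) (t c : ℝ)
    (h0 : (mcfOp U).1 (x, t) = 0) (hpos : 0 < graphH (fun y => U.1 (y, t)) x)
    (hc : c < graphKappa1 (fun y => U.1 (y, t)) x / graphH (fun y => U.1 (y, t)) x)
    (ξ : EuclideanSpace ℝ (Fin n)) (hξ : ξ ≠ 0) :
    0 < (pinch (c • timeDeriv U) U ξ ξ).1 (x, t) := by
  rw [pinch_smul_timeDeriv_apply, timeDeriv_eq_graphH_mul U x t h0, sub_pos]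
  refine lt_of_lt_of_le ?_ (mul_le_mul_graphKappa1 U x t hξ)
  rw [lt_div_iff₀ hpos] at hc
  rw [← mul_assoc c]
  have := norm_pos_iff.2 hξ
  have hW : 0 < Real.sqrt (1 + ‖spaceGrad U (x, t)‖ ^ 2) := Real.sqrt_pos.2 (by positivity)
  gcongr

theorem lt_ratio_of_pinch_pos [Nonempty (Fin n)] (U : SmoothST n)
    (x : EuclideanSpace ℝ (Fin n)) (t c : ℝ)
    (h0 : (mcfOp U).1 (x, t) = 0) (hpos : 0 < graphH (fun y => U.1 (y, t)) x)
    (h : ∀ ξ ≠ 0, 0 < (pinch (c • timeDeriv U) U ξ ξ).1 (x, t)) :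
    c < graphKappa1 (fun y => U.1 (y, t)) x / graphH (fun y => U.1 (y, t)) x := by
  have hW : 0 < Real.sqrt (1 + ‖spaceGrad U (x, t)‖ ^ 2) := Real.sqrt_pos.2 (by positivity)
  set q : EuclideanSpace ℝ (Fin n) → ℝ := fun ξ => (pinch (c • timeDeriv U) U ξ ξ).1 (x, t)
    / (‖ξ‖ ^ 2 + (spaceDeriv ξ U).1 (x, t) ^ 2) with hq
  have hcont : ContinuousOn q (Metric.sphere 0 1) := by
    refine ContinuousOn.div ?_ ?_ fun ξ hξ => ?_
    · exact ((continuous_pinch _ U).comp (Continuous.prodMk_right (x, t))).continuousOn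
    · exact ((continuous_norm.pow 2).add (((continuous_spaceDeriv U).comp
        (Continuous.prodMk_right (x, t))).pow 2)).continuousOn
    · rw [mem_sphere_zero_iff_norm.1 hξ]
      positivity
  obtain ⟨δ, hδ, hδ'⟩ := IsCompact.exists_forall_le' (isCompact_sphere 0 1) hcont (a := 0)
    fun ξ hξ => by
      have hξ0 := ne_zero_of_mem_unit_sphere ⟨ξ, hξ⟩
      have := norm_pos_iff.2 hξ0
      exact div_pos (h ξ hξ0) (by positivity)
  have hδ2 : ∀ ξ, δ * (‖ξ‖ ^ 2 + (spaceDeriv ξ U).1 (x, t) ^ 2)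
      ≤ (pinch (c • timeDeriv U) U ξ ξ).1 (x, t) := by
    intro ξ
    have := pinch_nonneg_of_unit (θ := c • timeDeriv U + algebraMap ℝ _ δ - algebraMap ℝ _ 0)
      (u := U) (z := (x, t)) (fun ξ hξ => by
        have h1 := hδ' ξ (by simpa using hξ)
        rw [hq, le_div_iff₀ (by rw [hξ]; positivity)] at h1
        rw [pinch_add_sub_apply, coe_algebraMap_apply, sub_zero]
        exact sub_nonneg.2 h1) ξ
    rwa [pinch_add_sub_apply, coe_algebraMap_apply, sub_zero, sub_nonneg] at this
  have hκ : c * graphH (fun y => U.1 (y, t)) x + δ / Real.sqrt (1 + ‖spaceGrad U (x, t)‖ ^ 2)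
      ≤ graphKappa1 (fun y => U.1 (y, t)) x := by
    rw [graphKappa1_slice]
    refine le_csInf ?_ ?_
    · exact ⟨_, EuclideanSpace.single (Classical.arbitrary (Fin n)) 1, by simp, rfl⟩
    · rintro r ⟨ξ, hξ, rfl⟩
      have hξ' := norm_pos_iff.2 hξ
      have h1 := hδ2 ξ
      rw [pinch_smul_timeDeriv_apply] at h1
      rw [le_div_iff₀ (by positivity), graphH_slice U x t h0]
      field_simp
      linarith
  rw [lt_div_iff₀ hpos]
  have := div_pos hδ hW
  linarith

end Ratio

/-- maximum principle for `κ₁/h` under nonparametric mean curvature flow.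
Let `D ⊆ ℝⁿ` be nonempty bounded open connected, `a < b`, and let `u` be smooth on a
neighborhood of `D̄ × [a,b]` and satisfy the nonparametric mean curvature flow equation
`∂u/∂t = Δu − ⟨∇u,(D²u)∇u⟩/(1+|∇u|²)` there, with `h(u(·,t),x) > 0` on `D̄ × [a,b]`.
If the minimum of `(x,t) ↦ κ₁(u(·,t),x)/h(u(·,t),x)` over `D̄ × [a,b]` is attained at `(x₀,t₀)`
with `x₀ ∈ D` and `t₀ > a`, then that ratio is constant on `D × [a, t₀]`. -/
theorem subsequent_singularities_stmt6 {n : ℕ}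
    (D : Set (EuclideanSpace ℝ (Fin n))) (hD : IsOpen D) (hDconn : IsConnected D)
    (hDbdd : Bornology.IsBounded D)
    (a b : ℝ) (hab : a < b)
    (u : EuclideanSpace ℝ (Fin n) × ℝ → ℝ)
    (husmooth : ∃ V : Set (EuclideanSpace ℝ (Fin n) × ℝ), IsOpen V ∧
      (closure D) ×ˢ Set.Icc a b ⊆ V ∧ ContDiffOn ℝ (⊤ : ℕ∞) u V)
    (hmcf : ∀ x ∈ closure D, ∀ t ∈ Set.Icc a b,
      deriv (fun s => u (x, s)) t
        = lap (fun y => u (y, t)) x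
          - ⟪gradient (fun y => u (y, t)) x,
              hess (fun y => u (y, t)) x (gradient (fun y => u (y, t)) x)⟫
            / (1 + ‖gradient (fun y => u (y, t)) x‖ ^ 2))
    (hpos : ∀ x ∈ closure D, ∀ t ∈ Set.Icc a b, 0 < graphH (fun y => u (y, t)) x)
    (x₀ : EuclideanSpace ℝ (Fin n)) (t₀ : ℝ) (hx₀ : x₀ ∈ D) (ht₀ : t₀ ∈ Set.Ioc a b)
    (hmin : ∀ x ∈ closure D, ∀ t ∈ Set.Icc a b,
      graphKappa1 (fun y => u (y, t₀)) x₀ / graphH (fun y => u (y, t₀)) x₀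
        ≤ graphKappa1 (fun y => u (y, t)) x / graphH (fun y => u (y, t)) x) :
    ∀ x ∈ D, ∀ t ∈ Set.Icc a t₀,
      graphKappa1 (fun y => u (y, t)) x / graphH (fun y => u (y, t)) x
        = graphKappa1 (fun y => u (y, t₀)) x₀ / graphH (fun y => u (y, t₀)) x₀ := by
  obtain ⟨V, hV, hKV, hu⟩ := husmooth
  obtain ⟨U, hU⟩ := exists_smooth_extension (isClosed_closure.prod isClosed_Icc) hV hKV hu
  have hslice : ∀ x ∈ D, ∀ t ∈ Set.Icc a b,
      (fun y => u (y, t)) =ᶠ[𝓝 x] fun y => U.1 (y, t) := fun x hx t ht =>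
    (Continuous.prodMk_left t).continuousAt.eventually (hU (x, t) ⟨subset_closure hx, ht⟩)
  have hmcf0 : ∀ z ∈ D ×ˢ Set.Icc a b, (mcfOp U).1 z = 0 := by
    rintro ⟨x, t⟩ ⟨hx, ht⟩
    have h := hmcf x (subset_closure hx) t ht
    have hs := hslice x hx t ht
    have hd : (fun s => u (x, s)) =ᶠ[𝓝 t] fun s => U.1 (x, s) :=
      (Continuous.prodMk_right x).continuousAt.eventually (hU (x, t) ⟨subset_closure hx, ht⟩)
    rw [hd.deriv_eq, lap_congr hs, gradient_congr hs, hess_congr hs, deriv_slice, lap_slice,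
      gradient_slice, real_inner_comm, inner_hess_slice] at h
    rw [mcfOp_apply, h]
    field_simp
    ring
  have hposU : ∀ x ∈ D, ∀ t ∈ Set.Icc a b, 0 < graphH (fun y => U.1 (y, t)) x :=
    fun x hx t ht => graphH_congr (hslice x hx t ht) ▸ hpos x (subset_closure hx) t ht
  have hratio : ∀ x ∈ D, ∀ t ∈ Set.Icc a b,
      graphKappa1 (fun y => u (y, t)) x / graphH (fun y => u (y, t)) x
        = graphKappa1 (fun y => U.1 (y, t)) x / graphH (fun y => U.1 (y, t)) x :=
    fun x hx t ht => by
      rw [graphH_congr (hslice x hx t ht), graphKappa1_congr (hslice x hx t ht)]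
  have ht₀' : t₀ ∈ Set.Icc a b := ⟨ht₀.1.le, ht₀.2⟩
  have hne : Nonempty (Fin n) := by
    by_contra hn
    rw [not_nonempty_iff] at hn
    have h := hpos x₀ (subset_closure hx₀) t₀ ht₀'
    rw [graphH, lap, Subsingleton.elim (gradient (fun y => u (y, t₀)) x₀) 0] at h
    simp at h
  set c := graphKappa1 (fun y => u (y, t₀)) x₀ / graphH (fun y => u (y, t₀)) x₀ with hc
  have hN : ∀ z ∈ D ×ˢ Set.Icc a b, ∀ ξ, 0 ≤ (pinch (c • timeDeriv U) U ξ ξ).1 z := by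
    rintro ⟨x, t⟩ ⟨hx, ht⟩ ξ
    refine pinch_nonneg_of_le_ratio U x t c (hmcf0 _ ⟨hx, ht⟩) (hposU x hx t ht) ?_ ξ
    rw [← hratio x hx t ht]
    exact hmin x (subset_closure hx) t ht
  intro x hx t ht
  have htb : t ∈ Set.Icc a b := ⟨ht.1, ht.2.trans ht₀.2⟩
  by_contra hne'
  have hlt := lt_of_le_of_ne (hmin x (subset_closure hx) t htb) (Ne.symm hne')
  rw [hratio x hx t htb] at hlt
  have hpin := pinch_pos_of_lt_ratio U x t c (hmcf0 _ ⟨hx, htb⟩) (hposU x hx t htb) hlt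
  obtain ⟨t', hat', ht't₀, hpin'⟩ : ∃ t', a ≤ t' ∧ t' < t₀ ∧
      ∀ ξ ≠ 0, 0 < (pinch (c • timeDeriv U) U ξ ξ).1 (x, t') := by
    rcases ht.2.lt_or_eq with h | rfl
    · exact ⟨t, ht.1, h, hpin⟩
    · have hev : ∀ᶠ s in 𝓝 t, ∀ ξ ≠ 0, 0 < (pinch (c • timeDeriv U) U ξ ξ).1 (x, s) :=
        (Continuous.prodMk_right x).continuousAt.eventually (eventually_pinch_pos hpin)
      have hev' := hev.filter_mono (nhdsWithin_le_nhds (s := Set.Iio t))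
      obtain ⟨s, hs, hs'⟩ := (hev'.and (Ioo_mem_nhdsLT ht₀.1)).exists
      exact ⟨s, hs'.1.le, hs'.2, hs⟩
  have hfin := lt_ratio_of_pinch_pos U x₀ t₀ c (hmcf0 _ ⟨hx₀, ht₀'⟩) (hposU x₀ hx₀ t₀ ht₀')
    (pinch_pos_of_pinch_pos hD hDconn.isPreconnected hab U hmcf0 c hN hx hx₀ hat' ht't₀ ht₀.2 hpin')
  rw [← hratio x₀ hx₀ t₀ ht₀'] at hfin
  exact lt_irrefl _ hfin
end

section
/- Let Ω ⊆ ℝⁿ be open, let K be a nonempty bounded open connected subset of ℝⁿ with closure K̄ ⊆ Ω, let v = (v', v_{n+1}) ∈ ℝⁿ × ℝ, and let f : Ω → ℝ be a smooth solution of the translator equation with velocity v on Ω with h(f, x) > 0 for all x ∈ K̄. Then the minimum of the function x ↦ κ₁(f, x)/h(f, x) over K̄ is attained at some point of the topological frontier ∂K; moreover, if it is attained at some point of K, then x ↦ κ₁(f, x)/h(f, x) is constant on K̄. -/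
open scoped RealInnerProductSpace

open Filter Topology

/-- `f` is differentiable near `0`, twice differentiable at `0`, with value `a`, first derivative
`b` and second derivative `c` at `0`. -/
def HasJet {V : Type*} [NormedAddCommGroup V] [NormedSpace ℝ V] (f : ℝ → V) (a b c : V) : Prop :=
  f 0 = a ∧ ∃ f' : ℝ → V, (∀ᶠ t in 𝓝 0, HasDerivAt f (f' t) t) ∧ f' 0 = b ∧ HasDerivAt f' c 0

namespace HasJet

variable {V W X : Type*} [NormedAddCommGroup V] [NormedSpace ℝ V] [NormedAddCommGroup W]
  [NormedSpace ℝ W] [NormedAddCommGroup X] [NormedSpace ℝ X]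

lemma const (a : V) : HasJet (fun _ => a) a 0 0 :=
  ⟨rfl, fun _ => 0, .of_forall fun t => hasDerivAt_const t a, rfl, hasDerivAt_const 0 0⟩

lemma affine (a b : V) : HasJet (fun t : ℝ => a + t • b) a b 0 := by
  refine ⟨by simp, fun _ => b, .of_forall fun t => ?_, rfl, hasDerivAt_const 0 b⟩
  simpa using ((hasDerivAt_id t).smul_const b).const_add a

lemma add {f g : ℝ → V} {a b c a' b' c' : V} (hf : HasJet f a b c) (hg : HasJet g a' b' c') :
    HasJet (fun t => f t + g t) (a + a') (b + b') (c + c') := by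
  obtain ⟨rfl, f', hf, rfl, hf'⟩ := hf
  obtain ⟨rfl, g', hg, rfl, hg'⟩ := hg
  exact ⟨rfl, fun t => f' t + g' t, by filter_upwards [hf, hg] with t h h' using h.fun_add h', rfl,
    hf'.fun_add hg'⟩

lemma sub {f g : ℝ → V} {a b c a' b' c' : V} (hf : HasJet f a b c) (hg : HasJet g a' b' c') :
    HasJet (fun t => f t - g t) (a - a') (b - b') (c - c') := by
  obtain ⟨rfl, f', hf, rfl, hf'⟩ := hf
  obtain ⟨rfl, g', hg, rfl, hg'⟩ := hg
  exact ⟨rfl, fun t => f' t - g' t, by filter_upwards [hf, hg] with t h h' using h.fun_sub h', rfl,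
    hf'.fun_sub hg'⟩

lemma sum {ι : Type*} [Fintype ι] {f : ι → ℝ → V} {a b c : ι → V}
    (hf : ∀ i, HasJet (f i) (a i) (b i) (c i)) :
    HasJet (fun t => ∑ i, f i t) (∑ i, a i) (∑ i, b i) (∑ i, c i) := by
  choose h0 f' h1 h2 h3 using hf
  refine ⟨by simp [h0], fun t => ∑ i, f' i t, ?_, by simp [h2], HasDerivAt.fun_sum fun i _ => h3 i⟩
  filter_upwards [eventually_all.2 h1] with t ht using HasDerivAt.fun_sum fun i _ => ht i

lemma bilin (B : V →L[ℝ] W →L[ℝ] X) {f : ℝ → V} {g : ℝ → W} {a b c : V} {a' b' c' : W}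
    (hf : HasJet f a b c) (hg : HasJet g a' b' c') :
    HasJet (fun t => B (f t) (g t)) (B a a') (B a b' + B b a') (B a c' + 2 • B b b' + B c a') := by
  obtain ⟨rfl, f', hf, rfl, hf'⟩ := hf
  obtain ⟨rfl, g', hg, rfl, hg'⟩ := hg
  refine ⟨rfl, fun t => B (f t) (g' t) + B (f' t) (g t), ?_, rfl, ?_⟩
  · filter_upwards [hf, hg] with t h h'
    exact B.hasDerivAt_of_bilinear (fun _ => h) (fun _ => h')
  · convert! (B.hasDerivAt_of_bilinear (fun _ => hf.self_of_nhds) (fun _ => hg')).fun_add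
      (B.hasDerivAt_of_bilinear (fun _ => hf') (fun _ => hg.self_of_nhds)) using 1
    rw [two_smul]
    abel

lemma mul {f g : ℝ → ℝ} {a b c a' b' c' : ℝ} (hf : HasJet f a b c) (hg : HasJet g a' b' c') :
    HasJet (fun t => f t * g t) (a * a') (a * b' + b * a') (a * c' + 2 * (b * b') + c * a') := by
  simpa using hf.bilin (ContinuousLinearMap.mul ℝ ℝ) hg

lemma inner {E : Type*} [NormedAddCommGroup E] [InnerProductSpace ℝ E] {f g : ℝ → E}
    {a b c a' b' c' : E} (hf : HasJet f a b c) (hg : HasJet g a' b' c') :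
    HasJet (fun t => ⟪f t, g t⟫) ⟪a, a'⟫ (⟪a, b'⟫ + ⟪b, a'⟫)
      (⟪a, c'⟫ + 2 * ⟪b, b'⟫ + ⟪c, a'⟫) := by
  have h := hf.bilin (innerSL ℝ) hg
  rw [nsmul_eq_mul, Nat.cast_ofNat] at h
  exact h

lemma clm_apply {f : ℝ → V →L[ℝ] W} {g : ℝ → V} {a b c : V →L[ℝ] W} {a' b' c' : V}
    (hf : HasJet f a b c) (hg : HasJet g a' b' c') :
    HasJet (fun t => f t (g t)) (a a') (a b' + b a') (a c' + (2 : ℝ) • b b' + c a') := by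
  simpa [two_smul] using hf.bilin (ContinuousLinearMap.id ℝ (V →L[ℝ] W)) hg

lemma exp {f : ℝ → ℝ} {a b c : ℝ} (hf : HasJet f a b c) :
    HasJet (fun t => Real.exp (f t)) (Real.exp a) (Real.exp a * b)
      (Real.exp a * (b ^ 2 + c)) := by
  obtain ⟨rfl, f', hf, rfl, hf'⟩ := hf
  refine ⟨rfl, fun t => Real.exp (f t) * f' t, ?_, rfl, ?_⟩
  · filter_upwards [hf] with t h using h.exp
  · convert! hf.self_of_nhds.exp.mul hf' using 1
    ring

lemma of_contDiffAt {f : V → W} {x : V} (hf : ContDiffAt ℝ 2 f x) (b : V) :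
    HasJet (fun t : ℝ => f (x + t • b)) (f x) (fderiv ℝ f x b) (fderiv ℝ (fderiv ℝ f) x b b) := by
  have hline (t : ℝ) : HasDerivAt (fun t : ℝ => x + t • b) b t := by
    simpa using ((hasDerivAt_id t).smul_const b).const_add x
  have htend : Tendsto (fun t : ℝ => x + t • b) (𝓝 0) (𝓝 x) := by
    simpa using (hline 0).continuousAt.tendsto
  refine ⟨by simp, fun t => fderiv ℝ f (x + t • b) b, ?_, by simp, ?_⟩
  · filter_upwards [htend.eventually (hf.eventually (by simp))] with t ht
    exact (ht.differentiableAt (by norm_num)).hasFDerivAt.comp_hasDerivAt t (hline t)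
  · have h1 : DifferentiableAt ℝ (fderiv ℝ f) x :=
      (hf.fderiv_right (m := 1) (by norm_num)).differentiableAt (by norm_num)
    have h2 : HasDerivAt (fun t : ℝ => fderiv ℝ f (x + t • b)) (fderiv ℝ (fderiv ℝ f) x b) 0 := by
      have h3 : HasFDerivAt (fderiv ℝ f) (fderiv ℝ (fderiv ℝ f) x) (x + (0 : ℝ) • b) := by
        simpa using h1.hasFDerivAt
      exact h3.comp_hasDerivAt 0 (hline 0)
    simpa using h2.clm_apply (hasDerivAt_const 0 b)

lemma eq_zero_and_nonneg {f : ℝ → ℝ} {b c : ℝ} (hf : HasJet f 0 b c)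
    (h : ∀ᶠ t in 𝓝 0, 0 ≤ f t) : b = 0 ∧ 0 ≤ c := by
  obtain ⟨h0, f', hf, rfl, hf'⟩ := hf
  have hb : f' 0 = 0 := by
    refine IsLocalMin.hasDerivAt_eq_zero (f := f) (a := 0) ?_ hf.self_of_nhds
    filter_upwards [h] with t ht
    rwa [h0]
  refine ⟨hb, ?_⟩
  by_contra! hc
  have hg : ∀ᶠ t in 𝓝 0, HasDerivAt (fun t => f t - c / 4 * t ^ 2) (f' t - c / 2 * t) t := by
    filter_upwards [hf] with t ht
    convert! ht.fun_sub ((hasDerivAt_pow 2 t).const_mul (c / 4)) using 1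
    norm_num
    ring
  have hd : deriv (fun t => f t - c / 4 * t ^ 2) =ᶠ[𝓝 0] fun t => f' t - c / 2 * t := by
    filter_upwards [hg] with t ht using ht.deriv
  have hdd : HasDerivAt (fun t => f' t - c / 2 * t) (c / 2) 0 := by
    convert! hf'.fun_sub ((hasDerivAt_id (0 : ℝ)).const_mul (c / 2)) using 1
    ring
  have hmax : IsLocalMax (fun t => f t - c / 4 * t ^ 2) 0 := by
    refine isLocalMax_of_deriv_deriv_neg ?_ ?_ hg.self_of_nhds.continuousAt
    · rw [hd.deriv_eq, hdd.deriv]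
      linarith
    · rw [hd.self_of_nhds]
      simp [hb]
  obtain ⟨t, ⟨ht1, ht2⟩, ht3⟩ :=
    (((hmax.and h).filter_mono nhdsWithin_le_nhds).and self_mem_nhdsWithin :
      ∀ᶠ t in 𝓝[>] (0 : ℝ), _).exists
  simp only [h0] at ht1
  have : 0 < t ^ 2 := by
    have : 0 < t := ht3
    positivity
  nlinarith

lemma eq_zero {f : ℝ → ℝ} {a b c : ℝ} (hf : HasJet f a b c) (h : ∀ᶠ t in 𝓝 0, f t = 0) :
    b = 0 ∧ c = 0 := by
  obtain rfl : a = 0 := hf.1 ▸ h.self_of_nhds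
  have h1 := hf.eq_zero_and_nonneg (h.mono fun t ht => ht.ge)
  have h2 := ((HasJet.const (0 : ℝ)).sub hf)
  rw [sub_self] at h2
  have h3 := h2.eq_zero_and_nonneg (h.mono fun t ht => by simp [ht])
  exact ⟨h1.1, le_antisymm (by linarith [h3.2]) h1.2⟩

end HasJet

section Frame

variable {E ι : Type*} [NormedAddCommGroup E] [InnerProductSpace ℝ E] [Fintype ι]
  (e : OrthonormalBasis ι ℝ E)

/-- A square root of the inverse metric `1 - p pᵀ / (1 + |p|²)`, as a family of vectors. -/
lemma exists_frame (p : E) : ∃ b : ι → E, ∀ L : E →L[ℝ] E,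
    ∑ k, ⟪L (b k), b k⟫ = ∑ k, ⟪L (e k), e k⟫ - ⟪L p, p⟫ / (1 + ⟪p, p⟫) := by
  have hp : 0 ≤ ⟪p, p⟫ := real_inner_self_nonneg
  obtain ⟨r, hr, hr2⟩ : ∃ r : ℝ, 0 < r ∧ r ^ 2 = 1 + ⟪p, p⟫ :=
    ⟨√(1 + ⟪p, p⟫), by positivity, Real.sq_sqrt (by positivity)⟩
  refine ⟨fun k => e k - ((1 / (r * (r + 1))) * ⟪p, e k⟫) • p, fun L => ?_⟩
  set θ := 1 / (r * (r + 1)) with hθ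
  have h1 : ∑ k, ⟪p, e k⟫ * ⟪L p, e k⟫ = ⟪L p, p⟫ := by
    simpa [real_inner_comm, mul_comm] using e.sum_inner_mul_inner (L p) p
  have h2 : ∑ k, ⟪p, e k⟫ * ⟪L (e k), p⟫ = ⟪L p, p⟫ := by
    have h := congrArg (fun z => ⟪L z, p⟫) (e.sum_repr' p)
    simp only [map_sum, sum_inner, map_smul, real_inner_smul_left] at h
    rw [← h]
    exact Finset.sum_congr rfl fun k _ => by rw [real_inner_comm]
  have h3 : ∑ k, ⟪p, e k⟫ ^ 2 = ⟪p, p⟫ := by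
    simpa [real_inner_comm, sq] using e.sum_inner_mul_inner p p
  have h4 (k : ι) : ⟪L (e k - (θ * ⟪p, e k⟫) • p), e k - (θ * ⟪p, e k⟫) • p⟫
      = ⟪L (e k), e k⟫ - θ * (⟪p, e k⟫ * ⟪L (e k), p⟫) - θ * (⟪p, e k⟫ * ⟪L p, e k⟫)
        + θ ^ 2 * ⟪L p, p⟫ * ⟪p, e k⟫ ^ 2 := by
    simp only [map_sub, map_smul, inner_sub_left, inner_sub_right, real_inner_smul_left,
      real_inner_smul_right]
    ring
  simp_rw [h4, Finset.sum_add_distrib, Finset.sum_sub_distrib, ← Finset.mul_sum, h1, h2, h3]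
  rw [← hr2, hθ, show ⟪p, p⟫ = r ^ 2 - 1 by linarith]
  field_simp
  ring

/-- A family `b` as in `exists_frame` also contracts pairs of covectors. -/
lemma sum_inner_mul_inner_of_frame {p : E} {b : ι → E}
    (hb : ∀ L : E →L[ℝ] E,
      ∑ k, ⟪L (b k), b k⟫ = ∑ k, ⟪L (e k), e k⟫ - ⟪L p, p⟫ / (1 + ⟪p, p⟫)) (y z : E) :
    ∑ k, ⟪y, b k⟫ * ⟪z, b k⟫ = ⟪y, z⟫ - ⟪y, p⟫ * ⟪z, p⟫ / (1 + ⟪p, p⟫) := by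
  have h := hb ((innerSL ℝ y).smulRight z)
  simp only [ContinuousLinearMap.smulRight_apply, innerSL_apply_apply, real_inner_smul_left] at h
  rw [h, ← e.sum_inner_mul_inner y z]
  congr 1
  exact Finset.sum_congr rfl fun k _ => by rw [real_inner_comm z]

/-- The algebraic core of the maximum principle: `p`, `S`, `T`, `Q` play the role of the first four
derivatives of `f` at a point, `m`, `g`, `H` that of the value, gradient and Hessian of the test
function, and `ξ` that of a null direction. -/
lemma trace_le_of_jets {p v' g ξ : E} {vn m : ℝ} {S H : E →L[ℝ] E} {T : E →L[ℝ] E →L[ℝ] E}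
    {Q : E →L[ℝ] E →L[ℝ] E →L[ℝ] E} (hξ : ξ ≠ 0)
    (hS : ∀ u v, ⟪S u, v⟫ = ⟪S v, u⟫) (hT : ∀ u v, T u v = T v u)
    (hT' : ∀ u v z, ⟪T u v, z⟫ = ⟪T u z, v⟫) (hQ : ∀ u v, ⟪Q u u v, v⟫ = ⟪Q v v u, u⟫)
    (hF : 0 < vn - ⟪v', p⟫)
    (hE : (1 + ⟪p, p⟫) * (∑ k, ⟪S (e k), e k⟫ + ⟪v', p⟫ - vn) = ⟪S p, p⟫)
    (hE1 : ∀ u, (1 + ⟪p, p⟫) * (∑ k, ⟪T u (e k), e k⟫ + ⟪v', S u⟫)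
      + 2 * ⟪p, S u⟫ * (∑ k, ⟪S (e k), e k⟫ + ⟪v', p⟫ - vn) = ⟪T u p, p⟫ + 2 * ⟪S p, S u⟫)
    (hE2 : ∀ u, (1 + ⟪p, p⟫) * (∑ k, ⟪Q u u (e k), e k⟫ + ⟪v', T u u⟫)
      + 4 * ⟪p, S u⟫ * (∑ k, ⟪T u (e k), e k⟫ + ⟪v', S u⟫)
      + (2 * ⟪S u, S u⟫ + 2 * ⟪p, T u u⟫) * (∑ k, ⟪S (e k), e k⟫ + ⟪v', p⟫ - vn)
      = ⟪Q u u p, p⟫ + 4 * ⟪T u p, S u⟫ + 2 * ⟪S p, T u u⟫ + 2 * ⟪S (S u), S u⟫)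
    (hφ : ⟪S ξ, ξ⟫ = m * (vn - ⟪v', p⟫) * (⟪ξ, ξ⟫ + ⟪p, ξ⟫ ^ 2))
    (hφ1 : ∀ b η, ⟪T b ξ, ξ⟫ + 2 * ⟪S ξ, η⟫
      = (⟪g, b⟫ * (vn - ⟪v', p⟫) - m * ⟪v', S b⟫) * (⟪ξ, ξ⟫ + ⟪p, ξ⟫ ^ 2)
        + m * (vn - ⟪v', p⟫) * (2 * ⟪ξ, η⟫ + 2 * ⟪p, ξ⟫ * (⟪S b, ξ⟫ + ⟪p, η⟫)))
    (hφ2 : ∀ b η, 0 ≤ ⟪Q b b ξ, ξ⟫ + 4 * ⟪T b ξ, η⟫ + 2 * ⟪S η, η⟫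
      - ((⟪H b, b⟫ * (vn - ⟪v', p⟫) - 2 * ⟪g, b⟫ * ⟪v', S b⟫ - m * ⟪v', T b b⟫)
          * (⟪ξ, ξ⟫ + ⟪p, ξ⟫ ^ 2)
        + 2 * (⟪g, b⟫ * (vn - ⟪v', p⟫) - m * ⟪v', S b⟫)
          * (2 * ⟪ξ, η⟫ + 2 * ⟪p, ξ⟫ * (⟪S b, ξ⟫ + ⟪p, η⟫))
        + m * (vn - ⟪v', p⟫) * (2 * ⟪η, η⟫ + 2 * (⟪S b, ξ⟫ + ⟪p, η⟫) ^ 2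
          + 2 * ⟪p, ξ⟫ * (⟪T b b, ξ⟫ + 2 * ⟪S b, η⟫)))) :
    ∑ k, ⟪H (e k), e k⟫ - ⟪H p, p⟫ / (1 + ⟪p, p⟫)
      ≤ ⟪(2 / (1 + ⟪p, p⟫)) • S p - (2 * ⟪S p, p⟫ / (1 + ⟪p, p⟫) ^ 2) • p - v'
        + (2 / (vn - ⟪v', p⟫)) • (S v' - (⟪S v', p⟫ / (1 + ⟪p, p⟫)) • p), g⟫ := by
  obtain ⟨b, hb⟩ := exists_frame e p
  have hb2 := sum_inner_mul_inner_of_frame e hb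
  have hw : 0 < 1 + ⟪p, p⟫ := by
    have : 0 ≤ ⟪p, p⟫ := real_inner_self_nonneg
    positivity
  have hγ : 0 < ⟪ξ, ξ⟫ + ⟪p, ξ⟫ ^ 2 := by
    have := real_inner_self_pos.2 hξ
    positivity
  -- The null direction is an eigenvector.
  have hσ : S ξ = (m * (vn - ⟪v', p⟫)) • (ξ + ⟪p, ξ⟫ • p) := by
    refine ext_inner_right ℝ fun η => ?_
    have h := hφ1 0 η
    simp only [map_zero, zero_apply, inner_zero_left, inner_zero_right] at h
    simp only [real_inner_smul_left, inner_add_left]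
    linarith
  have hτ (u : E) : ⟪T ξ ξ, u⟫
      = (⟪g, u⟫ * (vn - ⟪v', p⟫) - m * ⟪v', S u⟫) * (⟪ξ, ξ⟫ + ⟪p, ξ⟫ ^ 2)
        + m * (vn - ⟪v', p⟫) * (2 * ⟪p, ξ⟫ * ⟪S ξ, u⟫) := by
    have h := hφ1 u 0
    simp only [inner_zero_right] at h
    rw [hT', hT, ← hS u ξ]
    linarith
  -- The second variation along the field that is parallel to first order.
  have hvar (k : ι) : 0 ≤ ⟪Q ξ ξ (b k), b k⟫
      - 4 / (1 + ⟪p, p⟫) * (⟪S ξ, b k⟫ * ⟪T ξ p, b k⟫)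
      + 2 * ⟪S p, p⟫ / (1 + ⟪p, p⟫) ^ 2 * (⟪S ξ, b k⟫ * ⟪S ξ, b k⟫)
      - (⟪ξ, ξ⟫ + ⟪p, ξ⟫ ^ 2) * ((vn - ⟪v', p⟫) * ⟪H (b k), b k⟫
        - 2 * (⟪g, b k⟫ * ⟪S v', b k⟫) - m * ⟪T v' (b k), b k⟫)
      - m * (vn - ⟪v', p⟫) * (2 / (1 + ⟪p, p⟫) * (⟪S ξ, b k⟫ * ⟪S ξ, b k⟫)
        + 2 * ⟪p, ξ⟫ * ⟪T ξ (b k), b k⟫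
        - 4 * ⟪p, ξ⟫ / (1 + ⟪p, p⟫) * (⟪S ξ, b k⟫ * ⟪S p, b k⟫)) := by
    have h := hφ2 (b k) (-(⟪S ξ, b k⟫ / (1 + ⟪p, p⟫)) • p)
    simp only [map_smul, real_inner_smul_left, real_inner_smul_right] at h
    rw [hQ (b k) ξ, hT (b k) ξ, hT' ξ (b k) p, real_inner_comm (S (b k)) v', hS (b k) v',
      real_inner_comm (T (b k) (b k)) v', hT' (b k) (b k) v', hT (b k) v',
      hT' (b k) (b k) ξ, hT (b k) ξ, hS (b k) ξ, hS (b k) p, real_inner_comm p ξ] at h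
    refine h.trans_eq ?_
    generalize ⟪p, p⟫ = r at hw ⊢
    field_simp
    ring
  have hσ' (z : E) : ⟪S ξ, z⟫ = m * (vn - ⟪v', p⟫) * (⟪ξ, z⟫ + ⟪p, ξ⟫ * ⟪p, z⟫) := by
    rw [hσ]
    simp only [real_inner_smul_left, inner_add_left]
  have hbσ (z : E) : ∑ k, ⟪S ξ, b k⟫ * ⟪z, b k⟫ = m * (vn - ⟪v', p⟫) * ⟪ξ, z⟫ := by
    rw [hb2, hσ', hσ', real_inner_comm p ξ, real_inner_comm z p]
    field_simp
    ring
  have hsum := Finset.sum_nonneg fun k (_ : k ∈ Finset.univ) => hvar k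
  simp only [Finset.sum_add_distrib, Finset.sum_sub_distrib, ← Finset.mul_sum, hb, hbσ, hb2] at hsum
  have hY : ∑ k, ⟪S (e k), e k⟫ + ⟪v', p⟫ - vn = ⟪S p, p⟫ / (1 + ⟪p, p⟫) := by
    rw [eq_div_iff hw.ne', mul_comm, hE]
  simp only [hY] at hE1 hE2
  -- The translator equation, differentiated once and twice.
  have htr (u : E) : ∑ k, ⟪T u (e k), e k⟫ - ⟪T u p, p⟫ / (1 + ⟪p, p⟫)
      = 2 * ⟪S p, S u⟫ / (1 + ⟪p, p⟫) - 2 * ⟪S p, p⟫ * ⟪S u, p⟫ / (1 + ⟪p, p⟫) ^ 2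
        - ⟪v', S u⟫ := by
    have h := hE1 u
    rw [real_inner_comm (S u) p] at h
    generalize 1 + ⟪p, p⟫ = w at hw h ⊢
    field_simp at h ⊢
    linear_combination h
  have hτp : ⟪ξ, T ξ p⟫ = ⟪T ξ ξ, p⟫ := by rw [real_inner_comm, hT']
  have hξp : ⟪ξ, S p⟫ = ⟪S ξ, p⟫ := by rw [real_inner_comm, hS]
  have hξξ : ⟪ξ, S ξ⟫ = ⟪S ξ, ξ⟫ := real_inner_comm _ _
  have hpw : ⟪S ξ, p⟫ = m * (vn - ⟪v', p⟫) * (⟪p, ξ⟫ * (1 + ⟪p, p⟫)) := by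
    rw [hσ', real_inner_comm p ξ]
    ring
  have hSpSξ : ⟪S p, S ξ⟫ = m * (vn - ⟪v', p⟫) * (⟪S ξ, p⟫ + ⟪p, ξ⟫ * ⟪S p, p⟫) := by
    rw [real_inner_comm, hσ', hξp, real_inner_comm p (S p)]
  have hSS : ⟪S ξ, S ξ⟫ = m * (vn - ⟪v', p⟫) * (⟪S ξ, ξ⟫ + ⟪p, ξ⟫ * ⟪S ξ, p⟫) := by
    rw [hσ' (S ξ), hξξ, real_inner_comm p (S ξ)]
  have hSSS : ⟪S (S ξ), S ξ⟫
      = (m * (vn - ⟪v', p⟫)) ^ 2 * (⟪S ξ, ξ⟫ + 2 * ⟪p, ξ⟫ * ⟪S ξ, p⟫ + ⟪p, ξ⟫ ^ 2 * ⟪S p, p⟫) := by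
    nth_rw 1 [hσ]
    rw [map_smul, real_inner_smul_left, map_add, inner_add_left, map_smul, real_inner_smul_left,
      hSS, hSpSξ]
    ring
  have hTpS : ⟪T ξ p, S ξ⟫ = m * (vn - ⟪v', p⟫) * (⟪T ξ ξ, p⟫ + ⟪p, ξ⟫ * ⟪T ξ p, p⟫) := by
    rw [real_inner_comm, hσ', hτp, real_inner_comm p (T ξ p)]
  have hQtr : ∑ k, ⟪Q ξ ξ (e k), e k⟫ - ⟪Q ξ ξ p, p⟫ / (1 + ⟪p, p⟫)
      = 4 * (m * (vn - ⟪v', p⟫)) * ⟪T ξ ξ, p⟫ / (1 + ⟪p, p⟫) + 2 * ⟪T ξ ξ, S p⟫ / (1 + ⟪p, p⟫)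
        + 2 * (m * (vn - ⟪v', p⟫)) ^ 3 * (⟪ξ, ξ⟫ + ⟪p, ξ⟫ ^ 2) / (1 + ⟪p, p⟫)
        - 4 * (m * (vn - ⟪v', p⟫)) ^ 3 * ⟪p, ξ⟫ ^ 2
        - 2 * ⟪S p, p⟫ * (m * (vn - ⟪v', p⟫)) ^ 2 * (⟪ξ, ξ⟫ + ⟪p, ξ⟫ ^ 2) / (1 + ⟪p, p⟫) ^ 2
        - 2 * ⟪S p, p⟫ * ⟪T ξ ξ, p⟫ / (1 + ⟪p, p⟫) ^ 2 - ⟪T ξ ξ, v'⟫ := by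
    have h := hE2 ξ
    have h' := hE1 ξ
    rw [real_inner_comm (S ξ) p, hSpSξ, hpw] at h'
    rw [real_inner_comm (S ξ) p, real_inner_comm (T ξ ξ) p, hTpS, hSSS, hSS, hφ, hpw,
      real_inner_comm (T ξ ξ) v', real_inner_comm (T ξ ξ) (S p)] at h
    generalize 1 + ⟪p, p⟫ = w at hw h h' ⊢
    generalize m * (vn - ⟪v', p⟫) = κ at h h' ⊢
    field_simp at h h' ⊢
    linear_combination h - 4 * κ * ⟪p, ξ⟫ * w * h'
  have hτSp := hτ (S p)
  have hτv := hτ v'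
  have hτp' := hτ p
  have htξ := htr ξ
  have hvSS : ⟪v', S (S p)⟫ = ⟪S p, S v'⟫ := by rw [real_inner_comm, hS, real_inner_comm]
  have hvSp : ⟪v', S p⟫ = ⟪S v', p⟫ := by rw [real_inner_comm, hS]
  rw [hQtr, htr v', htξ, hτp, hξξ, hξp, hτSp, hτv, hτp', hSpSξ, real_inner_comm (S p) (S ξ),
    hSpSξ, real_inner_comm (S ξ) v', hσ' v', hφ, hpw, hvSS, hvSp] at hsum
  simp only [inner_add_left, inner_sub_left, real_inner_smul_left]
  rw [real_inner_comm g (S p), real_inner_comm g p, real_inner_comm g v', real_inner_comm g (S v')]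
  rw [← sub_nonneg]
  refine nonneg_of_mul_nonneg_right (hsum.trans_eq ?_) (mul_pos hγ hF)
  generalize ∑ k, ⟪H (e k), e k⟫ - ⟪H p, p⟫ / (1 + ⟪p, p⟫) = X
  generalize 1 + ⟪p, p⟫ = w at hw ⊢
  generalize vn - ⟪v', p⟫ = F at hF ⊢
  field_simp
  ring

end Frame

section Touching

variable {E ι : Type*} [NormedAddCommGroup E] [InnerProductSpace ℝ E] [Fintype ι]
  (e : OrthonormalBasis ι ℝ E)

/-- If `μ` touches the quotient `κ₁ / h` of a translating graph with gradient `P` from below at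
`x`, in the null direction `ξ`, then `μ` is a subsolution of a linear elliptic equation at `x`. -/
lemma trace_le_of_touching {Ω : Set E} (hΩ : IsOpen Ω) {P : E → E} (hP : ContDiffOn ℝ 3 P Ω)
    (hsymm : ∀ x ∈ Ω, ∀ u v, ⟪fderiv ℝ P x u, v⟫ = ⟪fderiv ℝ P x v, u⟫) {v' : E} {vn : ℝ}
    (heq : ∀ x ∈ Ω, (1 + ⟪P x, P x⟫) * (∑ k, ⟪fderiv ℝ P x (e k), e k⟫ + ⟪v', P x⟫ - vn)
      = ⟪fderiv ℝ P x (P x), P x⟫)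
    {x : E} (hx : x ∈ Ω) (hF : 0 < vn - ⟪v', P x⟫) {μ : E → ℝ} {g : E} {H : E →L[ℝ] E}
    (hμ : ∀ b, HasJet (fun t : ℝ => μ (x + t • b)) (μ x) ⟪g, b⟫ ⟪H b, b⟫) {ξ : E} (hξ : ξ ≠ 0)
    (hmin : ∀ᶠ y in 𝓝 x, ∀ η,
      μ y * (vn - ⟪v', P y⟫) * (⟪η, η⟫ + ⟪P y, η⟫ ^ 2) ≤ ⟪fderiv ℝ P y η, η⟫)
    (hzero : ⟪fderiv ℝ P x ξ, ξ⟫ = μ x * (vn - ⟪v', P x⟫) * (⟪ξ, ξ⟫ + ⟪P x, ξ⟫ ^ 2)) :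
    ∑ k, ⟪H (e k), e k⟫ - ⟪H (P x), P x⟫ / (1 + ⟪P x, P x⟫)
      ≤ ⟪(2 / (1 + ⟪P x, P x⟫)) • fderiv ℝ P x (P x)
        - (2 * ⟪fderiv ℝ P x (P x), P x⟫ / (1 + ⟪P x, P x⟫) ^ 2) • P x - v'
        + (2 / (vn - ⟪v', P x⟫)) • (fderiv ℝ P x v'
          - (⟪fderiv ℝ P x v', P x⟫ / (1 + ⟪P x, P x⟫)) • P x), g⟫ := by
  have hPx (y : E) (hy : y ∈ Ω) : ContDiffAt ℝ 3 P y := hP.contDiffAt (hΩ.mem_nhds hy)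
  have hP2 (y : E) (hy : y ∈ Ω) : ContDiffAt ℝ 2 P y := (hPx y hy).of_le (by norm_num)
  have hS2 : ContDiffAt ℝ 2 (fderiv ℝ P) x := (hPx x hx).fderiv_right (by norm_num)
  have hjP := HasJet.of_contDiffAt (hP2 x hx)
  have hjS := HasJet.of_contDiffAt hS2
  have hline (b : E) : Tendsto (fun t : ℝ => x + t • b) (𝓝 0) (𝓝 x) := by
    have : Continuous fun t : ℝ => x + t • b := by fun_prop
    simpa using this.tendsto 0
  have hmem (b : E) : ∀ᶠ t in 𝓝 (0 : ℝ), x + t • b ∈ Ω := (hline b).eventually (hΩ.mem_nhds hx)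
  -- The symmetries of the third and fourth derivatives.
  have hT (y : E) (hy : y ∈ Ω) (u v : E) :
      fderiv ℝ (fderiv ℝ P) y u v = fderiv ℝ (fderiv ℝ P) y v u :=
    (hP2 y hy).isSymmSndFDerivAt (by simp) u v
  have hjS' (u v z : E) := ((hjS u).clm_apply (HasJet.const v)).inner (HasJet.const z)
  have hdiff (u v z : E) := ((hjS' u v z).sub (hjS' u z v)).eq_zero (by
    filter_upwards [hmem u] with t ht
    rw [hsymm _ ht, sub_self])
  have hT' (u v z : E) : ⟪fderiv ℝ (fderiv ℝ P) x u v, z⟫ = ⟪fderiv ℝ (fderiv ℝ P) x u z, v⟫ := by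
    have h := (hdiff u v z).1
    simp at h
    linarith
  have hQ1 (u v z : E) : fderiv ℝ (fderiv ℝ (fderiv ℝ P)) x u v z
      = fderiv ℝ (fderiv ℝ (fderiv ℝ P)) x v u z :=
    congrArg (· z) (hS2.isSymmSndFDerivAt (by simp) u v)
  have hQ2 (u v z : E) : fderiv ℝ (fderiv ℝ (fderiv ℝ P)) x u v z
      = fderiv ℝ (fderiv ℝ (fderiv ℝ P)) x u z v := by
    have hD : HasFDerivAt (fderiv ℝ (fderiv ℝ P)) (fderiv ℝ (fderiv ℝ (fderiv ℝ P)) x) x :=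
      ((hS2.fderiv_right (m := 1) (by norm_num)).differentiableAt (by norm_num)).hasFDerivAt
    have hDvz (v z : E) := (hD.clm_apply (hasFDerivAt_const v x)).clm_apply (hasFDerivAt_const z x)
    have h := (hDvz v z).unique ((hDvz z v).congr_of_eventuallyEq (by
      filter_upwards [hΩ.mem_nhds hx] with y hy using hT y hy v z))
    simpa using congrArg (· u) h
  have hQ3 (u v z : E) : ⟪fderiv ℝ (fderiv ℝ (fderiv ℝ P)) x u u v, z⟫
      = ⟪fderiv ℝ (fderiv ℝ (fderiv ℝ P)) x u u z, v⟫ := by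
    have h := (hdiff u v z).2
    simp at h
    linarith
  have hQ (u v : E) : ⟪fderiv ℝ (fderiv ℝ (fderiv ℝ P)) x u u v, v⟫
      = ⟪fderiv ℝ (fderiv ℝ (fderiv ℝ P)) x v v u, u⟫ := by
    have h := hQ3 (u + v) u v
    simp only [map_add, add_apply, inner_add_left] at h
    rw [hQ1 u v u, hQ1 u v v, hQ3 u u v, hQ3 v u v] at h
    rw [hQ2 u u v, hQ1 u v u, hQ2 v v u]
    linarith
  have hE (b : E) := ((((HasJet.const (1 : ℝ)).add ((hjP b).inner (hjP b))).mul
    (((HasJet.sum fun k => ((hjS b).clm_apply (HasJet.const (e k))).inner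
      (HasJet.const (e k))).add ((HasJet.const v').inner (hjP b))).sub (HasJet.const vn))).sub
    (((hjS b).clm_apply (hjP b)).inner (hjP b))).eq_zero (by
      filter_upwards [hmem b] with t ht
      rw [heq _ ht, sub_self])
  have hφ (b η : E) := (((((hjS b).clm_apply (HasJet.affine ξ η)).inner (HasJet.affine ξ η)).sub
    (((hμ b).mul ((HasJet.const vn).sub ((HasJet.const v').inner (hjP b)))).mul
      (((HasJet.affine ξ η).inner (HasJet.affine ξ η)).add
        (((hjP b).inner (HasJet.affine ξ η)).mul ((hjP b).inner (HasJet.affine ξ η)))))))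
  have hφ' (b η : E) := by
    have h := hφ b η
    rw [show ∀ a b : ℝ, a = b → a - b = 0 from fun _ _ => sub_eq_zero.2] at h
    · exact h.eq_zero_and_nonneg (by
        filter_upwards [(hline b).eventually hmin] with t ht
        have := ht (ξ + t • η)
        nlinarith)
    · rw [hzero]
      ring
  clear hφ hdiff hjS' hjP hjS hμ hmin
  have hSx := hsymm x hx
  have hTx := hT x hx
  have hEx := heq x hx
  generalize fderiv ℝ (fderiv ℝ (fderiv ℝ P)) x = Q at *
  generalize fderiv ℝ (fderiv ℝ P) x = T at *
  generalize fderiv ℝ P x = S at *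
  refine trace_le_of_jets e hξ hSx hTx hT' hQ hF hEx (fun u => ?_)
    (fun u => ?_) hzero (fun b η => ?_) (fun b η => ?_)
  · have h := (hE u).1
    simp only [map_zero, inner_zero_left, inner_zero_right, add_zero, zero_add, sub_zero,
      inner_add_left] at h
    rw [real_inner_comm (P x) (S u), hSx (S u)] at h
    linear_combination h
  · have h := (hE u).2
    simp only [map_zero, inner_zero_left, inner_zero_right, add_zero, zero_add, sub_zero, mul_zero,
      smul_zero, inner_add_left, real_inner_smul_left] at h
    rw [real_inner_comm (P x) (S u), real_inner_comm (P x) (T u u), hSx (T u u), hT' u (S u)] at h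
    linear_combination h
  · have h := (hφ' b η).1
    simp only [inner_zero_left, add_zero, zero_sub, inner_add_left] at h
    rw [hSx η, real_inner_comm ξ η] at h
    linear_combination h
  · have h := (hφ' b η).2
    simp only [map_zero, inner_zero_left, inner_zero_right, add_zero, zero_add, zero_sub, mul_zero,
      inner_add_left, real_inner_smul_left] at h
    rw [hT' b η, real_inner_comm ξ η] at h
    linear_combination h

end Touching

lemma gaussian_strict_subsolution {N M ρ α s p y b : ℝ} (hN : 0 ≤ N) (hM : 0 ≤ M) (hρ : 0 < ρ)
    (hα : α = 2 * (1 + M ^ 2) * (N + 2 * M * ρ + 1) / ρ ^ 2) (hs : ρ ^ 2 / 4 ≤ s)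
    (hp0 : 0 ≤ p) (hp : p ≤ M ^ 2) (hy : y ^ 2 ≤ s * p) (hb : -(2 * M * ρ) ≤ b) :
    -2 * α * b < -2 * α * N + 4 * α ^ 2 * s - (-2 * α * p + 4 * α ^ 2 * y ^ 2) / (1 + p) := by
  have hα0 : 0 < α := by rw [hα]; positivity
  have hw : 0 < 1 + p := by positivity
  have hQ : 0 < N + 2 * M * ρ + 1 := by positivity
  have h1 : (1 + p) * (N + 2 * M * ρ + 1) ≤ 2 * α * s := by
    calc _ ≤ (1 + M ^ 2) * (N + 2 * M * ρ + 1) := by gcongr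
      _ = 2 * α * (ρ ^ 2 / 4) := by rw [hα]; field_simp; ring
      _ ≤ _ := by gcongr
  have h2 : (-2 * α * p + 4 * α ^ 2 * y ^ 2) / (1 + p)
      < 2 * α * b - 2 * α * N + 4 * α ^ 2 * s := by
    rw [div_lt_iff₀ hw]
    have h3 := mul_le_mul_of_nonneg_left hy (by positivity : 0 ≤ 4 * α ^ 2)
    have h4 := mul_le_mul_of_nonneg_left h1 (by positivity : 0 ≤ 2 * α)
    have h5 := mul_le_mul_of_nonneg_left hb (by positivity : 0 ≤ 2 * α * (1 + p))
    have h6 : 0 < 2 * α * (1 + p) := by positivity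
    have h7 : 0 ≤ 2 * α * p := by positivity
    nlinarith
  linarith

section MinimumPrinciple

variable {E ι : Type*} [NormedAddCommGroup E] [InnerProductSpace ℝ E] [Fintype ι]
  (e : OrthonormalBasis ι ℝ E)

lemma HasJet.gaussian (α ε : ℝ) (c x b : E) :
    HasJet (fun t : ℝ => ε * Real.exp (-α * ⟪x + t • b - c, x + t • b - c⟫))
      (ε * Real.exp (-α * ⟪x - c, x - c⟫))
      ⟪(ε * Real.exp (-α * ⟪x - c, x - c⟫) * (-2 * α)) • (x - c), b⟫
      ⟪((ε * Real.exp (-α * ⟪x - c, x - c⟫) * (-2 * α)) • ContinuousLinearMap.id ℝ E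
        + (ε * Real.exp (-α * ⟪x - c, x - c⟫) * (4 * α ^ 2)) •
          (innerSL ℝ (x - c)).smulRight (x - c)) b, b⟫ := by
  have h := (HasJet.affine x b).sub (HasJet.const c)
  convert! (HasJet.const ε).mul ((HasJet.const (-α)).mul (h.inner h)).exp using 1
  · simp only [real_inner_smul_left, sub_zero, real_inner_comm b (x - c)]
    ring
  · generalize x - c = y
    simp [real_inner_smul_left, inner_add_left, real_inner_comm b y]
    ring

/-- `u` is a viscosity supersolution on `K` of the linear elliptic equation with second order
coefficients `1 - P ⊗ P / (1 + |P|²)` and drift `-β`. -/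
def IsViscositySupersolution (u : E → ℝ) (P β : E → E) (K : Set E) : Prop :=
  ∀ x ∈ K, ∀ (ψ : E → ℝ) (g : E) (H : E →L[ℝ] E),
    (∀ b, HasJet (fun t : ℝ => ψ (x + t • b)) (ψ x) ⟪g, b⟫ ⟪H b, b⟫) →
    (∀ᶠ y in 𝓝 x, u x - ψ x ≤ u y - ψ y) →
    ∑ k, ⟪H (e k), e k⟫ - ⟪H (P x), P x⟫ / (1 + ⟪P x, P x⟫) ≤ ⟪β x, g⟫

variable {u : E → ℝ} {P β : E → E} {K : Set E}

/-- Hopf's argument: a supersolution cannot attain its minimum at a single point of a closed ball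
on the boundary of that ball. -/
lemma IsViscositySupersolution.hopf [FiniteDimensional ℝ E]
    (hvisc : IsViscositySupersolution e u P β K) (hK : IsOpen K) (hu : ContinuousOn u K)
    (hP : ContinuousOn P K) (hβ : ContinuousOn β K) {c q : E} (hcq : q ≠ c) (hq : q ∈ K)
    (hmin : ∀ x ∈ K, u q ≤ u x) (hball : ∀ x ∈ K, dist x c ≤ dist q c → u x = u q → x = q) :
    False := by
  have hKq : K ∈ 𝓝 q := hK.mem_nhds hq
  set ρ := dist q c with hρ_def
  have hρ : 0 < ρ := dist_pos.2 hcq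
  obtain ⟨M, hM, hMP, hMβ⟩ : ∃ M : ℝ, 0 ≤ M ∧ ‖P q‖ < M ∧ ‖β q‖ < M :=
    ⟨max ‖P q‖ ‖β q‖ + 1, by positivity, lt_of_le_of_lt (le_max_left _ _) (lt_add_one _),
      lt_of_le_of_lt (le_max_right _ _) (lt_add_one _)⟩
  obtain ⟨r, hr, hrK⟩ := Metric.nhds_basis_closedBall.eventually_iff.1
    ((hK.eventually_mem hq).and (((hP.continuousAt hKq).norm.eventually_lt_const hMP).and
      ((hβ.continuousAt hKq).norm.eventually_lt_const hMβ)))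
  obtain ⟨r', hr', hr'r, hr'ρ⟩ : ∃ r' : ℝ, 0 < r' ∧ r' ≤ r ∧ r' ≤ ρ / 2 :=
    ⟨min r (ρ / 2), by positivity, min_le_left _ _, min_le_right _ _⟩
  replace hrK (x : E) (hx : x ∈ Metric.closedBall q r') :=
    hrK (Metric.closedBall_subset_closedBall hr'r hx)
  set α : ℝ := 2 * (1 + M ^ 2) * (Fintype.card ι + 2 * M * ρ + 1) / ρ ^ 2 with hα_def
  have hα : 0 < α := by positivity
  let G : E → ℝ := fun x => Real.exp (-α * ⟪x - c, x - c⟫)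
  have hG (x : E) : G x = Real.exp (-α * dist x c ^ 2) := by
    simp only [G, real_inner_self_eq_norm_sq, dist_eq_norm]
  have hGc : Continuous G := by fun_prop
  have huc : ContinuousOn u (Metric.closedBall q r') := hu.mono fun x hx => (hrK x hx).1
  obtain ⟨m, hm, hmA⟩ := ((isCompact_sphere q r').inter_right
    (Metric.isClosed_closedBall (x := c) (ε := ρ))).exists_forall_le' (a := u q)
    (huc.mono fun x hx => Metric.sphere_subset_closedBall hx.1) (by
      rintro x ⟨hxs, hxc⟩
      have hxK := (hrK x (Metric.sphere_subset_closedBall hxs)).1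
      refine (hmin x hxK).lt_of_ne fun h => ?_
      rw [hball x hxK hxc h.symm] at hxs
      simp at hxs
      exact hr'.ne hxs)
  set ε := m - u q with hε_def
  have hε : 0 < ε := sub_pos.2 hm
  obtain ⟨x, hx, hxmin⟩ := (isCompact_closedBall q r').exists_isMinOn
    (Metric.nonempty_closedBall.2 hr'.le) (huc.sub (hGc.const_smul ε).continuousOn)
  simp only [isMinOn_iff, Pi.sub_apply, Pi.smul_apply, smul_eq_mul] at hxmin
  have hxball : x ∈ Metric.ball q r' := by
    rw [← Metric.ball_union_sphere] at hx
    refine hx.resolve_right fun hxs => ?_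
    have hxq := hxmin q (Metric.mem_closedBall_self hr'.le)
    have hGq : 0 < G q := Real.exp_pos _
    by_cases hxc : dist x c ≤ ρ
    · have h1 := hmA x ⟨hxs, hxc⟩
      have h2 : G x ≤ 1 := by
        rw [hG, Real.exp_le_one_iff]
        have := sq_nonneg (dist x c)
        nlinarith
      nlinarith
    · have h1 := hmin x (hrK x (Metric.sphere_subset_closedBall hxs)).1
      have h2 : G x < G q := by
        rw [hG, hG, Real.exp_lt_exp]
        have : ρ ^ 2 < dist x c ^ 2 := by
          rw [not_le] at hxc
          gcongr
        nlinarith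
      nlinarith
  obtain ⟨hxK, hPx, hβx⟩ := hrK x hx
  have hv := hvisc x hxK (fun y => ε * G y) _ _ (HasJet.gaussian α ε c x) (by
    filter_upwards [Metric.isOpen_ball.mem_nhds hxball] with y hy
    exact hxmin y (Metric.ball_subset_closedBall hy))
  have hGx : 0 < G x := Real.exp_pos _
  have hGx' : Real.exp (-α * ⟪x - c, x - c⟫) = G x := rfl
  have hdq : dist x q ≤ ρ / 2 := (Metric.mem_closedBall.1 hx).trans hr'ρ
  have hY1 : ρ / 2 ≤ ‖x - c‖ := by
    have := dist_triangle q x c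
    rw [dist_comm q x] at this
    rw [← dist_eq_norm]
    linarith
  have hY2 : ‖x - c‖ ≤ 2 * ρ := by
    have := dist_triangle x q c
    rw [← dist_eq_norm]
    linarith
  have hs := gaussian_strict_subsolution (N := Fintype.card ι) (s := ⟪x - c, x - c⟫)
    (p := ⟪P x, P x⟫) (y := ⟪x - c, P x⟫) (b := ⟪β x, x - c⟫) (by positivity) hM hρ hα_def
    (by rw [real_inner_self_eq_norm_sq]; nlinarith) real_inner_self_nonneg
    (by rw [real_inner_self_eq_norm_sq]; gcongr)
    (by simpa [sq] using real_inner_mul_inner_self_le (x - c) (P x))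
    (neg_le_of_abs_le ((abs_real_inner_le_norm _ _).trans (by nlinarith [norm_nonneg (x - c)])))
  have hsum : ∑ k, ⟪x - c, e k⟫ * ⟪x - c, e k⟫ = ⟪x - c, x - c⟫ := by
    simpa [real_inner_comm] using e.sum_inner_mul_inner (x - c) (x - c)
  simp only [hGx', add_apply, smul_apply, ContinuousLinearMap.id_apply,
    ContinuousLinearMap.smulRight_apply, innerSL_apply_apply, inner_add_left,
    real_inner_smul_left, real_inner_smul_right, Finset.sum_add_distrib, ← Finset.mul_sum, hsum,
    e.inner_eq_one, Finset.sum_const, Finset.card_univ, nsmul_eq_mul, mul_one] at hv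
  have := mul_lt_mul_of_pos_left hs (mul_pos hε hGx)
  refine absurd hv (not_le.2 ?_)
  convert this using 1 <;> ring

/-- The strong minimum principle for viscosity supersolutions. -/
lemma IsViscositySupersolution.eq_of_isMinOn [FiniteDimensional ℝ E]
    (hvisc : IsViscositySupersolution e u P β K) (hK : IsOpen K) (hKc : IsPreconnected K)
    (hu : ContinuousOn u K) (hP : ContinuousOn P K) (hβ : ContinuousOn β K) {p : E} (hp : p ∈ K)
    (hmin : ∀ x ∈ K, u p ≤ u x) {x : E} (hx : x ∈ K) : u x = u p := by
  by_contra hxp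
  -- The set where `u` is not minimal is open; its closure contains a minimum point `z` of `u`.
  have hV : IsOpen (K ∩ u ⁻¹' {u p}ᶜ) := hu.isOpen_inter_preimage hK isOpen_compl_singleton
  obtain ⟨z, hzK, hzV, hzp⟩ : ∃ z ∈ K, z ∈ closure (K ∩ u ⁻¹' {u p}ᶜ) ∧ u z = u p := by
    by_contra! h
    have hsub := hKc.subset_of_closure_inter_subset hV ⟨x, hx, hx, hxp⟩ fun z hz =>
      ⟨hz.2, h z hz.2 hz.1⟩
    exact (hsub hp).2 rfl
  obtain ⟨δ, hδ, hδK⟩ := Metric.nhds_basis_closedBall.mem_iff.1 (hK.mem_nhds hzK)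
  obtain ⟨y, ⟨hyK, hyp⟩, hyz⟩ := Metric.mem_closure_iff.1 hzV (δ / 2) (by positivity)
  have hZ : IsCompact (Metric.closedBall z δ ∩ u ⁻¹' {u p}) :=
    (isCompact_closedBall z δ).of_isClosed_subset
      ((hu.mono hδK).preimage_isClosed_of_isClosed Metric.isClosed_closedBall isClosed_singleton)
      Set.inter_subset_left
  obtain ⟨q, ⟨hqz, hqp⟩, hqmin⟩ := hZ.exists_isMinOn ⟨z, Metric.mem_closedBall_self hδ.le, hzp⟩
    (continuous_id.dist (continuous_const (y := y))).continuousOn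
  simp only [isMinOn_iff, id] at hqmin
  have hqy : q ≠ y := by
    rintro rfl
    exact hyp hqp
  have hmid : dist q (midpoint ℝ y q) = dist q y / 2 := by
    rw [dist_comm, dist_midpoint_right, dist_comm]
    norm_num
    ring
  refine hvisc.hopf e hK hu hP hβ (c := midpoint ℝ y q) (q := q) ?_ (hδK hqz)
    (fun x hx => hqp ▸ hmin x hx) fun w hw hwc hwq => ?_
  · rw [← dist_pos, hmid]
    exact half_pos (dist_pos.2 hqy)
  · rw [hmid] at hwc
    have hmid' : dist (midpoint ℝ y q) y = dist q y / 2 := by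
      rw [dist_midpoint_left, dist_comm]
      norm_num
      ring
    have hwy : dist w y ≤ dist q y := by
      linarith [dist_triangle w (midpoint ℝ y q) y]
    have hqyz := hqmin z ⟨Metric.mem_closedBall_self hδ.le, hzp⟩
    have hwz : w ∈ Metric.closedBall z δ := by
      rw [Metric.mem_closedBall]
      linarith [dist_triangle w y z, dist_comm y z]
    have hqw := hqmin w ⟨hwz, hwq.trans hqp⟩
    have hpar := parallelogram_law_with_norm ℝ (w - midpoint ℝ y q) (midpoint ℝ y q - y)
    rw [sub_add_sub_cancel, midpoint_sub_left, ← right_sub_midpoint, sub_sub_sub_cancel_right,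
      ← dist_eq_norm, ← dist_eq_norm, ← dist_eq_norm, ← dist_eq_norm, hmid] at hpar
    have h0 : dist w q * dist w q ≤ 0 := by
      have h1 : dist w (midpoint ℝ y q) * dist w (midpoint ℝ y q)
          ≤ dist q y / 2 * (dist q y / 2) := by gcongr
      have h2 : dist q y * dist q y ≤ dist w y * dist w y := by gcongr
      linarith
    exact dist_eq_zero.1 (mul_self_eq_zero.1 (h0.antisymm (mul_self_nonneg _)))

end MinimumPrinciple

section Graph

variable {n : ℕ} {f : EuclideanSpace ℝ (Fin n) → ℝ} {Ω : Set (EuclideanSpace ℝ (Fin n))}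

lemma inner_gradient (x u : EuclideanSpace ℝ (Fin n)) : ⟪gradient f x, u⟫ = fderiv ℝ f x u :=
  InnerProductSpace.toDual_symm_apply

lemma contDiffOn_gradient (hΩ : IsOpen Ω) (hf : ContDiffOn ℝ (⊤ : ℕ∞) f Ω) :
    ContDiffOn ℝ 3 (gradient f) Ω := by
  rw [contDiffOn_euclidean]
  intro i
  have h : ContDiffOn ℝ 3 (fun x => fderiv ℝ f x (EuclideanSpace.single i 1)) Ω :=
    (hf.fderiv_of_isOpen hΩ (by norm_cast)).clm_apply contDiffOn_const
  refine h.congr fun x _ => ?_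
  rw [← inner_gradient, EuclideanSpace.inner_single_right]
  simp

lemma inner_hess_comm (hΩ : IsOpen Ω) (hf : ContDiffOn ℝ (⊤ : ℕ∞) f Ω)
    {x : EuclideanSpace ℝ (Fin n)} (hx : x ∈ Ω) (u v : EuclideanSpace ℝ (Fin n)) :
    ⟪fderiv ℝ (gradient f) x u, v⟫ = ⟪fderiv ℝ (gradient f) x v, u⟫ := by
  have hfx : ContDiffAt ℝ 2 f x := (hf.contDiffAt (hΩ.mem_nhds hx)).of_le (by norm_cast)
  have hP : HasFDerivAt (gradient f) (fderiv ℝ (gradient f) x) x :=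
    (((contDiffOn_gradient hΩ hf).contDiffAt (hΩ.mem_nhds hx)).differentiableAt
      (by norm_num)).hasFDerivAt
  have hD : HasFDerivAt (fderiv ℝ f) (fderiv ℝ (fderiv ℝ f) x) x :=
    ((hfx.fderiv_right (m := 1) (by norm_num)).differentiableAt (by norm_num)).hasFDerivAt
  have h (u v : EuclideanSpace ℝ (Fin n)) :
      ⟪fderiv ℝ (gradient f) x u, v⟫ = fderiv ℝ (fderiv ℝ f) x u v := by
    have h1 := hP.inner ℝ (hasFDerivAt_const v x)
    simp only [inner_gradient] at h1
    simpa using congrArg (· u) (h1.unique (hD.clm_apply (hasFDerivAt_const v x)))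
  rw [h, h]
  exact hfx.isSymmSndFDerivAt (by simp) u v

/-- The normal curvature of the graph of `f` over `x` in the direction `ξ`. -/
noncomputable def normalCurvature (f : EuclideanSpace ℝ (Fin n) → ℝ)
    (x ξ : EuclideanSpace ℝ (Fin n)) : ℝ :=
  ⟪hess f x ξ, ξ⟫ / (Real.sqrt (1 + ‖gradient f x‖ ^ 2) * (‖ξ‖ ^ 2 + ⟪gradient f x, ξ⟫ ^ 2))

lemma normalCurvature_smul (x ξ : EuclideanSpace ℝ (Fin n)) {c : ℝ} (hc : c ≠ 0) :
    normalCurvature f x (c • ξ) = normalCurvature f x ξ := by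
  have h1 : ⟪hess f x (c • ξ), c • ξ⟫ = c ^ 2 * ⟪hess f x ξ, ξ⟫ := by
    simp only [hess, map_smul, real_inner_smul_left, real_inner_smul_right]
    ring
  have h2 : ‖c • ξ‖ ^ 2 + ⟪gradient f x, c • ξ⟫ ^ 2
      = c ^ 2 * (‖ξ‖ ^ 2 + ⟪gradient f x, ξ⟫ ^ 2) := by
    rw [norm_smul, mul_pow, Real.norm_eq_abs, sq_abs, real_inner_smul_right]
    ring
  rw [normalCurvature, h1, h2, mul_left_comm, mul_div_mul_left _ _ (pow_ne_zero 2 hc)]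
  rfl

lemma graphKappa1_eq (x : EuclideanSpace ℝ (Fin n)) : graphKappa1 f x = sInf
    ((fun ξ : Metric.sphere (0 : EuclideanSpace ℝ (Fin n)) 1 => normalCurvature f x ξ) ''
      Set.univ) := by
  rw [graphKappa1]
  congr 1
  ext r
  constructor
  · rintro ⟨ξ, hξ, rfl⟩
    refine ⟨⟨‖ξ‖⁻¹ • ξ, ?_⟩, trivial, normalCurvature_smul x ξ (by simpa using hξ)⟩
    simp [norm_smul, hξ]
  · rintro ⟨ξ, -, rfl⟩
    exact ⟨ξ, ne_zero_of_mem_unit_sphere ξ, rfl⟩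

lemma normalCurvature_den_pos (x : EuclideanSpace ℝ (Fin n)) {ξ : EuclideanSpace ℝ (Fin n)}
    (hξ : ξ ≠ 0) :
    0 < Real.sqrt (1 + ‖gradient f x‖ ^ 2) * (‖ξ‖ ^ 2 + ⟪gradient f x, ξ⟫ ^ 2) := by
  have := norm_pos_iff.2 hξ
  positivity

lemma continuousOn_hess (hΩ : IsOpen Ω) (hf : ContDiffOn ℝ (⊤ : ℕ∞) f Ω) :
    ContinuousOn (fderiv ℝ (gradient f)) Ω :=
  (contDiffOn_gradient hΩ hf).continuousOn_fderiv_of_isOpen hΩ (by norm_num)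

lemma continuous_normalCurvature (hΩ : IsOpen Ω) (hf : ContDiffOn ℝ (⊤ : ℕ∞) f Ω) :
    Continuous fun z : Ω × Metric.sphere (0 : EuclideanSpace ℝ (Fin n)) 1 =>
      normalCurvature f z.1 z.2 := by
  have hP : Continuous fun z : Ω × Metric.sphere (0 : EuclideanSpace ℝ (Fin n)) 1 =>
      gradient f z.1 :=
    (contDiffOn_gradient hΩ hf).continuousOn.domRestrict.comp continuous_fst
  have hS : Continuous fun z : Ω × Metric.sphere (0 : EuclideanSpace ℝ (Fin n)) 1 =>
      fderiv ℝ (gradient f) z.1 :=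
    (continuousOn_hess hΩ hf).domRestrict.comp continuous_fst
  unfold normalCurvature hess
  refine Continuous.div (by fun_prop) (by fun_prop) fun z =>
    (normalCurvature_den_pos _ (ne_zero_of_mem_unit_sphere z.2)).ne'

lemma continuousOn_graphKappa1 (hΩ : IsOpen Ω) (hf : ContDiffOn ℝ (⊤ : ℕ∞) f Ω) :
    ContinuousOn (graphKappa1 f) Ω := by
  rw [continuousOn_iff_continuous_domRestrict]
  have h := isCompact_univ.continuous_sInf (f := fun (x : Ω)
    (ξ : Metric.sphere (0 : EuclideanSpace ℝ (Fin n)) 1) => normalCurvature f x ξ)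
    (continuous_normalCurvature hΩ hf)
  exact h.congr fun x => (graphKappa1_eq x.1).symm

lemma continuous_normalCurvature_right (x : EuclideanSpace ℝ (Fin n)) :
    Continuous fun ξ : Metric.sphere (0 : EuclideanSpace ℝ (Fin n)) 1 =>
      normalCurvature f x ξ := by
  unfold normalCurvature hess
  exact Continuous.div (by fun_prop) (by fun_prop) fun ξ =>
    (normalCurvature_den_pos _ (ne_zero_of_mem_unit_sphere ξ)).ne'

lemma graphKappa1_le (x : EuclideanSpace ℝ (Fin n)) {ξ : EuclideanSpace ℝ (Fin n)} (hξ : ξ ≠ 0) :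
    graphKappa1 f x ≤ normalCurvature f x ξ := by
  rw [← normalCurvature_smul x ξ (inv_ne_zero (norm_ne_zero_iff.2 hξ)), graphKappa1_eq]
  exact csInf_le (isCompact_univ.image (continuous_normalCurvature_right x)).bddBelow
    ⟨⟨‖ξ‖⁻¹ • ξ, by simp [norm_smul, hξ]⟩, trivial, rfl⟩

lemma exists_graphKappa1_eq [Nontrivial (EuclideanSpace ℝ (Fin n))]
    (x : EuclideanSpace ℝ (Fin n)) : ∃ ξ ≠ 0, normalCurvature f x ξ = graphKappa1 f x := by
  have : Nonempty (Metric.sphere (0 : EuclideanSpace ℝ (Fin n)) 1) :=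
    (NormedSpace.sphere_nonempty.2 zero_le_one).to_subtype
  obtain ⟨ξ, -, hξ⟩ := (isCompact_univ.image (continuous_normalCurvature_right (f := f) x)).sInf_mem
    (Set.univ_nonempty.image _)
  exact ⟨ξ, ne_zero_of_mem_unit_sphere ξ, by rw [graphKappa1_eq]; exact hξ⟩

variable {v' : EuclideanSpace ℝ (Fin n)} {vn : ℝ} {x : EuclideanSpace ℝ (Fin n)}

lemma TranslatorEqAt.graphH_mul (h : TranslatorEqAt f v' vn x) :
    graphH f x * Real.sqrt (1 + ‖gradient f x‖ ^ 2) = vn - ⟪v', gradient f x⟫ := by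
  have hw : 0 < 1 + ‖gradient f x‖ ^ 2 := by positivity
  have hs : 0 < Real.sqrt (1 + ‖gradient f x‖ ^ 2) := Real.sqrt_pos.2 hw
  rw [graphH, h]
  have := Real.sq_sqrt hw.le
  generalize Real.sqrt (1 + ‖gradient f x‖ ^ 2) = s at *
  rw [← this]
  field_simp

lemma TranslatorEqAt.trace_eq (h : TranslatorEqAt f v' vn x) :
    (1 + ⟪gradient f x, gradient f x⟫) * (∑ k, ⟪fderiv ℝ (gradient f) x
      (EuclideanSpace.basisFun (Fin n) ℝ k), EuclideanSpace.basisFun (Fin n) ℝ k⟫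
        + ⟪v', gradient f x⟫ - vn) = ⟪fderiv ℝ (gradient f) x (gradient f x), gradient f x⟫ := by
  simp only [TranslatorEqAt, lap, hess] at h
  rw [real_inner_self_eq_norm_sq, real_inner_comm (gradient f x) (fderiv ℝ _ _ _)]
  simp only [EuclideanSpace.basisFun_apply]
  linear_combination h

lemma TranslatorEqAt.normalCurvature_div (h : TranslatorEqAt f v' vn x) (hpos : 0 < graphH f x)
    {ξ : EuclideanSpace ℝ (Fin n)} (hξ : ξ ≠ 0) :
    normalCurvature f x ξ / graphH f x * (vn - ⟪v', gradient f x⟫)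
      * (⟪ξ, ξ⟫ + ⟪gradient f x, ξ⟫ ^ 2) = ⟪fderiv ℝ (gradient f) x ξ, ξ⟫ := by
  have hd := normalCurvature_den_pos (f := f) x hξ
  rw [← h.graphH_mul, normalCurvature, real_inner_self_eq_norm_sq]
  simp only [hess]
  field_simp

lemma TranslatorEqAt.speed_pos (h : TranslatorEqAt f v' vn x) (hpos : 0 < graphH f x) :
    0 < vn - ⟪v', gradient f x⟫ := by
  rw [← h.graphH_mul]
  positivity

/-- The drift of the linear elliptic equation satisfied by `κ₁ / h` on a translating graph. -/
noncomputable def translatorDrift (f : EuclideanSpace ℝ (Fin n) → ℝ)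
    (v' : EuclideanSpace ℝ (Fin n)) (vn : ℝ) (x : EuclideanSpace ℝ (Fin n)) :
    EuclideanSpace ℝ (Fin n) :=
  (2 / (1 + ⟪gradient f x, gradient f x⟫)) • fderiv ℝ (gradient f) x (gradient f x)
    - (2 * ⟪fderiv ℝ (gradient f) x (gradient f x), gradient f x⟫
      / (1 + ⟪gradient f x, gradient f x⟫) ^ 2) • gradient f x - v'
    + (2 / (vn - ⟪v', gradient f x⟫)) • (fderiv ℝ (gradient f) x v'
      - (⟪fderiv ℝ (gradient f) x v', gradient f x⟫
        / (1 + ⟪gradient f x, gradient f x⟫)) • gradient f x)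

lemma continuousOn_translatorDrift (hΩ : IsOpen Ω) (hf : ContDiffOn ℝ (⊤ : ℕ∞) f Ω)
    {K : Set (EuclideanSpace ℝ (Fin n))} (hKΩ : K ⊆ Ω)
    (hK : ∀ x ∈ K, 0 < vn - ⟪v', gradient f x⟫) : ContinuousOn (translatorDrift f v' vn) K := by
  have hP : ContinuousOn (gradient f) K := (contDiffOn_gradient hΩ hf).continuousOn.mono hKΩ
  have hS : ContinuousOn (fderiv ℝ (gradient f)) K := (continuousOn_hess hΩ hf).mono hKΩ
  have hw (x : EuclideanSpace ℝ (Fin n)) : 1 + ⟪gradient f x, gradient f x⟫ ≠ 0 := by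
    have := real_inner_self_nonneg (x := gradient f x)
    positivity
  have hF : ∀ x ∈ K, vn - ⟪v', gradient f x⟫ ≠ 0 := fun x hx => (hK x hx).ne'
  unfold translatorDrift
  fun_prop (disch := simp_all)

lemma continuousOn_graphH (hΩ : IsOpen Ω) (hf : ContDiffOn ℝ (⊤ : ℕ∞) f Ω) :
    ContinuousOn (graphH f) Ω := by
  have hP : ContinuousOn (gradient f) Ω := (contDiffOn_gradient hΩ hf).continuousOn
  have hS : ContinuousOn (fderiv ℝ (gradient f)) Ω := continuousOn_hess hΩ hf
  unfold graphH lap hess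
  refine ContinuousOn.div (by fun_prop) (by fun_prop) fun x _ => ?_
  positivity

lemma isViscositySupersolution_kappa_div {K : Set (EuclideanSpace ℝ (Fin n))}
    [Nontrivial (EuclideanSpace ℝ (Fin n))] (hΩ : IsOpen Ω)
    (hK : IsOpen K) (hKΩ : K ⊆ Ω) (hf : ContDiffOn ℝ (⊤ : ℕ∞) f Ω)
    (ht : ∀ x ∈ Ω, TranslatorEqAt f v' vn x) (hpos : ∀ x ∈ K, 0 < graphH f x) :
    IsViscositySupersolution (EuclideanSpace.basisFun (Fin n) ℝ)
      (fun x => graphKappa1 f x / graphH f x) (gradient f)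
      (translatorDrift f v' vn) K := by
  intro x hx ψ g H hψ hmin
  have hFpos (y : EuclideanSpace ℝ (Fin n)) (hy : y ∈ K) : 0 < vn - ⟪v', gradient f y⟫ :=
    (ht y (hKΩ hy)).speed_pos (hpos y hy)
  obtain ⟨ξ, hξ, hξx⟩ := exists_graphKappa1_eq (f := f) x
  refine trace_le_of_touching _ hΩ (contDiffOn_gradient hΩ hf)
    (fun y hy => inner_hess_comm hΩ hf hy) (fun y hy => (ht y hy).trace_eq) (hKΩ hx) (hFpos x hx)
    (μ := fun y => ψ y + (graphKappa1 f x / graphH f x - ψ x)) (fun b => ?_) hξ ?_ ?_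
  · simpa using (hψ b).add (HasJet.const (graphKappa1 f x / graphH f x - ψ x))
  · filter_upwards [hmin, hK.mem_nhds hx] with y hy hyK η
    obtain rfl | hη := eq_or_ne η 0
    · simp
    have hF := hFpos y hyK
    rw [← (ht y (hKΩ hyK)).normalCurvature_div (hpos y hyK) hη]
    have h1 : graphKappa1 f y / graphH f y ≤ normalCurvature f y η / graphH f y :=
      div_le_div_of_nonneg_right (graphKappa1_le y hη) (hpos y hyK).le
    have h2 : 0 ≤ ⟪η, η⟫ + ⟪gradient f y, η⟫ ^ 2 := add_nonneg real_inner_self_nonneg (sq_nonneg _)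
    gcongr
    linarith
  · rw [← (ht x (hKΩ hx)).normalCurvature_div (hpos x hx) hξ, hξx]
    ring

end Graph

/-- corollary of the maximum principle for translators.
Let `f` be a smooth solution of the translator equation with velocity `(v', vn)` on an open
`Ω ⊆ ℝⁿ`, let `K` be a nonempty bounded open connected set with `K̄ ⊆ Ω`, and suppose the
scalar mean curvature `h(f,·)` of the graph is positive on `K̄`. Then the minimum of
`κ₁(f,·)/h(f,·)` over `K̄` is attained at a point of the frontier `∂K`; and if it is attained
at a point of `K`, then `κ₁(f,·)/h(f,·)` is constant on `K̄`. -/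
theorem subsequent_singularities_stmt7 {n : ℕ}
    (Ω K : Set (EuclideanSpace ℝ (Fin n))) (hΩ : IsOpen Ω)
    (hK : IsOpen K) (hKconn : IsConnected K) (hKbdd : Bornology.IsBounded K)
    (hKΩ : closure K ⊆ Ω)
    (v' : EuclideanSpace ℝ (Fin n)) (vn : ℝ)
    (f : EuclideanSpace ℝ (Fin n) → ℝ)
    (hf : ContDiffOn ℝ (⊤ : ℕ∞) f Ω)
    (ht : ∀ x ∈ Ω, TranslatorEqAt f v' vn x)
    (hpos : ∀ x ∈ closure K, 0 < graphH f x) :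
    (∃ p ∈ frontier K, ∀ x ∈ closure K,
        graphKappa1 f p / graphH f p ≤ graphKappa1 f x / graphH f x) ∧
    (∀ p ∈ K, (∀ x ∈ closure K,
        graphKappa1 f p / graphH f p ≤ graphKappa1 f x / graphH f x) →
      ∀ x ∈ closure K, graphKappa1 f x / graphH f x = graphKappa1 f p / graphH f p) := by
  have : Nontrivial (EuclideanSpace ℝ (Fin n)) := by
    by_contra h
    rw [not_nontrivial_iff_subsingleton] at h
    obtain ⟨x, hx⟩ := hKconn.nonempty
    have hx := hpos x (subset_closure hx)
    simp [graphH, lap, Subsingleton.elim (hess f x _) 0] at hx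
  have hcomp : IsCompact (closure K) := hKbdd.isCompact_closure
  have hu : ContinuousOn (fun x => graphKappa1 f x / graphH f x) (closure K) :=
    ((continuousOn_graphKappa1 hΩ hf).mono hKΩ).div ((continuousOn_graphH hΩ hf).mono hKΩ)
      fun x hx => (hpos x hx).ne'
  have hKΩ' : K ⊆ Ω := subset_closure.trans hKΩ
  have hposK : ∀ x ∈ K, 0 < graphH f x := fun x hx => hpos x (subset_closure hx)
  have hconst : ∀ p ∈ K, (∀ x ∈ closure K,
        graphKappa1 f p / graphH f p ≤ graphKappa1 f x / graphH f x) →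
      ∀ x ∈ closure K, graphKappa1 f x / graphH f x = graphKappa1 f p / graphH f p := by
    intro p hp hmin
    have hEq : Set.EqOn (fun x => graphKappa1 f x / graphH f x)
        (fun _ => graphKappa1 f p / graphH f p) K := fun x hx =>
      (isViscositySupersolution_kappa_div hΩ hK hKΩ' hf ht hposK).eq_of_isMinOn _ hK
        hKconn.isPreconnected (hu.mono subset_closure)
        ((contDiffOn_gradient hΩ hf).continuousOn.mono hKΩ')
        (continuousOn_translatorDrift hΩ hf hKΩ' fun y hy =>
          (ht y (hKΩ' hy)).speed_pos (hposK y hy)) hp (fun y hy => hmin y (subset_closure hy)) hx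
    exact hEq.of_subset_closure hu continuousOn_const subset_closure subset_rfl
  refine ⟨?_, hconst⟩
  obtain ⟨p, hp, hmin⟩ := hcomp.exists_isMinOn hKconn.nonempty.closure hu
  rw [isMinOn_iff] at hmin
  by_cases hpK : p ∈ K
  · obtain ⟨q, hq⟩ : (frontier K).Nonempty := by
      rw [nonempty_frontier_iff]
      refine ⟨hKconn.nonempty, fun h => ?_⟩
      rw [h] at hKbdd
      exact NormedSpace.unbounded_univ ℝ _ hKbdd
    refine ⟨q, hq, fun x hx => ?_⟩
    rw [hconst p hpK hmin q (frontier_subset_closure hq)]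
    exact hmin x hx
  · exact ⟨p, ⟨hp, by rwa [hK.interior_eq]⟩, hmin⟩
end

section
/- Let λ > 0, let W ⊆ ℝⁿ be open, and let f : W → ℝ be a smooth solution on W of the translator equation with velocity −λe_{n+1}, i.e., (1 + |∇f|²)·Δf − ⟨∇f, (D²f)∇f⟩ = −λ·(1 + |∇f|²) on W. Then for every nonempty compact set K ⊆ W, sup over x ∈ K of |∇f(x)| is at most sup over x in the topological frontier of K of |∇f(x)|. -/
open scoped RealInnerProductSpace

open Filter Topology

/-- The second derivative is nonpositive at a local maximum. -/
theorem IsLocalMax.deriv_deriv_nonpos {g : ℝ → ℝ} {a : ℝ} (h : IsLocalMax g a)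
    (hc : ContinuousAt g a) : deriv (deriv g) a ≤ 0 := by
  by_contra! hpos
  have hmin : IsLocalMin g a := isLocalMin_of_deriv_deriv_pos hpos h.deriv_eq_zero hc
  have hconst : g =ᶠ[𝓝 a] fun _ => g a := by
    filter_upwards [h, hmin] with t h₁ h₂ using le_antisymm h₁ h₂
  have hzero : deriv (deriv g) a = 0 := by
    rw [hconst.deriv.deriv_eq]
    simp
  exact hpos.ne' hzero

section LocalMaxNorm

variable {E F : Type*} [NormedAddCommGroup E] [NormedSpace ℝ E]
  [NormedAddCommGroup F] [InnerProductSpace ℝ F] {G : E → F} {x : E}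

/-- First-order condition at a local maximum of `‖G‖²`. -/
theorem IsLocalMax.inner_fderiv_eq_zero (h : IsLocalMax (fun y => ‖G y‖ ^ 2) x)
    (hG : DifferentiableAt ℝ G x) (ξ : E) : ⟪G x, fderiv ℝ G x ξ⟫ = 0 := by
  have h₁ := h.hasFDerivAt_eq_zero hG.hasFDerivAt.norm_sq
  have h₂ := congrArg (fun L => L ξ) h₁
  simpa using h₂

/-- Second-order condition at a local maximum of `‖G‖²`. -/
theorem IsLocalMax.inner_fderiv_fderiv_nonpos (h : IsLocalMax (fun y => ‖G y‖ ^ 2) x)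
    (hG : ContDiffAt ℝ 2 G x) (ξ : E) :
    ⟪fderiv ℝ G x ξ, fderiv ℝ G x ξ⟫ + ⟪G x, fderiv ℝ (fderiv ℝ G) x ξ ξ⟫ ≤ 0 := by
  set line : ℝ → E := fun t => x + t • ξ with hline
  have hline_deriv (t : ℝ) : HasDerivAt line ξ t := by
    simpa [hline] using ((hasDerivAt_id t).smul_const ξ).const_add x
  have hline_zero : line 0 = x := by simp [hline]
  have htendsto : Tendsto line (𝓝 0) (𝓝 x) := by
    simpa [hline_zero] using (hline_deriv 0).continuousAt.tendsto
  have hdiff : ∀ᶠ y in 𝓝 x, DifferentiableAt ℝ G y :=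
    (hG.eventually (by simp)).mono fun y hy => hy.differentiableAt (by simp)
  have hfirst : deriv (fun t => ‖G (line t)‖ ^ 2) =ᶠ[𝓝 0]
      fun t => 2 * ⟪G (line t), fderiv ℝ G (line t) ξ⟫ := by
    filter_upwards [htendsto.eventually hdiff] with t ht
    exact (ht.hasFDerivAt.comp_hasDerivAt t (hline_deriv t)).norm_sq.deriv
  have hG₁ : HasDerivAt (fun t => G (line t)) (fderiv ℝ G x ξ) 0 := by
    have := hG.differentiableAt (by simp)
    rw [← hline_zero] at this ⊢
    exact this.hasFDerivAt.comp_hasDerivAt 0 (hline_deriv 0)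
  have hG₂ : HasDerivAt (fun t => fderiv ℝ G (line t) ξ) (fderiv ℝ (fderiv ℝ G) x ξ ξ) 0 := by
    have := (hG.fderiv_right (m := 1) (by norm_num)).differentiableAt (by simp)
    rw [← hline_zero] at this ⊢
    simpa using (this.hasFDerivAt.comp_hasDerivAt 0 (hline_deriv 0)).clm_apply
      (hasDerivAt_const 0 ξ)
  have hsecond := ((hG₁.inner ℝ hG₂).const_mul 2).deriv
  have hmax : IsLocalMax (fun t => ‖G (line t)‖ ^ 2) 0 := by
    have := htendsto.eventually h
    simpa [IsLocalMax, IsMaxFilter, hline_zero] using this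
  have hle := hmax.deriv_deriv_nonpos (hG₁.norm_sq.continuousAt)
  rw [hfirst.deriv_eq, hsecond] at hle
  rw [hline_zero] at hle
  linarith

end LocalMaxNorm

/-- A negative semidefinite form has nonpositive trace against the matrix
`1 - p pᵀ / (1 + |p|²)`. -/
theorem OrthonormalBasis.one_add_norm_sq_mul_trace_le {ι E : Type*} [Fintype ι]
    [NormedAddCommGroup E] [InnerProductSpace ℝ E] (b : OrthonormalBasis ι ℝ E)
    (B : E →ₗ[ℝ] E →ₗ[ℝ] ℝ) (hB : ∀ ξ, B ξ ξ ≤ 0) (p : E) :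
    (1 + ‖p‖ ^ 2) * ∑ i, B (b i) (b i) ≤ B p p := by
  set s := 1 + ‖p‖ ^ 2 with hs
  have hs_pos : 0 < s := by positivity
  have hp : ∑ i, ⟪b i, p⟫ • b i = p := b.sum_repr' p
  have hl : ∑ i, ⟪b i, p⟫ * B (b i) p = B p p := by
    conv_rhs => enter [1, 2]; rw [← hp]
    simp
  have hr : ∑ i, ⟪b i, p⟫ * B p (b i) = B p p := by
    conv_rhs => enter [2]; rw [← hp]
    simp
  have hn : ∑ i, ⟪b i, p⟫ ^ 2 = ‖p‖ ^ 2 := by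
    simpa using b.sum_sq_norm_inner_right p
  have hsum : ∑ i, B (s • b i - ⟪b i, p⟫ • p) (s • b i - ⟪b i, p⟫ • p)
      = s ^ 2 * ∑ i, B (b i) (b i) - (2 * s - ‖p‖ ^ 2) * B p p := by
    calc _ = ∑ i, (s ^ 2 * B (b i) (b i) - s * (⟪b i, p⟫ * B (b i) p)
            - s * (⟪b i, p⟫ * B p (b i)) + ⟪b i, p⟫ ^ 2 * B p p) := by
          refine Finset.sum_congr rfl fun i _ => ?_
          simp only [map_sub, map_smul, LinearMap.sub_apply, LinearMap.smul_apply, smul_eq_mul]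
          ring
      _ = _ := by
          rw [Finset.sum_add_distrib, Finset.sum_sub_distrib, Finset.sum_sub_distrib,
            ← Finset.mul_sum, ← Finset.mul_sum, ← Finset.mul_sum, ← Finset.sum_mul, hl, hr, hn]
          ring
  have hle := hsum ▸ Finset.sum_nonpos fun i _ => hB (s • b i - ⟪b i, p⟫ • p)
  have hBp := hB p
  nlinarith

section Gradient

variable {n : ℕ} {f : EuclideanSpace ℝ (Fin n) → ℝ} {x : EuclideanSpace ℝ (Fin n)}

theorem ContDiffAt.gradient {k m : WithTop ℕ∞} (hf : ContDiffAt ℝ k f x) (hm : m + 1 ≤ k) :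
    ContDiffAt ℝ m (gradient f) x :=
  (InnerProductSpace.toDual ℝ (EuclideanSpace ℝ (Fin n))).symm.contDiff.contDiffAt.comp x
    (hf.fderiv_right hm)

/-- The derivative of the gradient is a symmetric operator. -/
theorem ContDiffAt.inner_fderiv_gradient_comm (hf : ContDiffAt ℝ 2 f x)
    (ξ η : EuclideanSpace ℝ (Fin n)) :
    ⟪fderiv ℝ (_root_.gradient f) x ξ, η⟫ = ⟪ξ, fderiv ℝ (_root_.gradient f) x η⟫ := by
  have key (ξ η : EuclideanSpace ℝ (Fin n)) :
      ⟪fderiv ℝ (_root_.gradient f) x ξ, η⟫ = fderiv ℝ (fderiv ℝ f) x ξ η := by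
    have hd : DifferentiableAt ℝ (fderiv ℝ f) x :=
      (hf.fderiv_right (m := 1) (by norm_num)).differentiableAt (by simp)
    have := ((InnerProductSpace.toDual ℝ
      (EuclideanSpace ℝ (Fin n))).symm.toContinuousLinearEquiv.hasFDerivAt.comp x
        hd.hasFDerivAt).fderiv
    have h : fderiv ℝ (_root_.gradient f) x = _ := this
    rw [h]
    simp
  rw [key, real_inner_comm, key]
  exact hf.isSymmSndFDerivAt (by simp) ξ η

/-- Full symmetry of the third derivative, expressed through the gradient. -/
theorem ContDiffAt.inner_gradient_fderiv_fderiv (hf : ContDiffAt ℝ 3 f x)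
    (p ξ : EuclideanSpace ℝ (Fin n)) :
    ⟪p, fderiv ℝ (fderiv ℝ (_root_.gradient f)) x ξ ξ⟫
      = ⟪fderiv ℝ (fderiv ℝ (_root_.gradient f)) x p ξ, ξ⟫ := by
  have hG : ContDiffAt ℝ 2 (_root_.gradient f) x := hf.gradient (by norm_num)
  have hH : HasFDerivAt (fderiv ℝ (_root_.gradient f)) _ x :=
    ((hG.fderiv_right (m := 1) (by norm_num)).differentiableAt (by simp)).hasFDerivAt
  have hsymm : (fun y => ⟪p, fderiv ℝ (_root_.gradient f) y ξ⟫) =ᶠ[𝓝 x]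
      fun y => ⟪fderiv ℝ (_root_.gradient f) y p, ξ⟫ := by
    filter_upwards [hf.eventually (by simp)] with y hy
    exact ((hy.of_le (by norm_num)).inner_fderiv_gradient_comm p ξ).symm
  have hl := ((hasFDerivAt_const p x).inner ℝ (hH.clm_apply (hasFDerivAt_const ξ x)))
  have hr := ((hH.clm_apply (hasFDerivAt_const p x)).inner ℝ (hasFDerivAt_const ξ x))
  have h := congrArg (fun L => L ξ) ((hl.congr_of_eventuallyEq hsymm.symm).unique hr)
  simp at h
  rw [h, hG.isSymmSndFDerivAt (by simp) p ξ]

end Gradient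

/-- The gradient norm of a solution of the translator equation with nonzero vertical velocity has
no local maximum: there, the linearized operator applied to `|∇f|² / 2` equals `|D²f|² > 0`. -/
theorem not_isLocalMax_norm_sq_gradient {n : ℕ} {f : EuclideanSpace ℝ (Fin n) → ℝ}
    {x : EuclideanSpace ℝ (Fin n)} {lam : ℝ} (hlam : lam ≠ 0) (hf : ContDiffAt ℝ 3 f x)
    (ht : ∀ᶠ y in 𝓝 x,
      (1 + ‖gradient f y‖ ^ 2) * lap f y - ⟪gradient f y, hess f y (gradient f y)⟫
        = -lam * (1 + ‖gradient f y‖ ^ 2)) :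
    ¬ IsLocalMax (fun y => ‖gradient f y‖ ^ 2) x := by
  intro hmax
  have hG : ContDiffAt ℝ 2 (gradient f) x := hf.gradient (by norm_num)
  have hdG : HasFDerivAt (gradient f) _ x := (hG.differentiableAt (by simp)).hasFDerivAt
  have hdH : HasFDerivAt (fderiv ℝ (gradient f)) _ x :=
    ((hG.fderiv_right (m := 1) (by norm_num)).differentiableAt (by simp)).hasFDerivAt
  have hcrit : fderiv ℝ (gradient f) x (gradient f x) = 0 := by
    refine ext_inner_right ℝ fun ξ => ?_
    rw [(hf.of_le (by norm_num)).inner_fderiv_gradient_comm, inner_zero_left]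
    exact hmax.inner_fderiv_eq_zero hdG.differentiableAt ξ
  have hneg := hmax.inner_fderiv_fderiv_nonpos hG
  have heq := ht.self_of_nhds
  simp only [hess, lap, ← EuclideanSpace.basisFun_apply] at ht heq
  set p := gradient f x with hp
  set H := fderiv ℝ (gradient f) x with hH
  set T := fderiv ℝ (fderiv ℝ (gradient f)) x with hT
  set e := EuclideanSpace.basisFun (Fin n) ℝ
  have hdlap := HasFDerivAt.fun_sum (u := Finset.univ) fun i _ =>
    (hdH.clm_apply (hasFDerivAt_const (e i) x)).inner ℝ (hasFDerivAt_const (e i) x)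
  have hdlhs := ((hdG.norm_sq.const_add 1).mul hdlap).sub
    (hdG.inner ℝ (hdH.clm_apply hdG))
  have hdrhs := (hdG.norm_sq.const_add 1).const_mul (-lam)
  have hdiff : (1 + ‖p‖ ^ 2) * ∑ i, ⟪T p (e i), e i⟫ = ⟪p, T p p⟫ := by
    have h := congrArg (fun L => L p)
      ((hdlhs.congr_of_eventuallyEq (EventuallyEq.symm ht)).unique hdrhs)
    simp [← hp, ← hH, hcrit] at h
    linarith
  have htrace := e.one_add_norm_sq_mul_trace_le
    (LinearMap.mk₂ ℝ (fun ξ η => ⟪H ξ, H η⟫ + ⟪p, T ξ η⟫)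
      (fun _ _ _ => by simp [inner_add_left, inner_add_right]; ring)
      (fun _ _ _ => by simp [inner_smul_left, inner_smul_right]; ring)
      (fun _ _ _ => by simp [inner_add_right]; ring)
      (fun _ _ _ => by simp [inner_smul_right]; ring)) hneg p
  have hthird (ξ : EuclideanSpace ℝ (Fin n)) : ⟪p, T ξ ξ⟫ = ⟪T p ξ, ξ⟫ :=
    hf.inner_gradient_fderiv_fderiv p ξ
  simp only [LinearMap.mk₂_apply, hcrit, inner_zero_left, zero_add, hthird,
    Finset.sum_add_distrib] at htrace
  have hnonneg : ∀ i ∈ Finset.univ, 0 ≤ ⟪H (e i), H (e i)⟫ := fun i _ => real_inner_self_nonneg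
  have hpos : 0 < 1 + ‖p‖ ^ 2 := by positivity
  have hsum : ∑ i, ⟪H (e i), H (e i)⟫ = 0 := by
    refine le_antisymm ?_ (Finset.sum_nonneg hnonneg)
    rw [mul_add, hdiff, hthird] at htrace
    exact nonpos_of_mul_nonpos_right (by linarith) hpos
  have hHe (i : Fin n) : H (e i) = 0 :=
    inner_self_eq_zero.mp ((Finset.sum_eq_zero_iff_of_nonneg hnonneg).mp hsum i (Finset.mem_univ i))
  simp [hcrit, hHe, hlam, hpos.ne'] at heq

/-- interior gradient bound for graphical translators with velocity `−λe_{n+1}`.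
If `f` is a smooth solution on an open `W ⊆ ℝⁿ` of
`(1 + |∇f|²)·Δf − ⟨∇f,(D²f)∇f⟩ = −λ·(1 + |∇f|²)` with `λ > 0`, then for every nonempty compact
`K ⊆ W`, the supremum of `|∇f|` over `K` is at most its supremum over the frontier of `K`. -/
theorem subsequent_singularities_stmt8 {n : ℕ}
    (lam : ℝ) (hlam : 0 < lam)
    (W : Set (EuclideanSpace ℝ (Fin n))) (hW : IsOpen W)
    (f : EuclideanSpace ℝ (Fin n) → ℝ)
    (hf : ContDiffOn ℝ (⊤ : ℕ∞) f W)
    (ht : ∀ x ∈ W,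
      (1 + ‖gradient f x‖ ^ 2) * lap f x - ⟪gradient f x, hess f x (gradient f x)⟫
        = -lam * (1 + ‖gradient f x‖ ^ 2))
    (K : Set (EuclideanSpace ℝ (Fin n))) (hKcpt : IsCompact K) (hKne : K.Nonempty)
    (hKW : K ⊆ W) :
    sSup ((fun x => ‖gradient f x‖) '' K) ≤ sSup ((fun x => ‖gradient f x‖) '' frontier K) := by
  have hsmooth (x) (hx : x ∈ W) : ContDiffAt ℝ 3 f x :=
    (hf.contDiffAt (hW.mem_nhds hx)).of_le (WithTop.coe_le_coe.2 (le_top : (3 : ℕ∞) ≤ ⊤))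
  have hcont : ContinuousOn (fun x => ‖gradient f x‖) K := fun x hx =>
    ((hsmooth x (hKW hx)).gradient (m := 2) (by norm_num)).continuousAt.norm.continuousWithinAt
  obtain ⟨x, hxK, hx⟩ := hKcpt.exists_isMaxOn hKne hcont
  have hfront : frontier K ⊆ K := hKcpt.isClosed.frontier_subset
  have hxfront : x ∈ frontier K := by
    rw [hKcpt.isClosed.frontier_eq]
    refine ⟨hxK, fun hint => ?_⟩
    refine not_isLocalMax_norm_sq_gradient hlam.ne' (hsmooth x (hKW hxK))
      (eventually_of_mem (hW.mem_nhds (hKW hxK)) ht) ?_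
    filter_upwards [mem_interior_iff_mem_nhds.mp hint] with y hy
    exact pow_le_pow_left₀ (norm_nonneg _) (hx hy) 2
  refine (csSup_le (hKne.image _) ?_).trans
    (le_csSup ((hKcpt.bddAbove_image hcont).mono (Set.image_mono hfront)) ⟨x, hxfront, rfl⟩)
  rintro _ ⟨y, hy, rfl⟩
  exact hx hy
end
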